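/- arXiv:2412.02762 — 3 statements merged into one kernel-verified Lean document; each statement's English description precedes it below -/
import Mathlib

section
/- Let 0<s<1, 0<β<1, and L>0 with 2s ≤ 1-β. Then there exists a 2L-periodic function u ∈ C^{2s/(1-β)}(ℝ) and a function f ∈ C^β(ℝ) such that (-Δ)^s u(x) = f(u(x)) for every x ∈ ℝ, and such that for every ε>0 and every ρ>0, u restricted to [-ρ,ρ] does not belong to C^{2s/(1-β)+ε}([-ρ,ρ]). -/
open MeasureTheory Filter Set

/-- The normalizing constant `c_s` of the fractional Laplacian. -/
noncomputable def fracLapCoef (s : ℝ) : ℝ :=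
  s * (4 : ℝ) ^ s * Real.Gamma (1 / 2 + s) / (Real.sqrt Real.pi * Real.Gamma (1 - s))

/-- `HasFracLapAt s u x L` means the principal value defining `(-Δ)^s u (x)`
exists and equals `L`. -/
def HasFracLapAt (s : ℝ) (u : ℝ → ℝ) (x L : ℝ) : Prop :=
  (∀ ε : ℝ, 0 < ε →
    MeasureTheory.IntegrableOn (fun y : ℝ => (u x - u y) / |x - y| ^ (1 + 2 * s))
      {y : ℝ | ε < |y - x|}) ∧
  Filter.Tendsto (fun ε : ℝ =>
      fracLapCoef s * ∫ y in {y : ℝ | ε < |y - x|}, (u x - u y) / |x - y| ^ (1 + 2 * s))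
    (nhdsWithin 0 (Set.Ioi 0)) (nhds L)

/-- `MemCalpha α Ω f` : `f ∈ C^α(Ω)`, i.e. `f` is continuously differentiable with bounded
derivatives up to order `⌊α⌋` on `Ω`, and its `⌊α⌋`-th derivative is Hölder continuous of
exponent `α - ⌊α⌋` on `Ω`. -/
def MemCalpha (α : ℝ) (Ω : Set ℝ) (f : ℝ → ℝ) : Prop :=
  ContDiffOn ℝ (⌊α⌋₊ : ℕ) f Ω ∧
  (∀ k : ℕ, k ≤ ⌊α⌋₊ → ∃ C : ℝ, ∀ x ∈ Ω, |iteratedDerivWithin k f Ω x| ≤ C) ∧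
  ∃ C : NNReal, HolderOnWith C (α - (⌊α⌋₊ : ℝ)).toNNReal (iteratedDerivWithin ⌊α⌋₊ f Ω) Ω


lemma aux_integrable_abs {f : ℝ → ℝ} (hf : IntegrableOn f (Ioi 0)) :
    Integrable (fun t : ℝ => f |t|) := by
  have h1 : IntegrableOn (fun t : ℝ => f |t|) (Ioi 0) :=
    hf.congr_fun (fun t ht => by simp only [abs_of_pos (mem_Ioi.1 ht)]) measurableSet_Ioi
  have h2 : IntegrableOn (fun t : ℝ => f |t|) (Iic 0) := by
    have := ((Measure.measurePreserving_neg (volume : Measure ℝ)).integrableOn_comp_preimage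
      (measurableEmbedding_neg) (f := fun t => f |t|) (s := Ici 0)).2
        (Iff.mpr integrableOn_Ici_iff_integrableOn_Ioi h1)
    simpa [Function.comp_def] using this
  rw [← integrableOn_univ, ← Iic_union_Ioi (a := (0:ℝ))]
  exact h2.union h1

lemma aux_near {p R : ℝ} (hp : -1 < p) (hR : 0 < R) :
    Integrable (fun t : ℝ => if |t| ≤ R then |t| ^ p else 0) ∧
    ∫ t : ℝ, (if |t| ≤ R then |t| ^ p else 0) = 2 / (p + 1) * R ^ (p + 1) := by
  have e : EqOn (fun r : ℝ => if r ≤ R then r ^ p else 0)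
      ((Ioc 0 R).indicator (fun r => r ^ p)) (Ioi 0) := by
    intro r hr
    have hr' : 0 < r := hr
    by_cases h : r ≤ R <;> simp [indicator, h, hr']
  have h0 : IntegrableOn (fun r : ℝ => r ^ p) (Ioc 0 R) :=
    (intervalIntegrable_iff_integrableOn_Ioc_of_le hR.le).1
      (intervalIntegral.intervalIntegrable_rpow' hp)
  have h1 : IntegrableOn (fun r : ℝ => if r ≤ R then r ^ p else 0) (Ioi 0) := by
    refine IntegrableOn.congr_fun ?_ e.symm measurableSet_Ioi
    exact ((integrable_indicator_iff measurableSet_Ioc).2 h0).integrableOn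
  refine ⟨aux_integrable_abs h1, ?_⟩
  rw [integral_comp_abs (f := fun r : ℝ => if r ≤ R then r ^ p else 0),
    setIntegral_congr_fun measurableSet_Ioi e, setIntegral_indicator measurableSet_Ioc]
  have : Ioi (0:ℝ) ∩ Ioc 0 R = Ioc 0 R := by
    ext x; simp
  rw [this, ← intervalIntegral.integral_of_le hR.le, integral_rpow (Or.inl hp),
    Real.zero_rpow (by linarith)]
  ring

lemma aux_far {q R : ℝ} (hq : q < -1) (hR : 0 < R) :
    Integrable (fun t : ℝ => if R < |t| then |t| ^ q else 0) ∧
    ∫ t : ℝ, (if R < |t| then |t| ^ q else 0) = 2 / (-(q + 1)) * R ^ (q + 1) := by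
  have e : EqOn (fun r : ℝ => if R < r then r ^ q else 0)
      ((Ioi R).indicator (fun r => r ^ q)) (Ioi 0) := by
    intro r hr
    by_cases h : R < r <;> simp [indicator, h]
  have h0 : IntegrableOn (fun r : ℝ => r ^ q) (Ioi R) := integrableOn_Ioi_rpow_of_lt hq hR
  have h1 : IntegrableOn (fun r : ℝ => if R < r then r ^ q else 0) (Ioi 0) := by
    refine IntegrableOn.congr_fun ?_ e.symm measurableSet_Ioi
    exact ((integrable_indicator_iff measurableSet_Ioi).2 h0).integrableOn
  refine ⟨aux_integrable_abs h1, ?_⟩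
  rw [integral_comp_abs (f := fun r : ℝ => if R < r then r ^ q else 0),
    setIntegral_congr_fun measurableSet_Ioi e, setIntegral_indicator measurableSet_Ioi]
  have : Ioi (0:ℝ) ∩ Ioi R = Ioi R := by
    ext x; simp; intro h; linarith
  rw [this, integral_Ioi_rpow_of_lt hq hR]
  rw [div_neg]; ring

/-- kernel difference -/
lemma aux_kernel {q a b d : ℝ} (hq1 : 1 ≤ q) (hq2 : q ≤ 2) (ha : 2 * d < a) (hd : 0 < d)
    (hab : |a - b| ≤ d) : |1 / a ^ q - 1 / b ^ q| ≤ 10 * d * a ^ (-q - 1) ∧ 1 / b ^ q ≤ 4 * a ^ (-q) := by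
  have ha0 : 0 < a := by linarith
  obtain ⟨h1, h2⟩ := abs_le.1 hab
  have hb0 : 0 < b := by linarith
  obtain ⟨r, rfl⟩ : ∃ r, b = a * r := ⟨b / a, by field_simp⟩
  have hr0 : 0 < r := by
    by_contra h; push Not at h; nlinarith
  have hr1 : 1 / 2 ≤ r := by
    by_contra h; push Not at h; nlinarith
  have hr2 : r ≤ 3 / 2 := by
    by_contra h; push Not at h; nlinarith
  have hrq : 1 / 4 ≤ r ^ q ∧ |r ^ q - 1| ≤ 5 / 2 * |r - 1| := by
    rcases le_total r 1 with h | h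
    · have e1 : r ^ (2:ℝ) ≤ r ^ q := Real.rpow_le_rpow_of_exponent_ge hr0 h hq2
      have e2 : r ^ q ≤ 1 := Real.rpow_le_one hr0.le h (by linarith)
      rw [Real.rpow_two] at e1
      refine ⟨by nlinarith, ?_⟩
      rw [abs_of_nonpos (by linarith), abs_of_nonpos (by linarith)]
      nlinarith
    · have e1 : r ^ q ≤ r ^ (2:ℝ) := Real.rpow_le_rpow_of_exponent_le h hq2
      have e2 : 1 ≤ r ^ q := Real.one_le_rpow h (by linarith)
      rw [Real.rpow_two] at e1
      refine ⟨by nlinarith, ?_⟩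
      rw [abs_of_nonneg (by linarith), abs_of_nonneg (by linarith)]
      nlinarith
  obtain ⟨k1, k2⟩ := hrq
  have hrqp : 0 < r ^ q := by linarith
  have haq : 0 < a ^ q := Real.rpow_pos_of_pos ha0 _
  have hd' : a * |r - 1| ≤ d := by
    rw [show a * |r - 1| = |a * (r - 1)| by rw [abs_mul, abs_of_pos ha0]]
    rw [abs_le]; constructor <;> linarith
  rw [Real.mul_rpow ha0.le hr0.le]
  constructor
  · have : 1 / a ^ q - 1 / (a ^ q * r ^ q) = (r ^ q - 1) / r ^ q * a ^ (-q) := by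
      rw [Real.rpow_neg ha0.le]; field_simp
    rw [this, abs_mul, abs_div, abs_of_pos hrqp, abs_of_pos (Real.rpow_pos_of_pos ha0 _)]
    have e3 : a ^ (-q) = a * a ^ (-q - 1) := by
      rw [Real.rpow_sub_one ha0.ne']; field_simp
    have e4 : |r ^ q - 1| / r ^ q ≤ 10 * |r - 1| := by
      rw [div_le_iff₀ hrqp]
      nlinarith [abs_nonneg (r - 1)]
    have hp : 0 < a ^ (-q - 1) := Real.rpow_pos_of_pos ha0 _
    calc |r ^ q - 1| / r ^ q * a ^ (-q) ≤ 10 * |r - 1| * (a * a ^ (-q - 1)) := by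
          rw [← e3]; gcongr
      _ = 10 * (a * |r - 1|) * a ^ (-q - 1) := by ring
      _ ≤ _ := by gcongr
  · rw [Real.rpow_neg ha0.le]
    have : 1 / (a ^ q * r ^ q) = (1 / r ^ q) * (a ^ q)⁻¹ := by field_simp
    rw [this]
    gcongr
    rw [div_le_iff₀ hrqp]; linarith

lemma aux_div_rpow {t a q : ℝ} (ht : 0 ≤ t) (hq : q ≠ 0) : t ^ a / t ^ q ≤ t ^ (a - q) := by
  rcases ht.eq_or_lt with rfl | h
  · rw [Real.zero_rpow hq, div_zero]; positivity
  · rw [Real.rpow_sub h]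

/-- unnormalised fractional Laplacian -/
noncomputable def auxG (s : ℝ) (u : ℝ → ℝ) (x : ℝ) : ℝ :=
  ∫ y : ℝ, (u x - u y) / |x - y| ^ (1 + 2 * s)

lemma aux_integrable {s a A B : ℝ} {u : ℝ → ℝ} (hs0 : 0 < s) (ha : 2 * s < a) (hA : 0 ≤ A)
    (hu : Continuous u) (hB : ∀ w, |u w| ≤ B) (x : ℝ) (hx : ∀ w, |u x - u w| ≤ A * |x - w| ^ a) :
    Integrable (fun y : ℝ => (u x - u y) / |x - y| ^ (1 + 2 * s)) := by
  have hB0 : 0 ≤ B := (abs_nonneg _).trans (hB 0)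
  have h1 := ((aux_near (p := a - (1 + 2 * s)) (R := 1) (by linarith) one_pos).1.comp_sub_right
    x).const_mul A
  have h2 := ((aux_far (q := -(1 + 2 * s)) (R := 1) (by linarith) one_pos).1.comp_sub_right
    x).const_mul (2 * B)
  refine (h1.add h2).mono' ?_ ?_
  · have : Measurable u := hu.measurable
    exact Measurable.aestronglyMeasurable (by fun_prop)
  · refine Eventually.of_forall (fun w => ?_)
    simp only [Pi.add_apply]
    rw [Real.norm_eq_abs, abs_div, abs_of_nonneg (by positivity : 0 ≤ |x - w| ^ (1 + 2 * s)),
      abs_sub_comm w x]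
    have hp : 0 ≤ |x - w| := abs_nonneg _
    by_cases h : |x - w| ≤ 1
    · rw [if_pos h, if_neg (not_lt.2 h)]
      calc |u x - u w| / |x - w| ^ (1 + 2 * s) ≤ A * |x - w| ^ a / |x - w| ^ (1 + 2 * s) := by
            gcongr; exact hx w
        _ = A * (|x - w| ^ a / |x - w| ^ (1 + 2 * s)) := by ring
        _ ≤ A * |x - w| ^ (a - (1 + 2 * s)) := by
            gcongr; exact aux_div_rpow hp (by linarith)
        _ = _ := by ring
    · rw [if_neg h, if_pos (not_le.1 h), Real.rpow_neg hp, ← div_eq_mul_inv, mul_zero, zero_add]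
      gcongr
      have := abs_sub (u x) (u w)
      linarith [hB x, hB w]

lemma aux_hasFracLap {s : ℝ} {u : ℝ → ℝ} {x : ℝ} 
    (hI : Integrable (fun y : ℝ => (u x - u y) / |x - y| ^ (1 + 2 * s))) :
    HasFracLapAt s u x (fracLapCoef s * auxG s u x) := by
  refine ⟨fun ε _ => hI.integrableOn, ?_⟩
  refine Tendsto.const_mul _ ?_
  have hm : ∀ ε : ℝ, MeasurableSet {y : ℝ | ε < |y - x|} := fun ε =>
    measurableSet_lt measurable_const (by fun_prop)
  simp_rw [← integral_indicator (hm _)]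
  refine tendsto_integral_filter_of_dominated_convergence
    (fun y => ‖(u x - u y) / |x - y| ^ (1 + 2 * s)‖) ?_ ?_ hI.norm ?_
  · exact Eventually.of_forall fun ε => hI.aestronglyMeasurable.indicator (hm ε)
  · exact Eventually.of_forall fun ε => Eventually.of_forall fun y => norm_indicator_le_norm_self _ _
  · refine Eventually.of_forall fun y => ?_
    by_cases hy : y = x
    · subst hy
      refine tendsto_const_nhds.congr' (Eventually.of_forall fun ε => ?_)
      simp [indicator]
    · have : 0 < |y - x| := abs_pos.2 (sub_ne_zero.2 hy)
      have h2 : ∀ᶠ ε in nhdsWithin (0:ℝ) (Ioi 0), ε < |y - x| :=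
        mem_nhdsWithin_of_mem_nhds (Iio_mem_nhds this)
      refine tendsto_const_nhds.congr' ?_
      filter_upwards [h2] with ε hε
      simp [indicator, hε]

noncomputable def auxMaj (q a x y d w : ℝ) : ℝ :=
  (if |w - x| ≤ 3 * d then |w - x| ^ (a - q) else 0) +
  (if |w - y| ≤ 3 * d then |w - y| ^ (a - q) else 0) +
  10 * d * (if 2 * d < |w - x| then |w - x| ^ (a - q - 1) else 0) +
  4 * d ^ a * (if 2 * d < |w - x| then |w - x| ^ (-q) else 0)

lemma auxMaj_int {s a : ℝ} (hs0 : 0 < s) (ha : 2 * s < a) (ha2 : a < 1 + 2 * s) :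
    ∃ C : ℝ, 0 < C ∧ ∀ x y d : ℝ, 0 < d → Integrable (auxMaj (1 + 2 * s) a x y d) ∧
      ∫ w, auxMaj (1 + 2 * s) a x y d w = C * d ^ (a - 2 * s) := by
  set q := 1 + 2 * s with hq
  refine ⟨2 * (2 / (a - q + 1) * 3 ^ (a - q + 1)) + 10 * (2 / (-(a - q - 1 + 1)) * 2 ^ (a - q - 1 + 1)) +
    4 * (2 / (-(-q + 1)) * 2 ^ (-q + 1)), ?_, ?_⟩
  · have h1 : 0 < a - q + 1 := by linarith
    have h2 : 0 < -(a - q - 1 + 1) := by linarith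
    have h3 : 0 < -(-q + 1) := by linarith
    positivity
  · intro x y d hd
    obtain ⟨i1, j1⟩ := aux_near (p := a - q) (R := 3 * d) (by linarith) (by linarith)
    obtain ⟨i2, j2⟩ := aux_far (q := a - q - 1) (R := 2 * d) (by linarith) (by linarith)
    obtain ⟨i3, j3⟩ := aux_far (q := - q) (R := 2 * d) (by linarith) (by linarith)
    have k1 := i1.comp_sub_right x
    have k2 := i1.comp_sub_right y
    have k3 := (i2.comp_sub_right x).const_mul (10 * d)
    have k4 := (i3.comp_sub_right x).const_mul (4 * d ^ a)
    refine ⟨((k1.add k2).add k3).add k4, ?_⟩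
    unfold auxMaj
    rw [integral_add (by exact (k1.add k2).add k3) k4, integral_add (by exact k1.add k2) k3,
      integral_add k1 k2, integral_const_mul, integral_const_mul,
      integral_sub_right_eq_self (fun w => if |w| ≤ 3 * d then |w| ^ (a - q) else 0),
      integral_sub_right_eq_self (fun w => if |w| ≤ 3 * d then |w| ^ (a - q) else 0),
      integral_sub_right_eq_self (fun w => if 2 * d < |w| then |w| ^ (a - q - 1) else 0),
      integral_sub_right_eq_self (fun w => if 2 * d < |w| then |w| ^ (-q) else 0),
      j1, j2, j3]
    rw [Real.mul_rpow (by norm_num) hd.le, Real.mul_rpow (by norm_num) hd.le,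
      Real.mul_rpow (by norm_num) hd.le]
    have e1 : a - q + 1 = a - 2 * s := by rw [hq]; ring
    have e2 : d * d ^ (a - q - 1 + 1) = d ^ (a - 2 * s) := by
      rw [mul_comm, ← Real.rpow_add_one hd.ne']; congr 1; rw [hq]; ring
    have e3 : d ^ a * d ^ (-q + 1) = d ^ (a - 2 * s) := by
      rw [← Real.rpow_add hd]; congr 1; rw [hq]; ring
    rw [e1]
    linear_combination (10 * (2 / (-(a - q - 1 + 1)) * 2 ^ (a - q - 1 + 1))) * e2 +
      (4 * (2 / (-(-q + 1)) * 2 ^ (-q + 1))) * e3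

lemma aux_pointwise {s a₁ a₂ Λ₁ Λ₂ : ℝ} {u : ℝ → ℝ} (hs0 : 0 < s) (hs1 : 2 * s < 1)
    (hΛ₁ : 0 ≤ Λ₁) (hΛ₂ : 0 ≤ Λ₂) {x y : ℝ} (hxy : 0 < |x - y|)
    (hx : ∀ w, |u x - u w| ≤ Λ₁ * |x - w| ^ a₁ + Λ₂ * |x - w| ^ a₂)
    (hy : ∀ w, |u y - u w| ≤ Λ₁ * |y - w| ^ a₁ + Λ₂ * |y - w| ^ a₂) (w : ℝ) :
    |(u x - u w) / |x - w| ^ (1 + 2 * s) - (u y - u w) / |y - w| ^ (1 + 2 * s)| ≤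
      Λ₁ * auxMaj (1 + 2 * s) a₁ x y |x - y| w + Λ₂ * auxMaj (1 + 2 * s) a₂ x y |x - y| w := by
  set q := 1 + 2 * s with hq
  set d := |x - y| with hd
  have gen : ∀ z : ℝ, (∀ w, |u z - u w| ≤ Λ₁ * |z - w| ^ a₁ + Λ₂ * |z - w| ^ a₂) →
      |(u z - u w) / |z - w| ^ q| ≤ Λ₁ * |z - w| ^ (a₁ - q) + Λ₂ * |z - w| ^ (a₂ - q) := by
    intro z hz
    rw [abs_div, abs_of_nonneg (by positivity : 0 ≤ |z - w| ^ q)]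
    have n : 0 ≤ |z - w| := abs_nonneg _
    calc |u z - u w| / |z - w| ^ q ≤ (Λ₁ * |z - w| ^ a₁ + Λ₂ * |z - w| ^ a₂) / |z - w| ^ q := by
          gcongr; exact hz w
      _ = Λ₁ * (|z - w| ^ a₁ / |z - w| ^ q) + Λ₂ * (|z - w| ^ a₂ / |z - w| ^ q) := by ring
      _ ≤ _ := by
          gcongr
          · exact aux_div_rpow n (by linarith)
          · exact aux_div_rpow n (by linarith)
  unfold auxMaj
  rw [abs_sub_comm w x, abs_sub_comm w y]
  by_cases h : |x - w| ≤ 2 * d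
  · have h3 : |x - w| ≤ 3 * d := by linarith
    have h4 : |y - w| ≤ 3 * d := by
      have := abs_sub_le y x w
      rw [abs_sub_comm y x] at this
      linarith
    simp only [if_pos h3, if_pos h4, if_neg (not_lt.2 h)]
    refine (abs_sub _ _).trans ?_
    linarith [gen x hx, gen y hy]
  · have h' := not_le.1 h
    have hc : |(|x - w| - |y - w|)| ≤ d := by
      have := abs_abs_sub_abs_le_abs_sub (x - w) (y - w)
      rwa [sub_sub_sub_cancel_right] at this
    obtain ⟨k1, k2⟩ := aux_kernel (q := q) (by linarith) (by linarith) h' hxy hc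
    have hp : 0 < |x - w| := by linarith
    have P1 : 0 ≤ (if |x - w| ≤ 3 * d then |x - w| ^ (a₁ - q) else 0) := by split_ifs <;> positivity
    have P2 : 0 ≤ (if |y - w| ≤ 3 * d then |y - w| ^ (a₁ - q) else 0) := by split_ifs <;> positivity
    have P3 : 0 ≤ (if |x - w| ≤ 3 * d then |x - w| ^ (a₂ - q) else 0) := by split_ifs <;> positivity
    have P4 : 0 ≤ (if |y - w| ≤ 3 * d then |y - w| ^ (a₂ - q) else 0) := by split_ifs <;> positivity
    simp only [if_pos h']
    have e : (u x - u w) / |x - w| ^ q - (u y - u w) / |y - w| ^ q =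
      (u x - u w) * (1 / |x - w| ^ q - 1 / |y - w| ^ q) + (u x - u y) * (1 / |y - w| ^ q) := by ring
    have e5 : ∀ a : ℝ, |x - w| ^ a * |x - w| ^ (-q - 1) = |x - w| ^ (a - q - 1) := by
      intro a; rw [← Real.rpow_add hp]; congr 1; ring
    have b1 : |(u x - u w) * (1 / |x - w| ^ q - 1 / |y - w| ^ q)| ≤
        Λ₁ * (10 * d * |x - w| ^ (a₁ - q - 1)) + Λ₂ * (10 * d * |x - w| ^ (a₂ - q - 1)) := by
      rw [abs_mul, ← e5, ← e5]
      calc _ ≤ (Λ₁ * |x - w| ^ a₁ + Λ₂ * |x - w| ^ a₂) * (10 * d * |x - w| ^ (-q - 1)) := by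
            gcongr; exact hx w
        _ = _ := by ring
    have b2 : |(u x - u y) * (1 / |y - w| ^ q)| ≤
        Λ₁ * (4 * d ^ a₁ * |x - w| ^ (-q)) + Λ₂ * (4 * d ^ a₂ * |x - w| ^ (-q)) := by
      rw [abs_mul, abs_of_nonneg (by positivity : 0 ≤ 1 / |y - w| ^ q)]
      calc _ ≤ (Λ₁ * d ^ a₁ + Λ₂ * d ^ a₂) * (4 * |x - w| ^ (-q)) := by
            gcongr; exact hx y
        _ = _ := by ring
    rw [e]
    refine (abs_add_le _ _).trans ?_
    have Q1 := mul_nonneg hΛ₁ P1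
    have Q2 := mul_nonneg hΛ₁ P2
    have Q3 := mul_nonneg hΛ₂ P3
    have Q4 := mul_nonneg hΛ₂ P4
    linarith

/-- Lemma A. -/
lemma aux_G_diff {s a₁ a₂ : ℝ} (hs0 : 0 < s) (hs1 : 2 * s < 1)
    (h1 : 2 * s < a₁) (h1' : a₁ < 1 + 2 * s) (h2 : 2 * s < a₂) (h2' : a₂ < 1 + 2 * s) :
    ∃ C : ℝ, 0 < C ∧ ∀ (u : ℝ → ℝ),
      (∀ x, Integrable (fun y : ℝ => (u x - u y) / |x - y| ^ (1 + 2 * s))) →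
      ∀ (Λ₁ Λ₂ : ℝ), 0 ≤ Λ₁ → 0 ≤ Λ₂ → ∀ x y : ℝ, 0 < |x - y| →
      (∀ w, |u x - u w| ≤ Λ₁ * |x - w| ^ a₁ + Λ₂ * |x - w| ^ a₂) →
      (∀ w, |u y - u w| ≤ Λ₁ * |y - w| ^ a₁ + Λ₂ * |y - w| ^ a₂) →
      |auxG s u x - auxG s u y| ≤
        C * (Λ₁ * |x - y| ^ (a₁ - 2 * s) + Λ₂ * |x - y| ^ (a₂ - 2 * s)) := by
  obtain ⟨C1, hC1, H1⟩ := auxMaj_int hs0 h1 h1'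
  obtain ⟨C2, hC2, H2⟩ := auxMaj_int hs0 h2 h2'
  refine ⟨C1 + C2, by linarith, ?_⟩
  intro u hI Λ₁ Λ₂ hΛ₁ hΛ₂ x y hxy hx hy
  obtain ⟨i1, j1⟩ := H1 x y _ hxy
  obtain ⟨i2, j2⟩ := H2 x y _ hxy
  unfold auxG
  rw [← integral_sub (hI x) (hI y)]
  calc _ ≤ ∫ w, |(u x - u w) / |x - w| ^ (1 + 2 * s) - (u y - u w) / |y - w| ^ (1 + 2 * s)| :=
        abs_integral_le_integral_abs
    _ ≤ ∫ w, (Λ₁ * auxMaj (1 + 2 * s) a₁ x y |x - y| w + Λ₂ * auxMaj (1 + 2 * s) a₂ x y |x - y| w) :=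
        integral_mono ((hI x).sub (hI y)).abs ((i1.const_mul _).add (i2.const_mul _))
          (aux_pointwise hs0 hs1 hΛ₁ hΛ₂ hxy hx hy)
    _ = Λ₁ * (C1 * |x - y| ^ (a₁ - 2 * s)) + Λ₂ * (C2 * |x - y| ^ (a₂ - 2 * s)) := by
        rw [integral_add (i1.const_mul _) (i2.const_mul _), integral_const_mul, integral_const_mul,
          j1, j2]
    _ ≤ _ := by
        have p1 : 0 ≤ Λ₁ * |x - y| ^ (a₁ - 2 * s) := by positivity
        have p2 : 0 ≤ Λ₂ * |x - y| ^ (a₂ - 2 * s) := by positivity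
        nlinarith [mul_nonneg hC1.le p2, mul_nonneg hC2.le p1]

lemma aux_G_periodic {s T : ℝ} {u : ℝ → ℝ} (h : Function.Periodic u T) :
    Function.Periodic (auxG s u) T := by
  intro x
  unfold auxG
  rw [← integral_add_right_eq_self (fun y => (u (x + T) - u y) / |x + T - y| ^ (1 + 2 * s)) T]
  congr 1; ext y
  rw [h x, h y, add_sub_add_right_eq_sub]

lemma aux_G_symm {s c : ℝ} {u : ℝ → ℝ} (h : ∀ x, u (2 * c - x) = u x) (x : ℝ) :
    auxG s u (2 * c - x) = auxG s u x := by
  unfold auxG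
  rw [← integral_sub_left_eq_self (fun y => (u (2 * c - x) - u y) / |2 * c - x - y| ^ (1 + 2 * s))
    volume (2 * c)]
  congr 1; ext y
  rw [h x, h y, sub_sub_sub_cancel_left, abs_sub_comm]

lemma aux_memCalpha {α C B : ℝ} {f : ℝ → ℝ} (h0 : 0 < α) (h1 : α < 1) (hC : 0 ≤ C)
    (hB : ∀ x, |f x| ≤ B)
    (hf : ∀ x y, |f x - f y| ≤ C * |x - y| ^ α) : MemCalpha α univ f := by
  have hfl : ⌊α⌋₊ = 0 := Nat.floor_eq_zero.2 h1
  have hH : HolderWith C.toNNReal α.toNNReal f := by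
    intro x y
    rw [edist_dist, edist_dist, Real.dist_eq, Real.dist_eq, Real.coe_toNNReal _ h0.le,
      ENNReal.ofReal_rpow_of_nonneg (abs_nonneg _) h0.le]
    change _ ≤ ENNReal.ofReal C * _
    rw [← ENNReal.ofReal_mul hC]
    exact ENNReal.ofReal_le_ofReal (hf x y)
  unfold MemCalpha
  rw [hfl]
  refine ⟨?_, ?_, C.toNNReal, ?_⟩
  · simpa using hH.continuous (by simpa using h0)
  · intro k hk
    obtain rfl : k = 0 := by omega
    exact ⟨B, fun x _ => by simpa [iteratedDerivWithin_zero] using hB x⟩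
  · rw [iteratedDerivWithin_zero]
    simpa using hH.holderOnWith univ

lemma aux_exists_f {u g : ℝ → ℝ} {β C x0 x1 : ℝ} (hβ0 : 0 < β) (hβ1 : β < 1) (hC : 0 ≤ C)
    (hu : Continuous u) (hmin : ∀ x, u x0 ≤ u x) (hmax : ∀ x, u x ≤ u x1)
    (hg : ∀ x y, |g x - g y| ≤ C * |u x - u y| ^ β) :
    ∃ f : ℝ → ℝ, MemCalpha β univ f ∧ ∀ x, f (u x) = g x := by
  have hle : u x0 ≤ u x1 := hmin x1
  have hsurj : ∀ t : ℝ, ∃ x, u x = (projIcc (u x0) (u x1) hle t : ℝ) := by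
    intro t
    have := (projIcc (u x0) (u x1) hle t).2
    exact mem_range_of_exists_le_of_exists_ge hu ⟨x0, this.1⟩ ⟨x1, this.2⟩
  choose σ hσ using hsurj
  have key : ∀ t t', |g (σ t) - g (σ t')| ≤ C * |t - t'| ^ β := by
    intro t t'
    refine (hg _ _).trans ?_
    rw [hσ, hσ]
    exact mul_le_mul_of_nonneg_left
      (Real.rpow_le_rpow (abs_nonneg _) (abs_projIcc_sub_projIcc hle) hβ0.le) hC
  refine ⟨fun t => g (σ t), aux_memCalpha (B := |g x0| + C * |u x1 - u x0| ^ β) hβ0 hβ1 hC ?_ key, ?_⟩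
  · intro t
    have h1 := hg (σ t) x0
    have h2 : |u (σ t) - u x0| ≤ |u x1 - u x0| := by
      rw [abs_of_nonneg (by linarith [hmin (σ t)]), abs_of_nonneg (by linarith)]
      linarith [hmax (σ t)]
    have h3 : C * |u (σ t) - u x0| ^ β ≤ C * |u x1 - u x0| ^ β := by gcongr
    have h4 := abs_sub_abs_le_abs_sub (g (σ t)) (g x0)
    linarith
  · intro x
    have : u (σ (u x)) = u x := by
      rw [hσ, projIcc_of_mem hle ⟨hmin x, hmax x⟩]
    have h := hg (σ (u x)) x
    rw [this, sub_self, abs_zero, Real.zero_rpow hβ0.ne', mul_zero] at h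
    exact sub_eq_zero.1 (abs_eq_zero.1 (le_antisymm h (abs_nonneg _)))

lemma aux_final {s β L c C : ℝ} {u : ℝ → ℝ} (hβ0 : 0 < β) (hβ1 : β < 1) (hL : 0 < L) (hC : 0 ≤ C)
    (hper : Function.Periodic u (2 * L)) (hsym : ∀ x, u (2 * c - x) = u x) (hu : Continuous u)
    (hI : ∀ x, Integrable (fun y : ℝ => (u x - u y) / |x - y| ^ (1 + 2 * s)))
    (hD : ∀ x y, c ≤ x → x < y → y ≤ c + L →
      |auxG s u x - auxG s u y| ≤ C * |u x - u y| ^ β) :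
    ∃ f : ℝ → ℝ, MemCalpha β univ f ∧ ∀ x, HasFracLapAt s u x (f (u x)) := by
  have hred : ∀ x, ∃ x' ∈ Icc c (c + L), u x = u x' ∧ auxG s u x = auxG s u x' := by
    intro x
    obtain ⟨k, hk, -⟩ := existsUnique_sub_zsmul_mem_Ico (by linarith : 0 < 2 * L) x (c - L)
    have e1 := hper.sub_zsmul_eq (x := x) k
    have e2 := (aux_G_periodic (s := s) hper).sub_zsmul_eq (x := x) k
    rcases le_total c (x - k • (2 * L)) with h | h
    · exact ⟨_, ⟨h, by linarith [hk.2]⟩, e1.symm, e2.symm⟩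
    · refine ⟨2 * c - (x - k • (2 * L)), ⟨by linarith, by linarith [hk.1]⟩, ?_, ?_⟩
      · rw [hsym, e1]
      · rw [aux_G_symm hsym, e2]
  have hall0 : ∀ x ∈ Icc c (c + L), ∀ y ∈ Icc c (c + L),
      |auxG s u x - auxG s u y| ≤ C * |u x - u y| ^ β := by
    intro x hx y hy
    rcases lt_trichotomy x y with h | h | h
    · exact hD x y hx.1 h hy.2
    · subst h; simp [Real.zero_rpow hβ0.ne']
    · rw [abs_sub_comm, abs_sub_comm (u x)]
      exact hD y x hy.1 h hx.2
  have hall : ∀ x y, |auxG s u x - auxG s u y| ≤ C * |u x - u y| ^ β := by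
    intro x y
    obtain ⟨x', hx', e1, e2⟩ := hred x
    obtain ⟨y', hy', e3, e4⟩ := hred y
    rw [e1, e2, e3, e4]
    exact hall0 _ hx' _ hy'
  have hne : (Icc c (c + L)).Nonempty := ⟨c, by constructor <;> linarith⟩
  obtain ⟨x0, -, h0⟩ := isCompact_Icc.exists_isMinOn hne hu.continuousOn
  obtain ⟨x1, -, h1⟩ := isCompact_Icc.exists_isMaxOn hne hu.continuousOn
  obtain ⟨f, hf, hfu⟩ := aux_exists_f (u := u) (g := fun x => fracLapCoef s * auxG s u x)
    (x0 := x0) (x1 := x1) (C := |fracLapCoef s| * C) hβ0 hβ1 (by positivity) hu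
    (fun x => by obtain ⟨x', hx', e, -⟩ := hred x; rw [e]; exact h0 hx')
    (fun x => by obtain ⟨x', hx', e, -⟩ := hred x; rw [e]; exact h1 hx')
    (fun x y => by
      rw [← mul_sub, abs_mul, mul_assoc]
      exact mul_le_mul_of_nonneg_left (hall x y) (abs_nonneg _))
  refine ⟨f, hf, fun x => ?_⟩
  rw [hfu]
  exact aux_hasFracLap (hI x)

/-- small powers dominate large ones near zero -/
lemma aux_contra {a θ C K : ℝ} (hK : 0 < K) (h : a < θ)
    (hev : ∀ᶠ x in nhdsWithin (0:ℝ) (Ioi 0), K * x ^ a ≤ C * x ^ θ) : False := by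
  have ht : Tendsto (fun x : ℝ => C * x ^ (θ - a)) (nhdsWithin (0:ℝ) (Ioi 0)) (nhds 0) := by
    have := (Real.continuousAt_rpow_const 0 (θ - a) (Or.inr (by linarith : 0 ≤ θ - a))).tendsto
    rw [Real.zero_rpow (by linarith)] at this
    simpa using (this.mono_left nhdsWithin_le_nhds).const_mul C
  have h2 := ht.eventually (Iio_mem_nhds hK)
  obtain ⟨x, ⟨h3, h4⟩, h5⟩ := ((hev.and h2).and self_mem_nhdsWithin).exists
  have hx : 0 < x := h5
  have hxa : 0 < x ^ a := Real.rpow_pos_of_pos hx _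
  rw [Real.rpow_sub hx] at h4
  have : C * x ^ θ < K * x ^ a := by
    have h4' : C * (x ^ θ / x ^ a) < K := h4
    rw [← mul_div_assoc, div_lt_iff₀ hxa] at h4'
    exact h4'
  linarith

lemma aux_pow_lip {α a b : ℝ} (h0 : 0 < α) (h1 : α < 1) (ha : 0 < a) (hb : 0 ≤ b) :
    |a ^ α - b ^ α| ≤ a ^ (α - 1) * |a - b| := by
  obtain ⟨r, rfl⟩ : ∃ r, b = a * r := ⟨b / a, by field_simp⟩
  have hr : 0 ≤ r := by
    by_contra h; push Not at h; nlinarith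
  rw [Real.mul_rpow ha.le hr, Real.rpow_sub_one ha.ne']
  have e1 : a ^ α - a ^ α * r ^ α = a ^ α * (1 - r ^ α) := by ring
  have e2 : a - a * r = a * (1 - r) := by ring
  have hp : 0 < a ^ α := Real.rpow_pos_of_pos ha _
  rw [e1, e2, abs_mul, abs_mul, abs_of_pos hp, abs_of_pos ha]
  have e3 : a ^ α / a * (a * |1 - r|) = a ^ α * |1 - r| := by field_simp
  rw [e3]
  gcongr ?_ * ?_
  rcases le_total r 1 with h | h
  · have k1 : r ^ α ≤ 1 := Real.rpow_le_one hr h h0.le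
    have k2 : r ≤ r ^ α := by
      rcases hr.eq_or_lt with h | h'
      · subst h; rw [Real.zero_rpow h0.ne']
      · simpa using Real.rpow_le_rpow_of_exponent_ge h' h h1.le
    rw [abs_of_nonneg (by linarith), abs_of_nonneg (by linarith)]; linarith
  · have k1 : 1 ≤ r ^ α := Real.one_le_rpow h h0.le
    have k2 : r ^ α ≤ r := by
      simpa using Real.rpow_le_rpow_of_exponent_le h h1.le
    rw [abs_of_nonpos (by linarith), abs_of_nonpos (by linarith)]; linarith

lemma aux_pow_lower {α x y : ℝ} (h0 : 0 < α) (h1 : α < 1) (hx : 0 < x) (hxy : x < y) :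
    α * y ^ (α - 1) * (y - x) ≤ y ^ α - x ^ α := by
  have hy : 0 < y := hx.trans hxy
  obtain ⟨r, rfl⟩ : ∃ r, x = y * r := ⟨x / y, by field_simp⟩
  have hr : 0 < r := by
    by_contra h; push Not at h; nlinarith
  rw [Real.mul_rpow hy.le hr.le, Real.rpow_sub_one hy.ne']
  have hp : 0 < y ^ α := Real.rpow_pos_of_pos hy _
  have k := rpow_one_add_le_one_add_mul_self (s := r - 1) (by linarith) h0.le h1.le
  rw [add_sub_cancel] at k
  have : α * (y ^ α / y) * (y - y * r) = y ^ α * (α * (1 - r)) := by field_simp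
  rw [this]
  nlinarith

lemma aux_pow_hol {α a b : ℝ} (h0 : 0 < α) (h1 : α < 1) (ha : 0 ≤ a) (hb : 0 ≤ b) :
    |a ^ α - b ^ α| ≤ |a - b| ^ α := by
  wlog h : b ≤ a generalizing a b
  · rw [abs_sub_comm, abs_sub_comm a]; exact this hb ha (le_of_not_ge h)
  have := Real.rpow_add_le_add_rpow (sub_nonneg.2 h) hb h0.le h1.le
  rw [sub_add_cancel] at this
  have h2 : b ^ α ≤ a ^ α := Real.rpow_le_rpow hb h h0.le
  rw [abs_of_nonneg (by linarith), abs_of_nonneg (by linarith)]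
  linarith

lemma aux_notMem {α ε ρ : ℝ} {u : ℝ → ℝ} (h0 : 0 < α) (h1 : α < 1) (hε : 0 < ε) (hρ : 0 < ρ)
    (hu0 : u 0 = 0) (hu : ∀ᶠ x in nhdsWithin (0:ℝ) (Ioi 0), u x = x ^ α) :
    ¬ MemCalpha (α + ε) (Icc (-ρ) ρ) u := by
  rintro ⟨hc, -, C, hH⟩
  have h0m : (0:ℝ) ∈ Icc (-ρ) ρ := ⟨by linarith, hρ.le⟩
  have hIoc : Ioc 0 ρ ∈ nhdsWithin (0:ℝ) (Ioi 0) := Ioc_mem_nhdsGT hρ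
  by_cases hfl : ⌊α + ε⌋₊ = 0
  · rw [hfl, iteratedDerivWithin_zero] at hH
    refine aux_contra (a := α) (θ := α + ε) (C := C) one_pos (by linarith) ?_
    filter_upwards [hu, hIoc] with x hx hx2
    have := hH.dist_le ⟨by linarith [hx2.1], hx2.2⟩ h0m
    rw [hu0, hx, Real.dist_eq, Real.dist_eq, sub_zero, sub_zero, abs_of_pos hx2.1] at this
    simp only [Nat.cast_zero, sub_zero] at this
    rw [Real.coe_toNNReal _ (by linarith)] at this
    linarith [le_abs_self (x ^ α)]
  · have hd : DifferentiableWithinAt ℝ u (Icc (-ρ) ρ) 0 :=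
      (hc.differentiableOn (by exact_mod_cast hfl)) 0 h0m
    have hd2 : DifferentiableWithinAt ℝ u (Ioi 0) 0 :=
      (hd.mono (Ioc_subset_Icc_self.trans (Icc_subset_Icc_left (by linarith)))).mono_of_mem_nhdsWithin
        (s := Ioc 0 ρ) hIoc
    obtain ⟨c, hc⟩ := hd2.isBigO_sub.bound
    refine aux_contra (a := α) (θ := 1) (C := c) one_pos h1 ?_
    filter_upwards [hu, hIoc, hc] with x hx hx2 hx3
    rw [hu0, hx, sub_zero, sub_zero, Real.norm_eq_abs, Real.norm_eq_abs, abs_of_pos hx2.1] at hx3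
    rw [Real.rpow_one]
    linarith [le_abs_self (x ^ α)]

lemma aux_case_one {s β L : ℝ} (hs0 : 0 < s) (hβ0 : 0 < β) (hβ1 : β < 1)
    (hL : 0 < L) (h : 2 * s < 1 - β) :
    ∃ u f : ℝ → ℝ,
      Function.Periodic u (2 * L) ∧
      MemCalpha (2 * s / (1 - β)) Set.univ u ∧
      MemCalpha β Set.univ f ∧
      (∀ x : ℝ, HasFracLapAt s u x (f (u x))) ∧
      (∀ ε ρ : ℝ, 0 < ε → 0 < ρ →
        ¬ MemCalpha (2 * s / (1 - β) + ε) (Set.Icc (-ρ) ρ) u) := by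
  have hb : 0 < 1 - β := by linarith
  obtain ⟨α, hα⟩ : ∃ α, α = 2 * s / (1 - β) := ⟨_, rfl⟩
  have hα0 : 0 < α := by rw [hα]; positivity
  have hα1 : α < 1 := by rw [hα, div_lt_one hb]; exact h
  have hαs : α - 2 * s = α * β := by rw [hα]; field_simp; ring
  have hαs' : 2 * s < α := by nlinarith
  rw [← hα]
  have h2L : 2 * L ≠ 0 := by linarith
  set p : ℝ → ℝ := fun x => ‖(x : AddCircle (2 * L))‖ with hp
  have pnn : ∀ x, 0 ≤ p x := fun x => norm_nonneg _
  have plip : ∀ x y, |p x - p y| ≤ |x - y| := by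
    intro x y
    refine (abs_norm_sub_norm_le _ _).trans ?_
    rw [← AddCircle.coe_sub]
    exact QuotientAddGroup.norm_mk_le_norm
  have pval : ∀ x, |x| ≤ L → p x = |x| := by
    intro x hx
    refine (AddCircle.norm_coe_eq_abs_iff (2 * L) h2L).2 ?_
    rw [abs_of_pos (by linarith : 0 < 2 * L)]; linarith
  have ple : ∀ x, p x ≤ L := by
    intro x
    have := AddCircle.norm_le_half_period (2 * L) h2L (x := (x : AddCircle (2 * L)))
    rw [abs_of_pos (by linarith : 0 < 2 * L)] at this
    change ‖(x : AddCircle (2 * L))‖ ≤ L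
    linarith
  set u : ℝ → ℝ := fun x => p x ^ α with hu
  have uper : Function.Periodic u (2 * L) := by
    intro x; simp only [hu, hp, AddCircle.coe_add_period]
  have usym : ∀ x, u (2 * 0 - x) = u x := by
    intro x; simp only [hu, hp, mul_zero, zero_sub, AddCircle.coe_neg, norm_neg]
  have uhol : ∀ x y, |u x - u y| ≤ 1 * |x - y| ^ α := by
    intro x y
    rw [one_mul]
    exact (aux_pow_hol hα0 hα1 (pnn x) (pnn y)).trans
      (Real.rpow_le_rpow (abs_nonneg _) (plip x y) hα0.le)
  have ubd : ∀ x, |u x| ≤ L ^ α := by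
    intro x
    rw [abs_of_nonneg (Real.rpow_nonneg (pnn x) _)]
    exact Real.rpow_le_rpow (pnn x) (ple x) hα0.le
  have umem := aux_memCalpha hα0 hα1 zero_le_one ubd uhol
  have ucont : Continuous u := by
    have := umem.1.continuousOn
    rwa [← continuousOn_univ]
  have uval : ∀ x, 0 ≤ x → x ≤ L → u x = x ^ α := by
    intro x h1 h2
    simp only [hu]
    rw [pval x (by rwa [abs_of_nonneg h1]), abs_of_nonneg h1]
  have ulip : ∀ x, 0 < x → x ≤ L → ∀ w, |u x - u w| ≤ x ^ (α - 1) * |x - w| := by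
    intro x h1 h2 w
    have hpx : p x = x := by rw [pval x (by rwa [abs_of_pos h1]), abs_of_pos h1]
    have := aux_pow_lip hα0 hα1 (a := p x) (by rw [hpx]; exact h1) (pnn w)
    refine this.trans ?_
    have hl := plip x w
    rw [hpx] at hl ⊢
    gcongr
  have hI : ∀ x, Integrable (fun y : ℝ => (u x - u y) / |x - y| ^ (1 + 2 * s)) := fun x =>
    aux_integrable hs0 hαs' zero_le_one ucont ubd x (uhol x)
  obtain ⟨C1, hC1, H1⟩ := aux_G_diff (s := s) (a₁ := α) (a₂ := α) hs0 (by linarith) hαs'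
    (by linarith) hαs' (by linarith)
  obtain ⟨C2, hC2, H2⟩ := aux_G_diff (s := s) (a₁ := 1) (a₂ := 1) hs0 (by linarith) (by linarith)
    (by linarith) (by linarith) (by linarith)
  set m : ℝ := 1 - (1 / 2) ^ α with hm
  have hm0 : 0 < m := by
    have : ((1:ℝ) / 2) ^ α < 1 := Real.rpow_lt_one (by norm_num) (by norm_num) hα0
    linarith
  set m2 : ℝ := α * 2 ^ (α - 1) with hm2
  have hm20 : 0 < m2 := by positivity
  have hfin : ∃ C : ℝ, 0 ≤ C ∧ ∀ x y, 0 ≤ x → x < y → y ≤ 0 + L →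
      |auxG s u x - auxG s u y| ≤ C * |u x - u y| ^ β := by
    refine ⟨C1 * (m ^ β)⁻¹ + C2 * (m2 ^ β)⁻¹, by positivity, ?_⟩
    intro x y hx hxy hy
    rw [zero_add] at hy
    have hy0 : 0 < y := by linarith
    set d := y - x with hd
    have hd0 : 0 < d := by linarith
    have hxd : |x - y| = d := by rw [abs_sub_comm, abs_of_pos hd0]
    have hmono : x ^ α ≤ y ^ α := Real.rpow_le_rpow hx hxy.le hα0.le
    have hudiff : |u x - u y| = y ^ α - x ^ α := by
      rw [uval x hx (by linarith), uval y hy0.le hy, abs_sub_comm, abs_of_nonneg (by linarith)]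
    rw [hudiff]
    have hnn : 0 ≤ (y ^ α - x ^ α) ^ β := Real.rpow_nonneg (by linarith) _
    by_cases hc : x ≤ d
    · have k := H1 u hI 1 0 zero_le_one le_rfl x y (by rw [hxd]; exact hd0)
        (fun w => by rw [zero_mul, add_zero]; exact uhol x w)
        (fun w => by rw [zero_mul, add_zero]; exact uhol y w)
      rw [hxd, hαs, one_mul, zero_mul, add_zero, Real.rpow_mul hd0.le] at k
      have l1 : m * d ^ α ≤ y ^ α - x ^ α := by
        have a1 : x ^ α ≤ (1 / 2 * y) ^ α := Real.rpow_le_rpow hx (by linarith) hα0.le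
        rw [Real.mul_rpow (by norm_num) hy0.le] at a1
        have a2 : d ^ α ≤ y ^ α := Real.rpow_le_rpow hd0.le (by linarith) hα0.le
        nlinarith
      have l2 : m ^ β * (d ^ α) ^ β ≤ (y ^ α - x ^ α) ^ β := by
        rw [← Real.mul_rpow hm0.le (by positivity)]
        exact Real.rpow_le_rpow (by positivity) l1 hβ0.le
      have l3 : (d ^ α) ^ β ≤ (m ^ β)⁻¹ * (y ^ α - x ^ α) ^ β := by
        rw [inv_mul_eq_div, le_div_iff₀ (by positivity)]; linarith
      calc _ ≤ C1 * (d ^ α) ^ β := k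
        _ ≤ C1 * ((m ^ β)⁻¹ * (y ^ α - x ^ α) ^ β) := by gcongr
        _ ≤ _ := by
          have : 0 ≤ C2 * (m2 ^ β)⁻¹ * (y ^ α - x ^ α) ^ β := by positivity
          linarith
    · push Not at hc
      have hx0 : 0 < x := by linarith
      have k := H2 u hI (x ^ (α - 1)) 0 (by positivity) le_rfl x y (by rw [hxd]; exact hd0)
        (fun w => by
          rw [zero_mul, add_zero, Real.rpow_one]; exact ulip x hx0 (by linarith) w)
        (fun w => by
          rw [zero_mul, add_zero, Real.rpow_one]
          refine (ulip y hy0 hy w).trans ?_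
          gcongr ?_ * _
          exact Real.rpow_le_rpow_of_nonpos hx0 hxy.le (by linarith))
      rw [hxd, zero_mul, add_zero] at k
      have l0 : x ^ (α - 1) * d ^ (1 - 2 * s) ≤ (x ^ (α - 1) * d) ^ β := by
        have e : 1 - 2 * s - β = (1 - α) * (1 - β) := by nlinarith
        have e1 : d ^ (1 - 2 * s) = d ^ β * d ^ ((1 - α) * (1 - β)) := by
          rw [← Real.rpow_add hd0]; congr 1; linarith
        have e2 : x ^ (α - 1) = (x ^ (α - 1)) ^ β * x ^ (-((1 - α) * (1 - β))) := by
          rw [← Real.rpow_mul hx0.le, ← Real.rpow_add hx0]; congr 1; ring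
        have e3 : d ^ ((1 - α) * (1 - β)) ≤ x ^ ((1 - α) * (1 - β)) :=
          Real.rpow_le_rpow hd0.le hc.le (mul_nonneg (by linarith) hb.le)
        have hpx : 0 < x ^ ((1 - α) * (1 - β)) := Real.rpow_pos_of_pos hx0 _
        rw [Real.mul_rpow (by positivity) hd0.le, e1]
        calc _ = (x ^ (α - 1)) ^ β * x ^ (-((1 - α) * (1 - β))) * (d ^ β * d ^ ((1 - α) * (1 - β))) := by
              rw [← e2]
          _ ≤ (x ^ (α - 1)) ^ β * x ^ (-((1 - α) * (1 - β))) * (d ^ β * x ^ ((1 - α) * (1 - β))) := by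
              gcongr
          _ = _ := by rw [Real.rpow_neg hx0.le]; field_simp
      have l1 : m2 * (x ^ (α - 1) * d) ≤ y ^ α - x ^ α := by
        have a1 := aux_pow_lower hα0 hα1 hx0 hxy
        have a2 : (2 * x) ^ (α - 1) ≤ y ^ (α - 1) :=
          Real.rpow_le_rpow_of_nonpos hy0 (by linarith) (by linarith)
        rw [Real.mul_rpow (by norm_num) hx0.le] at a2
        calc m2 * (x ^ (α - 1) * d) = α * (2 ^ (α - 1) * x ^ (α - 1)) * d := by rw [hm2]; ring
          _ ≤ α * y ^ (α - 1) * d := by gcongr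
          _ ≤ _ := a1
      have l2 : m2 ^ β * (x ^ (α - 1) * d) ^ β ≤ (y ^ α - x ^ α) ^ β := by
        rw [← Real.mul_rpow hm20.le (by positivity)]
        exact Real.rpow_le_rpow (by positivity) l1 hβ0.le
      have l3 : (x ^ (α - 1) * d) ^ β ≤ (m2 ^ β)⁻¹ * (y ^ α - x ^ α) ^ β := by
        rw [inv_mul_eq_div, le_div_iff₀ (by positivity)]; linarith
      calc _ ≤ C2 * (x ^ (α - 1) * d ^ (1 - 2 * s)) := k
        _ ≤ C2 * ((m2 ^ β)⁻¹ * (y ^ α - x ^ α) ^ β) := by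
          exact mul_le_mul_of_nonneg_left (l0.trans l3) hC2.le
        _ ≤ _ := by
          have : 0 ≤ C1 * (m ^ β)⁻¹ * (y ^ α - x ^ α) ^ β := by positivity
          linarith
  obtain ⟨C, hC, hfin⟩ := hfin
  obtain ⟨f, hf, hfu⟩ := aux_final hβ0 hβ1 hL hC uper usym ucont hI hfin
  refine ⟨u, f, uper, umem, hf, hfu, fun ε ρ hε hρ => aux_notMem hα0 hα1 hε hρ ?_ ?_⟩
  · rw [uval 0 le_rfl hL.le, Real.zero_rpow hα0.ne']
  · filter_upwards [Ioc_mem_nhdsGT hL] with x hx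
    exact uval x hx.1.le hx.2

noncomputable def auxPsi (κ x : ℝ) : ℝ :=
  ∑' k : ℕ, (1 / 2 : ℝ) ^ (k + 1) * |Real.sin (κ * x)| ^ (1 / ((k : ℝ) + 1))

lemma auxPsi_term_nonneg (κ x : ℝ) (k : ℕ) :
    0 ≤ (1 / 2 : ℝ) ^ (k + 1) * |Real.sin (κ * x)| ^ (1 / ((k : ℝ) + 1)) := by positivity

lemma auxPsi_term_le (κ x : ℝ) (k : ℕ) :
    (1 / 2 : ℝ) ^ (k + 1) * |Real.sin (κ * x)| ^ (1 / ((k : ℝ) + 1)) ≤ (1 / 2 : ℝ) ^ (k + 1) := by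
  have : |Real.sin (κ * x)| ^ (1 / ((k : ℝ) + 1)) ≤ 1 :=
    Real.rpow_le_one (abs_nonneg _) (Real.abs_sin_le_one _) (by positivity)
  exact mul_le_of_le_one_right (by positivity) this

lemma aux_geom : HasSum (fun k : ℕ => (1 / 2 : ℝ) ^ (k + 1)) 1 := by
  have := hasSum_geometric_two.mul_left (1 / 2 : ℝ)
  simp only [← pow_succ'] at this
  simpa using this

lemma auxPsi_summable (κ x : ℝ) :
    Summable fun k : ℕ => (1 / 2 : ℝ) ^ (k + 1) * |Real.sin (κ * x)| ^ (1 / ((k : ℝ) + 1)) :=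
  Summable.of_nonneg_of_le (auxPsi_term_nonneg κ x) (auxPsi_term_le κ x) aux_geom.summable

lemma auxPsi_nonneg (κ x : ℝ) : 0 ≤ auxPsi κ x := tsum_nonneg (auxPsi_term_nonneg κ x)

lemma auxPsi_le_one (κ x : ℝ) : auxPsi κ x ≤ 1 := by
  rw [← aux_geom.tsum_eq]
  exact (auxPsi_summable κ x).tsum_le_tsum (auxPsi_term_le κ x) aux_geom.summable

lemma auxPsi_lower (κ x : ℝ) (k : ℕ) :
    (1 / 2 : ℝ) ^ (k + 1) * |Real.sin (κ * x)| ^ (1 / ((k : ℝ) + 1)) ≤ auxPsi κ x :=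
  (auxPsi_summable κ x).le_tsum k (fun j _ => auxPsi_term_nonneg κ x j)

lemma auxPsi_zero (κ : ℝ) : auxPsi κ 0 = 0 := by
  unfold auxPsi
  have : ∀ k : ℕ, (1 / 2 : ℝ) ^ (k + 1) * |Real.sin (κ * 0)| ^ (1 / ((k : ℝ) + 1)) = 0 := by
    intro k
    have hk : 1 / ((k : ℝ) + 1) ≠ 0 := by positivity
    rw [mul_zero, Real.sin_zero, abs_zero, Real.zero_rpow hk, mul_zero]
  simp only [this, tsum_zero]

lemma auxPsi_cont (κ : ℝ) : Continuous (auxPsi κ) := by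
  unfold auxPsi
  refine continuous_tsum (fun k => ?_) aux_geom.summable (fun k x => ?_)
  · refine continuous_const.mul (Continuous.rpow_const (by fun_prop) (fun x => Or.inr (by positivity)))
  · rw [Real.norm_eq_abs, abs_of_nonneg (auxPsi_term_nonneg κ x k)]
    exact auxPsi_term_le κ x k

lemma auxPsi_congr {κ x y : ℝ} (h : |Real.sin (κ * x)| = |Real.sin (κ * y)|) :
    auxPsi κ x = auxPsi κ y := by
  unfold auxPsi; rw [h]

noncomputable def auxS (s τ : ℝ) : ℝ := (max τ 0) ^ s - (max (-τ) 0) ^ s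

lemma auxS_neg (s τ : ℝ) : auxS s (-τ) = - auxS s τ := by
  unfold auxS; rw [neg_neg]; ring

lemma auxS_of_nonneg {s τ : ℝ} (hs : 0 < s) (h : 0 ≤ τ) : auxS s τ = τ ^ s := by
  unfold auxS
  rw [max_eq_left h, max_eq_right (by linarith), Real.zero_rpow hs.ne', sub_zero]

lemma auxS_abs {s : ℝ} (hs : 0 < s) (τ : ℝ) : |auxS s τ| = |τ| ^ s := by
  rcases le_total 0 τ with h | h
  · rw [auxS_of_nonneg hs h, abs_of_nonneg h, abs_of_nonneg (by positivity)]
  · have h' : 0 ≤ -τ := by linarith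
    rw [← abs_neg (auxS s τ), ← auxS_neg, auxS_of_nonneg hs h', abs_of_nonpos h,
      abs_of_nonneg (by positivity)]

lemma auxS_cont {s : ℝ} (hs : 0 < s) : Continuous (auxS s) := by
  unfold auxS
  refine Continuous.sub ?_ ?_ <;>
  exact Continuous.rpow_const (by fun_prop) (fun x => Or.inr hs.le)

noncomputable def auxV (s κ x : ℝ) : ℝ := auxS s (Real.cos (κ * x)) * (1 + auxPsi κ x)

lemma auxV_cont {s : ℝ} (hs : 0 < s) (κ : ℝ) : Continuous (auxV s κ) := by
  unfold auxV
  have h1 := auxS_cont hs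
  have h2 := auxPsi_cont κ
  exact (h1.comp (by fun_prop)).mul (continuous_const.add h2)

lemma auxV_abs {s : ℝ} (hs : 0 < s) (κ x : ℝ) : |auxV s κ x| ≤ 2 * |Real.cos (κ * x)| ^ s := by
  unfold auxV
  have h1 := auxPsi_nonneg κ x
  have h2 := auxPsi_le_one κ x
  rw [abs_mul, auxS_abs hs, abs_of_nonneg (by linarith : 0 ≤ 1 + auxPsi κ x)]
  have : 0 ≤ |Real.cos (κ * x)| ^ s := by positivity
  nlinarith

lemma auxV_abs2 {s : ℝ} (hs : 0 < s) (κ x : ℝ) : |auxV s κ x| ≤ 2 := by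
  have h1 := auxV_abs hs κ x
  have h2 : |Real.cos (κ * x)| ^ s ≤ 1 :=
    Real.rpow_le_one (abs_nonneg _) (Real.abs_cos_le_one _) hs.le
  linarith

lemma auxV_lower {s : ℝ} (hs : 0 < s) {κ x : ℝ} (h : 0 ≤ Real.cos (κ * x)) :
    Real.cos (κ * x) ^ s ≤ auxV s κ x := by
  unfold auxV
  rw [auxS_of_nonneg hs h]
  have h1 := auxPsi_nonneg κ x
  have : 0 ≤ Real.cos (κ * x) ^ s := by positivity
  nlinarith

lemma auxV_neg (s κ x : ℝ) : auxV s κ (-x) = auxV s κ x := by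
  unfold auxV
  rw [auxPsi_congr (κ := κ) (x := -x) (y := x) (by rw [mul_neg, Real.sin_neg, abs_neg]), mul_neg,
    Real.cos_neg]

lemma auxV_refl (s : ℝ) {κ L : ℝ} (hκ : κ * L = Real.pi) (x : ℝ) :
    auxV s κ (L - x) = - auxV s κ x := by
  unfold auxV
  rw [auxPsi_congr (κ := κ) (x := L - x) (y := x) (by rw [mul_sub, hκ, Real.sin_pi_sub]), mul_sub,
    hκ, Real.cos_pi_sub, auxS_neg]
  ring

lemma auxV_zero {s : ℝ} (hs : 0 < s) (κ : ℝ) : auxV s κ 0 = 1 := by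
  unfold auxV
  rw [auxPsi_zero, mul_zero, Real.cos_zero, auxS_of_nonneg hs zero_le_one, Real.one_rpow]; ring

lemma auxV_notHolder {s κ θ C : ℝ} (hs : 0 < s) (hs1 : s < 1) (hκ : 0 < κ) (hθ : 0 < θ) (hθ1 : θ ≤ 1)
    (hev : ∀ᶠ x in nhdsWithin (0:ℝ) (Ioi 0), |auxV s κ x - auxV s κ 0| ≤ C * x ^ θ) : False := by
  obtain ⟨k, hk⟩ := exists_nat_one_div_lt hθ
  refine aux_contra (a := 1 / ((k : ℝ) + 1)) (θ := θ) (C := C + κ ^ 2)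
    (K := (1 / 2) ^ (k + 1) * (2 / Real.pi * κ) ^ (1 / ((k : ℝ) + 1))) (by positivity) hk ?_
  have hpos : 0 < Real.pi / 2 / κ := by positivity
  filter_upwards [hev, Ioc_mem_nhdsGT hpos, Ioc_mem_nhdsGT (zero_lt_one (α := ℝ))] with x h1 h2 h3
  have hx : 0 < x := h2.1
  have hκx : κ * x ≤ Real.pi / 2 := by
    have := h2.2
    rw [le_div_iff₀ hκ] at this; linarith
  have hκx0 : 0 < κ * x := by positivity
  have hc0 : 0 ≤ Real.cos (κ * x) := Real.cos_nonneg_of_mem_Icc ⟨by linarith, hκx⟩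
  have hc1 := Real.cos_le_one (κ * x)
  have hc2 := Real.one_sub_sq_div_two_le_cos (x := κ * x)
  have hcs : Real.cos (κ * x) ≤ Real.cos (κ * x) ^ s := by
    rcases hc0.eq_or_lt with h | h
    · rw [← h, Real.zero_rpow hs.ne']
    · simpa using Real.rpow_le_rpow_of_exponent_ge h hc1 hs1.le
  have p0 := auxPsi_nonneg κ x
  have p1 := auxPsi_le_one κ x
  have hsin := Real.mul_le_sin hκx0.le hκx
  have hxθ : x ^ 2 ≤ x ^ θ := by
    have := Real.rpow_le_rpow_of_exponent_ge hx h3.2 (by linarith : θ ≤ 2)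
    rwa [Real.rpow_two] at this
  have q1 : (1 / 2 : ℝ) ^ (k + 1) * (2 / Real.pi * κ) ^ (1 / ((k : ℝ) + 1)) * x ^ (1 / ((k : ℝ) + 1))
      ≤ auxPsi κ x := by
    refine le_trans ?_ (auxPsi_lower κ x k)
    rw [mul_assoc, ← Real.mul_rpow (by positivity) hx.le]
    have : 2 / Real.pi * κ * x ≤ |Real.sin (κ * x)| := by
      refine le_trans ?_ (le_abs_self _); linarith
    gcongr
  have q2 : auxPsi κ x - κ ^ 2 * x ^ 2 ≤ auxV s κ x - auxV s κ 0 := by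
    rw [auxV_zero hs]
    unfold auxV
    rw [auxS_of_nonneg hs hc0]
    have : Real.cos (κ * x) * (1 + auxPsi κ x) ≤ Real.cos (κ * x) ^ s * (1 + auxPsi κ x) := by
      gcongr
    nlinarith [sq_nonneg (κ * x)]
  have q3 := le_abs_self (auxV s κ x - auxV s κ 0)
  have q4 : κ ^ 2 * x ^ 2 ≤ κ ^ 2 * x ^ θ := by gcongr
  linarith

noncomputable def auxU (s κ x : ℝ) : ℝ := ∫ t in (0:ℝ)..x, auxV s κ t

lemma auxU_deriv {s : ℝ} (hs : 0 < s) (κ x : ℝ) : HasDerivAt (auxU s κ) (auxV s κ x) x :=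
  intervalIntegral.integral_hasDerivAt_right ((auxV_cont hs κ).intervalIntegrable _ _)
    ((auxV_cont hs κ).stronglyMeasurableAtFilter _ _) (auxV_cont hs κ).continuousAt

lemma auxU_sub {s : ℝ} (hs : 0 < s) (κ x y : ℝ) :
    auxU s κ y - auxU s κ x = ∫ t in x..y, auxV s κ t :=
  intervalIntegral.integral_interval_sub_left ((auxV_cont hs κ).intervalIntegrable _ _)
    ((auxV_cont hs κ).intervalIntegrable _ _)

lemma auxU_zero (s κ : ℝ) : auxU s κ 0 = 0 := intervalIntegral.integral_same

lemma auxU_neg {s : ℝ} (κ x : ℝ) : auxU s κ (-x) = - auxU s κ x := by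
  unfold auxU
  have := intervalIntegral.integral_comp_neg (a := 0) (b := x) (fun t => auxV s κ t)
  simp only [auxV_neg, neg_zero] at this
  rw [this, intervalIntegral.integral_symm]

lemma auxU_refl {s κ L : ℝ} (hs : 0 < s) (hκ : κ * L = Real.pi) (x : ℝ) :
    auxU s κ (L - x) = auxU s κ x := by
  have h1 := auxU_sub hs κ x (L - x)
  have h2 := intervalIntegral.integral_comp_sub_left (a := x) (b := L - x) (fun t => auxV s κ t) L
  simp only [auxV_refl s hκ, sub_sub_cancel, intervalIntegral.integral_neg] at h2
  linarith

lemma auxU_refl2 {s κ L : ℝ} (hs : 0 < s) (hκ : κ * L = Real.pi) (x : ℝ) :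
    auxU s κ (2 * (-(L / 2)) - x) = auxU s κ x := by
  have : 2 * (-(L / 2)) - x = -(L - (-x)) := by ring
  rw [this, auxU_neg, auxU_refl hs hκ, auxU_neg, neg_neg]

lemma auxU_per {s κ L : ℝ} (hs : 0 < s) (hκ : κ * L = Real.pi) :
    Function.Periodic (auxU s κ) (2 * L) := by
  intro x
  rw [← auxU_refl hs hκ, ← auxU_refl2 hs hκ x]
  congr 1; ring

lemma auxU_cont {s : ℝ} (hs : 0 < s) (κ : ℝ) : Continuous (auxU s κ) :=
  continuous_iff_continuousAt.2 fun x => (auxU_deriv hs κ x).continuousAt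

lemma auxU_lip {s : ℝ} (hs : 0 < s) (κ x y : ℝ) : |auxU s κ x - auxU s κ y| ≤ 2 * |x - y| := by
  rw [auxU_sub hs]
  have h1 : ∀ t ∈ Set.uIoc y x, ‖auxV s κ t‖ ≤ 2 := fun t _ => auxV_abs2 hs κ t
  exact intervalIntegral.norm_integral_le_of_norm_le_const h1

lemma auxU_bdd {s κ L : ℝ} (hs : 0 < s) (hL : 0 < L) (hκ : κ * L = Real.pi) (x : ℝ) :
    |auxU s κ x| ≤ 4 * L := by
  obtain ⟨k, hk, -⟩ := existsUnique_sub_zsmul_mem_Ico (by linarith : 0 < 2 * L) x 0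
  have e1 := (auxU_per hs hκ).sub_zsmul_eq (x := x) k
  have h := auxU_lip hs κ (x - k • (2 * L)) 0
  rw [e1, auxU_zero, sub_zero, sub_zero, abs_of_nonneg hk.1] at h
  linarith [hk.2]

lemma auxU_lower {s κ a b K : ℝ} (hs : 0 < s) (hab : a ≤ b) (hv : ∀ t ∈ Icc a b, K ≤ auxV s κ t) :
    K * (b - a) ≤ auxU s κ b - auxU s κ a := by
  rw [auxU_sub hs]
  have := intervalIntegral.integral_mono_on hab (intervalIntegrable_const (c := K) (μ := volume))
    ((auxV_cont hs κ).intervalIntegrable a b) hv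
  rw [intervalIntegral.integral_const, smul_eq_mul] at this
  linarith

lemma auxU_upper {s κ x m w : ℝ} (hs : 0 < s) (hs1 : s < 1) (hκ : 0 < κ) :
    |auxU s κ x - auxU s κ w| ≤
      2 * (|Real.cos (κ * m)| + κ * |x - m|) ^ s * |x - w| ^ (1:ℝ) + 2 * κ ^ s * |x - w| ^ (1 + s) := by
  have h1 : ∀ t ∈ Set.uIoc w x, ‖auxV s κ t‖ ≤
      2 * (|Real.cos (κ * m)| + κ * |x - m|) ^ s + 2 * κ ^ s * |x - w| ^ s := by
    intro t ht
    have ht1 : |x - t| ≤ |x - w| := by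
      have := uIoc_subset_uIcc ht
      rw [uIcc_comm] at this
      have := abs_sub_left_of_mem_uIcc this
      rwa [abs_sub_comm t x, abs_sub_comm w x] at this
    have ht2 : |t - m| ≤ |x - w| + |x - m| := by
      have := abs_sub_le t x m
      rw [abs_sub_comm t x] at this
      linarith
    have hc : |Real.cos (κ * t)| ≤ |Real.cos (κ * m)| + κ * |x - m| + κ * |x - w| := by
      have e1 := Real.abs_cos_sub_cos_le (κ * t) (κ * m)
      have e2 := abs_sub_abs_le_abs_sub (Real.cos (κ * t)) (Real.cos (κ * m))
      rw [← mul_sub, abs_mul, abs_of_pos hκ] at e1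
      nlinarith
    refine (auxV_abs hs κ t).trans ?_
    have e3 : |Real.cos (κ * t)| ^ s ≤
        (|Real.cos (κ * m)| + κ * |x - m|) ^ s + (κ * |x - w|) ^ s :=
      (Real.rpow_le_rpow (abs_nonneg _) hc hs.le).trans
        (Real.rpow_add_le_add_rpow (by positivity) (by positivity) hs.le hs1.le)
    rw [Real.mul_rpow hκ.le (abs_nonneg _)] at e3
    linarith
  rw [auxU_sub hs]
  have h2 := intervalIntegral.norm_integral_le_of_norm_le_const h1
  rw [Real.norm_eq_abs] at h2
  refine h2.trans (le_of_eq ?_)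
  rw [Real.rpow_one, Real.rpow_add_of_nonneg (abs_nonneg _) zero_le_one hs.le, Real.rpow_one]
  ring

lemma auxU_memCalpha {s κ L : ℝ} (hs : 0 < s) (hL : 0 < L) (hκ : κ * L = Real.pi) :
    MemCalpha 1 univ (auxU s κ) := by
  have hd : deriv (auxU s κ) = auxV s κ := funext fun x => (auxU_deriv hs κ x).deriv
  unfold MemCalpha
  rw [Nat.floor_one]
  refine ⟨?_, ?_, 4, ?_⟩
  · rw [contDiffOn_univ]
    refine contDiff_one_iff_deriv.2 ⟨fun x => (auxU_deriv hs κ x).differentiableAt, ?_⟩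
    rw [hd]; exact auxV_cont hs κ
  · intro k hk
    rcases Nat.le_one_iff_eq_zero_or_eq_one.1 hk with rfl | rfl
    · exact ⟨4 * L, fun x _ => by rw [iteratedDerivWithin_zero]; exact auxU_bdd hs hL hκ x⟩
    · exact ⟨2, fun x _ => by
        rw [iteratedDerivWithin_one, derivWithin_univ, hd]; exact auxV_abs2 hs κ x⟩
  · rw [iteratedDerivWithin_one, derivWithin_univ, hd]
    intro x _ y _
    have h4 : |auxV s κ x - auxV s κ y| ≤ 4 := by
      have := abs_sub (auxV s κ x) (auxV s κ y)
      linarith [auxV_abs2 hs κ x, auxV_abs2 hs κ y]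
    rw [edist_dist, Real.dist_eq]
    simp only [Nat.cast_one, sub_self, Real.toNNReal_zero, NNReal.coe_zero, ENNReal.rpow_zero, mul_one]
    refine (ENNReal.ofReal_le_ofReal h4).trans (le_of_eq ?_)
    simp

lemma auxU_notMem {s κ ε ρ : ℝ} (hs : 0 < s) (hs1 : s < 1) (hκ : 0 < κ) (hε : 0 < ε) (hρ : 0 < ρ) :
    ¬ MemCalpha (1 + ε) (Icc (-ρ) ρ) (auxU s κ) := by
  rintro ⟨hc, -, C, hH⟩
  have h0m : (0:ℝ) ∈ Icc (-ρ) ρ := ⟨by linarith, hρ.le⟩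
  have hIoc : Ioc 0 ρ ∈ nhdsWithin (0:ℝ) (Ioi 0) := Ioc_mem_nhdsGT hρ
  have hU : UniqueDiffOn ℝ (Icc (-ρ) ρ) := uniqueDiffOn_Icc (by linarith)
  have hdw : ∀ x ∈ Icc (-ρ) ρ, derivWithin (auxU s κ) (Icc (-ρ) ρ) x = auxV s κ x := fun x hx =>
    (auxU_deriv hs κ x).hasDerivWithinAt.derivWithin (hU x hx)
  have h1n : 1 ≤ ⌊1 + ε⌋₊ := Nat.le_floor (by push_cast; linarith)
  by_cases hfl : ⌊1 + ε⌋₊ = 1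
  · rw [hfl, iteratedDerivWithin_one] at hH
    have hε1 : ε ≤ 1 := by
      have := Nat.lt_floor_add_one (1 + ε)
      rw [hfl] at this; push_cast at this; linarith
    refine auxV_notHolder (C := C) hs hs1 hκ hε hε1 ?_
    filter_upwards [hIoc] with x hx2
    have hxm : x ∈ Icc (-ρ) ρ := ⟨by linarith [hx2.1], hx2.2⟩
    have := hH.dist_le hxm h0m
    rw [hdw x hxm, hdw 0 h0m, Real.dist_eq, Real.dist_eq, sub_zero, abs_of_pos hx2.1] at this
    simp only [Nat.cast_one, add_sub_cancel_left] at this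
    rwa [Real.coe_toNNReal _ hε.le] at this
  · have h2n : 2 ≤ ⌊1 + ε⌋₊ := by omega
    have hc1 : ContDiffOn ℝ 1 (derivWithin (auxU s κ) (Icc (-ρ) ρ)) (Icc (-ρ) ρ) :=
      hc.derivWithin hU (by
        have : (2 : WithTop ℕ∞) ≤ ((⌊1 + ε⌋₊ : ℕ) : WithTop ℕ∞) := by exact_mod_cast h2n
        exact le_trans (by norm_num) this)
    have hd : DifferentiableWithinAt ℝ (auxV s κ) (Icc (-ρ) ρ) 0 :=
      ((hc1.differentiableOn one_ne_zero) 0 h0m).congr (fun x hx => (hdw x hx).symm)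
        (hdw 0 h0m).symm
    have hd2 : DifferentiableWithinAt ℝ (auxV s κ) (Ioi 0) 0 :=
      (hd.mono (Ioc_subset_Icc_self.trans (Icc_subset_Icc_left (by linarith)))).mono_of_mem_nhdsWithin
        (s := Ioc 0 ρ) hIoc
    obtain ⟨c, hc⟩ := hd2.isBigO_sub.bound
    refine auxV_notHolder (C := c) hs hs1 hκ one_pos le_rfl ?_
    filter_upwards [hIoc, hc] with x hx2 hx3
    rw [sub_zero, Real.norm_eq_abs, Real.norm_eq_abs, abs_of_pos hx2.1] at hx3
    rwa [Real.rpow_one]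

lemma aux_case_two {s β L : ℝ} (hs0 : 0 < s) (hβ0 : 0 < β) (hβ1 : β < 1)
    (hL : 0 < L) (h : 2 * s = 1 - β) :
    ∃ u f : ℝ → ℝ,
      Function.Periodic u (2 * L) ∧
      MemCalpha (2 * s / (1 - β)) Set.univ u ∧
      MemCalpha β Set.univ f ∧
      (∀ x : ℝ, HasFracLapAt s u x (f (u x))) ∧
      (∀ ε ρ : ℝ, 0 < ε → 0 < ρ →
        ¬ MemCalpha (2 * s / (1 - β) + ε) (Set.Icc (-ρ) ρ) u) := by
  have hα : 2 * s / (1 - β) = 1 := by rw [h]; exact div_self (by linarith)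
  have hs1 : s < 1 := by linarith
  rw [hα]
  have hpi := Real.pi_pos
  obtain ⟨κ, hκdef⟩ : ∃ κ, κ = Real.pi / L := ⟨_, rfl⟩
  have hκ0 : 0 < κ := by rw [hκdef]; positivity
  have hκ : κ * L = Real.pi := by rw [hκdef]; field_simp
  have hI : ∀ x, Integrable (fun y : ℝ => (auxU s κ x - auxU s κ y) / |x - y| ^ (1 + 2 * s)) :=
    fun x => aux_integrable (a := 1) hs0 (by linarith) zero_le_two (auxU_cont hs0 κ)
      (auxU_bdd hs0 hL hκ) x (fun w => by rw [Real.rpow_one]; exact auxU_lip hs0 κ x w)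
  obtain ⟨C1, hC1, H1⟩ := aux_G_diff (s := s) (a₁ := 1) (a₂ := 1 + s) hs0 (by linarith) (by linarith)
    (by linarith) (by linarith) (by linarith)
  have hfin : ∀ x y, -(L / 2) ≤ x → x < y → y ≤ -(L / 2) + L →
      |auxG s (auxU s κ) x - auxG s (auxU s κ) y| ≤
        (C1 * (2 * 3 ^ s + 2 * 4 ^ s) * ((1 / 2 * (1 / 2) ^ s) ^ β)⁻¹) *
          |auxU s κ x - auxU s κ y| ^ β := by
    intro x y hx hxy hy
    obtain ⟨d, hd⟩ : ∃ d, d = y - x := ⟨_, rfl⟩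
    obtain ⟨m, hm⟩ : ∃ m, m = (x + y) / 2 := ⟨_, rfl⟩
    obtain rfl : x = m - d / 2 := by rw [hd, hm]; ring
    obtain rfl : y = m + d / 2 := by linarith
    clear hm hd
    have hd0 : 0 < d := by linarith
    obtain ⟨T, hT⟩ : ∃ T, T = Real.cos (κ * m) := ⟨_, rfl⟩
    have hcos : ∀ t, m - d / 2 ≤ t → t ≤ m + d / 2 → 0 ≤ Real.cos (κ * t) := by
      intro t h1 h2
      refine Real.cos_nonneg_of_mem_Icc ⟨?_, ?_⟩
      · nlinarith
      · nlinarith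
    have hTd : κ * d ≤ 4 * T := by
      have e0 : 0 ≤ κ * d / 2 := by positivity
      have e0' : κ * d / 2 ≤ Real.pi / 2 := by nlinarith
      have e1 := Real.mul_le_sin e0 e0'
      have e2 : Real.sin (κ * d / 2) ≤ T := by
        rw [hT, ← Real.cos_pi_div_two_sub, ← Real.cos_abs (κ * m)]
        refine Real.cos_le_cos_of_nonneg_of_le_pi (abs_nonneg _) (by linarith) ?_
        rw [abs_le]; constructor <;> nlinarith
      have e3 : κ * d / Real.pi ≤ T := by
        refine le_trans (le_of_eq ?_) (e1.trans e2); field_simp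
      rw [div_le_iff₀ hpi] at e3
      have e4 : 0 ≤ T := by rw [hT]; exact hcos m (by linarith) (by linarith)
      nlinarith [Real.pi_le_four]
    have hT0 : 0 < T := by
      have : 0 < κ * d := by positivity
      linarith
    have hT1 : T ≤ 1 := by rw [hT]; exact Real.cos_le_one _
    have habs : |m - d / 2 - (m + d / 2)| = d := by
      rw [show m - d / 2 - (m + d / 2) = -d by ring, abs_neg, abs_of_pos hd0]
    have hup : ∀ z, |z - m| = d / 2 → ∀ w, |auxU s κ z - auxU s κ w| ≤
        2 * (3 * T) ^ s * |z - w| ^ (1:ℝ) + 2 * κ ^ s * |z - w| ^ (1 + s) := by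
      intro z hz w
      refine (auxU_upper (m := m) hs0 hs1 hκ0).trans ?_
      rw [hz, ← hT, abs_of_pos hT0]
      gcongr
      linarith
    have k := H1 _ hI (2 * (3 * T) ^ s) (2 * κ ^ s) (by positivity) (by positivity)
      (m - d / 2) (m + d / 2) (by rw [habs]; exact hd0)
      (hup _ (by rw [sub_right_comm, sub_self, zero_sub, abs_neg, abs_of_pos (by linarith)]))
      (hup _ (by rw [add_sub_cancel_left, abs_of_pos (by linarith)]))
    rw [habs] at k
    have hlow : (1 / 2 * (1 / 2) ^ s) * (T ^ s * d) ≤ auxU s κ (m + d / 2) - auxU s κ (m - d / 2) := by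
      have a1 := auxU_lower (κ := κ) (a := m - d / 2) (b := m - d / 4) (K := 0) hs0 (by linarith)
        (fun t ht => (Real.rpow_nonneg (hcos t ht.1 (by linarith [ht.2])) s).trans
          (auxV_lower hs0 (hcos t ht.1 (by linarith [ht.2]))))
      have a2 := auxU_lower (κ := κ) (a := m + d / 4) (b := m + d / 2) (K := 0) hs0 (by linarith)
        (fun t ht => (Real.rpow_nonneg (hcos t (by linarith [ht.1]) ht.2) s).trans
          (auxV_lower hs0 (hcos t (by linarith [ht.1]) ht.2)))
      have a3 := auxU_lower (κ := κ) (a := m - d / 4) (b := m + d / 4) (K := (1 / 2 * T) ^ s) hs0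
        (by linarith)
        (fun t ht => by
          obtain ⟨t1, t2⟩ := ht
          have c0 := hcos t (by linarith) (by linarith)
          refine le_trans (Real.rpow_le_rpow (by positivity) ?_ hs0.le) (auxV_lower hs0 c0)
          have c1 := hcos (2 * t - m) (by linarith) (by linarith)
          have c2 := Real.cos_add_cos (κ * (2 * t - m)) (κ * m)
          rw [← hT, show (κ * (2 * t - m) + κ * m) / 2 = κ * t by ring] at c2
          have c3 := Real.cos_le_one ((κ * (2 * t - m) - κ * m) / 2)
          nlinarith)
      rw [Real.mul_rpow (by norm_num) hT0.le] at a3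
      linarith
    have hTs : T ^ s ≤ (T ^ s) ^ β := by
      have := Real.rpow_le_rpow_of_exponent_ge (x := T ^ s) (by positivity)
        (Real.rpow_le_one hT0.le hT1 hs0.le) hβ1.le
      rwa [Real.rpow_one] at this
    have hkey : 2 * (3 * T) ^ s * d ^ (1 - 2 * s) + 2 * κ ^ s * d ^ (1 + s - 2 * s) ≤
        (2 * 3 ^ s + 2 * 4 ^ s) * (T ^ s * d) ^ β := by
      have e1 : 1 - 2 * s = β := by linarith
      have e2 : 1 + s - 2 * s = s + β := by linarith
      have e3 : κ ^ s * d ^ s ≤ 4 ^ s * T ^ s := by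
        rw [← Real.mul_rpow hκ0.le hd0.le, ← Real.mul_rpow (by norm_num) hT0.le]
        exact Real.rpow_le_rpow (by positivity) hTd hs0.le
      rw [e1, e2, Real.rpow_add hd0, Real.mul_rpow (by norm_num) hT0.le,
        Real.mul_rpow (by positivity) hd0.le]
      calc 2 * (3 ^ s * T ^ s) * d ^ β + 2 * κ ^ s * (d ^ s * d ^ β)
          = 2 * (3 ^ s * T ^ s) * d ^ β + 2 * (κ ^ s * d ^ s) * d ^ β := by ring
        _ ≤ 2 * (3 ^ s * T ^ s) * d ^ β + 2 * (4 ^ s * T ^ s) * d ^ β := by gcongr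
        _ = (2 * 3 ^ s + 2 * 4 ^ s) * (T ^ s * d ^ β) := by ring
        _ ≤ _ := by gcongr
    have hPpos : 0 < T ^ s * d := by positivity
    have hmu : (0:ℝ) < 1 / 2 * (1 / 2) ^ s := by positivity
    rw [abs_sub_comm (auxU s κ (m - d / 2)), abs_of_pos (lt_of_lt_of_le (by positivity) hlow)]
    set μ : ℝ := 1 / 2 * (1 / 2) ^ s with hμ
    have l2 : μ ^ β * (T ^ s * d) ^ β ≤ (auxU s κ (m + d / 2) - auxU s κ (m - d / 2)) ^ β := by
      rw [← Real.mul_rpow hmu.le hPpos.le]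
      exact Real.rpow_le_rpow (by positivity) hlow hβ0.le
    have l3 : (T ^ s * d) ^ β ≤ (μ ^ β)⁻¹ * (auxU s κ (m + d / 2) - auxU s κ (m - d / 2)) ^ β := by
      rw [inv_mul_eq_div, le_div_iff₀ (by positivity)]; linarith
    calc _ ≤ _ := k
      _ ≤ C1 * ((2 * 3 ^ s + 2 * 4 ^ s) * (T ^ s * d) ^ β) := mul_le_mul_of_nonneg_left hkey hC1.le
      _ ≤ C1 * ((2 * 3 ^ s + 2 * 4 ^ s) *
            ((μ ^ β)⁻¹ * (auxU s κ (m + d / 2) - auxU s κ (m - d / 2)) ^ β)) := by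
          refine mul_le_mul_of_nonneg_left (mul_le_mul_of_nonneg_left l3 (by positivity)) hC1.le
      _ = _ := by ring
  obtain ⟨f, hf, hfu⟩ := aux_final hβ0 hβ1 hL (by positivity) (auxU_per hs0 hκ)
    (auxU_refl2 hs0 hκ) (auxU_cont hs0 κ) hI hfin
  exact ⟨auxU s κ, f, auxU_per hs0 hκ, auxU_memCalpha hs0 hL hκ, hf, hfu,
    fun ε ρ hε hρ => auxU_notMem hs0 hs1 hκ0 hε hρ⟩

theorem stmt0 (s β L : ℝ) (hs0 : 0 < s) (hs1 : s < 1) (hβ0 : 0 < β) (hβ1 : β < 1)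
    (hL : 0 < L) (h : 2 * s ≤ 1 - β) :
    ∃ u f : ℝ → ℝ,
      Function.Periodic u (2 * L) ∧
      MemCalpha (2 * s / (1 - β)) Set.univ u ∧
      MemCalpha β Set.univ f ∧
      (∀ x : ℝ, HasFracLapAt s u x (f (u x))) ∧
      (∀ ε ρ : ℝ, 0 < ε → 0 < ρ →
        ¬ MemCalpha (2 * s / (1 - β) + ε) (Set.Icc (-ρ) ρ) u) := by
  rcases h.lt_or_eq with h | h
  · exact aux_case_one hs0 hβ0 hβ1 hL h
  · exact aux_case_two hs0 hβ0 hβ1 hL h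
end

section
/- Let 0<s<1, 0<β<1, and L>0 with 2s > 1-β. Then there exists a 2L-periodic function u ∈ C^{2s+β}(ℝ) and a function f ∈ C^β(ℝ) such that (-Δ)^s u(x) = f(u(x)) for every x ∈ ℝ, and such that for every ε>0 and every ρ>0, u restricted to [-ρ,ρ] does not belong to C^{2s+β+ε}([-ρ,ρ]). -/
open MeasureTheory Filter Set

lemma poisson_hasSum (r x : ℝ) (hr0 : 0 < r) (hr1 : r < 1) :
    HasSum (fun k : ℕ => r ^ (2 * k + 1) * Real.sin ((2 * k + 1 : ℝ) * x))
      (r * (1 + r ^ 2) * Real.sin x / ((1 - r ^ 2) ^ 2 + 4 * r ^ 2 * Real.sin x ^ 2)) := by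
  set z : ℂ := r * Complex.exp (x * Complex.I) with hz
  have hnz : ‖z‖ = r := by
    rw [hz, norm_mul, Complex.norm_exp_ofReal_mul_I]; simp [abs_of_pos hr0]
  have hnz2 : ‖z ^ 2‖ < 1 := by
    rw [norm_pow, hnz]; nlinarith
  have h1 := (hasSum_geometric_of_norm_lt_one hnz2).mul_left z
  have h2 := Complex.hasSum_im h1
  have hzr : z = ⟨r * Real.cos x, r * Real.sin x⟩ := by
    apply Complex.ext
    · rw [hz, Complex.re_ofReal_mul, Complex.exp_ofReal_mul_I_re]
    · rw [hz, Complex.im_ofReal_mul, Complex.exp_ofReal_mul_I_im]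
  convert h2 using 1
  · funext k
    have : z * (z ^ 2) ^ k = ((r ^ (2 * k + 1) : ℝ) : ℂ) * Complex.exp (((2 * k + 1 : ℝ) * x : ℝ) * Complex.I) := by
      rw [← pow_mul, ← pow_succ', hz, mul_pow, ← Complex.exp_nat_mul]
      push_cast
      congr 2
      ring
    rw [this, Complex.im_ofReal_mul, Complex.exp_ofReal_mul_I_im]
  · have hsc := Real.sin_sq_add_cos_sq x
    have hD : Complex.normSq (1 - z ^ 2) = (1 - r ^ 2) ^ 2 + 4 * r ^ 2 * Real.sin x ^ 2 := by
      rw [hzr, Complex.normSq_apply]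
      simp [pow_two]
      have : Real.cos x ^ 2 = 1 - Real.sin x ^ 2 := by linarith
      generalize Real.sin x = S at *
      generalize Real.cos x = C at *
      have e : C * C = 1 - S * S := by nlinarith
      linear_combination (-2 * r ^ 2 + r^4 * (C*C + 1 + S * S) ) * e
    rw [Complex.mul_im, Complex.inv_re, Complex.inv_im, hD]
    have hD0 : (1 - r ^ 2) ^ 2 + 4 * r ^ 2 * Real.sin x ^ 2 ≠ 0 := by
      have : 0 < (1 - r ^ 2) := by nlinarith
      positivity
    rw [hzr]
    simp only [pow_two, Complex.sub_re, Complex.sub_im, Complex.mul_re, Complex.mul_im, Complex.one_re, Complex.one_im]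
    rw [mul_div_assoc', mul_div_assoc', ← add_div]
    congr 1
    · generalize Real.sin x = S at *
      generalize Real.cos x = C at *
      linear_combination (-r ^ 3 * S) * hsc

lemma kernel_diff (r a b q : ℝ) (hr0 : 0 < r) (hr1 : r < 1) (hq0 : 0 < q) (hq1 : q ≤ 1) :
    |r * (1 + r ^ 2) * a / ((1 - r ^ 2) ^ 2 + 4 * r ^ 2 * a ^ 2)
      - r * (1 + r ^ 2) * b / ((1 - r ^ 2) ^ 2 + 4 * r ^ 2 * b ^ 2)|
      ≤ 2 * |a - b| ^ q * r ^ q * (1 - r ^ 2) ^ (-(1 + q)) := by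
  set d := 1 - r ^ 2 with hd
  have hd0 : 0 < d := by nlinarith
  have hr2 : r ^ 2 = 1 - d := by rw [hd]; ring
  have hd1 : d ≤ 1 := by nlinarith
  have hr21 : 1 + r ^ 2 ≤ 2 := by nlinarith
  have hDa : 0 < d ^ 2 + 4 * r ^ 2 * a ^ 2 := by positivity
  have hDb : 0 < d ^ 2 + 4 * r ^ 2 * b ^ 2 := by positivity
  set X := |r * (1 + r ^ 2) * a / (d ^ 2 + 4 * r ^ 2 * a ^ 2)
      - r * (1 + r ^ 2) * b / (d ^ 2 + 4 * r ^ 2 * b ^ 2)| with hX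
  have hX0 : 0 ≤ X := abs_nonneg _
  have hone : ∀ w : ℝ, |r * (1 + r ^ 2) * w / (d ^ 2 + 4 * r ^ 2 * w ^ 2)| ≤ 1 / d / 2 := by
    intro w
    have hDw : 0 < d ^ 2 + 4 * r ^ 2 * w ^ 2 := by positivity
    rw [abs_div, abs_of_pos hDw, abs_mul, abs_of_pos (by positivity : 0 < r * (1 + r ^ 2)), div_div,
      div_le_div_iff₀ hDw (by positivity)]
    have h1 : 4 * r * d * |w| ≤ d ^ 2 + 4 * r ^ 2 * w ^ 2 := by
      rw [← sq_abs w]; nlinarith [sq_nonneg (d - 2 * r * |w|)]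
    have h2 : 0 ≤ r * d * |w| := by positivity
    nlinarith
  have hA : X ≤ 1 / d := by
    have := abs_sub (r * (1 + r ^ 2) * a / (d ^ 2 + 4 * r ^ 2 * a ^ 2)) (r * (1 + r ^ 2) * b / (d ^ 2 + 4 * r ^ 2 * b ^ 2))
    have := hone a
    have := hone b
    linarith
  have hB : X ≤ 2 * r * |a - b| / d ^ 2 := by
    have e : r * (1 + r ^ 2) * a / (d ^ 2 + 4 * r ^ 2 * a ^ 2)
      - r * (1 + r ^ 2) * b / (d ^ 2 + 4 * r ^ 2 * b ^ 2) =
      (r * (1 + r ^ 2)) * (a - b) * (d ^ 2 - 4 * r ^ 2 * a * b) / ((d ^ 2 + 4 * r ^ 2 * a ^ 2) * (d ^ 2 + 4 * r ^ 2 * b ^ 2)) := by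
      field_simp
      ring
    rw [hX, e, abs_div, abs_of_pos (mul_pos hDa hDb), abs_mul, abs_mul, abs_of_pos (by positivity : 0 < r * (1 + r ^ 2)),
      div_le_div_iff₀ (mul_pos hDa hDb) (by positivity)]
    have h1 : |d ^ 2 - 4 * r ^ 2 * a * b| * d ^ 2 ≤ (d ^ 2 + 4 * r ^ 2 * a ^ 2) * (d ^ 2 + 4 * r ^ 2 * b ^ 2) := by
      have : |d ^ 2 - 4 * r ^ 2 * a * b| ≤ d ^ 2 + 2 * r ^ 2 * a ^ 2 + 2 * r ^ 2 * b ^ 2 := by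
        rw [abs_le]
        constructor <;> nlinarith [mul_nonneg (sq_nonneg r) (sq_nonneg (a - b)), mul_nonneg (sq_nonneg r) (sq_nonneg (a + b)), sq_nonneg d]
      have h3 : 0 ≤ d ^ 2 * (r ^ 2 * a ^ 2) := by positivity
      have h4 : 0 ≤ d ^ 2 * (r ^ 2 * b ^ 2) := by positivity
      have h5 : 0 ≤ (r ^ 2 * a ^ 2) * (r ^ 2 * b ^ 2) := by positivity
      nlinarith [mul_le_mul_of_nonneg_right this (sq_nonneg d)]
    calc r * (1 + r ^ 2) * |a - b| * |d ^ 2 - 4 * r ^ 2 * a * b| * d ^ 2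
        = (1 + r ^ 2) * (r * |a - b|) * (|d ^ 2 - 4 * r ^ 2 * a * b| * d ^ 2) := by ring
      _ ≤ 2 * (r * |a - b|) * ((d ^ 2 + 4 * r ^ 2 * a ^ 2) * (d ^ 2 + 4 * r ^ 2 * b ^ 2)) := by
        gcongr
      _ = _ := by ring
  calc X = X ^ q * X ^ (1 - q) := by
        rcases hX0.eq_or_lt with h | h
        · rw [← h, Real.zero_rpow hq0.ne']; simp
        · rw [← Real.rpow_add h]; simp
    _ ≤ (2 * r * |a - b| / d ^ 2) ^ q * (1 / d) ^ (1 - q) := by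
        have : 0 ≤ 1 - q := by linarith
        gcongr
    _ = 2 ^ q * |a - b| ^ q * r ^ q * d ^ (-(1 + q)) := by
        rw [Real.div_rpow (by positivity) (by positivity), Real.mul_rpow (by positivity) (by positivity),
          Real.mul_rpow (by positivity) (by positivity), one_div, Real.inv_rpow hd0.le, ← Real.rpow_neg hd0.le,
          ← Real.rpow_natCast d 2, ← Real.rpow_mul hd0.le, div_eq_mul_inv, ← Real.rpow_neg hd0.le, mul_assoc, ← Real.rpow_add hd0]
        push_cast
        rw [show -(2 * q) + -(1 - q) = -(1 + q) by ring]
        ring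
    _ ≤ _ := by
        gcongr
        calc (2:ℝ) ^ q ≤ 2 ^ (1:ℝ) := Real.rpow_le_rpow_of_exponent_le (by norm_num) hq1
          _ = 2 := by simp

lemma odd_summable (p : ℝ) (hp : 0 < p) :
    Summable (fun k : ℕ => (2 * k + 1 : ℝ) ^ (-(1 + p))) := by
  have h1 : Summable (fun k : ℕ => ((k : ℝ)) ^ (-(1 + p))) :=
    Real.summable_nat_rpow.2 (by linarith)
  have hinj : Function.Injective (fun k : ℕ => 2 * k + 1) := fun a b h => by
    simp only at h; omega
  have h2 := h1.comp_injective hinj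
  refine h2.congr (fun k => ?_)
  simp

lemma laplace_term (p x : ℝ) (hp : 0 < p) (k : ℕ) :
    IntegrableOn (fun t : ℝ => t ^ p * (Real.exp (-t) ^ (2 * k + 1) * Real.sin ((2 * k + 1 : ℝ) * x))) (Ioi 0) ∧
    ∫ t in Ioi (0:ℝ), t ^ p * (Real.exp (-t) ^ (2 * k + 1) * Real.sin ((2 * k + 1 : ℝ) * x)) =
      Real.Gamma (1 + p) * ((2 * k + 1 : ℝ) ^ (-(1 + p)) * Real.sin ((2 * k + 1 : ℝ) * x)) := by
  have hk : (0:ℝ) < 2 * k + 1 := by positivity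
  have e : (fun t : ℝ => t ^ p * (Real.exp (-t) ^ (2 * k + 1) * Real.sin ((2 * k + 1 : ℝ) * x))) =
      fun t => (t ^ ((1 + p) - 1) * Real.exp (-((2 * k + 1) * t))) * Real.sin ((2 * k + 1 : ℝ) * x) := by
    funext t
    rw [← Real.exp_nat_mul, show 1 + p - 1 = p by ring]
    push_cast
    rw [show (2 * (k:ℝ) + 1) * -t = -((2 * k + 1) * t) by ring]
    ring
  rw [e]
  constructor
  · apply Integrable.mul_const
    have := integrableOn_rpow_mul_exp_neg_mul_rpow (p := 1) (s := p) (b := 2 * k + 1) (by linarith) one_pos hk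
    refine this.congr_fun (fun t _ => ?_) measurableSet_Ioi
    simp only [Real.rpow_one, neg_mul, add_sub_cancel_left]
  · rw [integral_mul_const, Real.integral_rpow_mul_exp_neg_mul_Ioi (by linarith) hk, one_div,
      Real.inv_rpow hk.le, ← Real.rpow_neg hk.le]
    ring

lemma laplace_series (p x : ℝ) (hp : 0 < p) :
    Real.Gamma (1 + p) * ∑' k : ℕ, (2 * k + 1 : ℝ) ^ (-(1 + p)) * Real.sin ((2 * k + 1 : ℝ) * x) =
    ∫ t in Ioi (0:ℝ), t ^ p * (Real.exp (-t) * (1 + Real.exp (-t) ^ 2) * Real.sin x /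
      ((1 - Real.exp (-t) ^ 2) ^ 2 + 4 * Real.exp (-t) ^ 2 * Real.sin x ^ 2)) := by
  have hsum := hasSum_integral_of_summable_integral_norm (μ := volume.restrict (Ioi (0:ℝ)))
    (F := fun (k : ℕ) (t : ℝ) => t ^ p * (Real.exp (-t) ^ (2 * k + 1) * Real.sin ((2 * k + 1 : ℝ) * x)))
    (fun k => (laplace_term p x hp k).1) ?_
  · have h2 := hsum.tsum_eq
    simp only [fun k => (laplace_term p x hp k).2] at h2
    rw [tsum_mul_left] at h2
    rw [h2]
    refine setIntegral_congr_fun measurableSet_Ioi (fun t ht => ?_)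
    rw [tsum_mul_left, (poisson_hasSum (Real.exp (-t)) x (Real.exp_pos _) (by simpa using ht)).tsum_eq]
  · have hs := (odd_summable p hp).mul_left (Real.Gamma (1 + p))
    refine Summable.of_nonneg_of_le (fun k => integral_nonneg (fun t => norm_nonneg _)) (fun k => ?_) hs
    have hk : (0:ℝ) < 2 * k + 1 := by positivity
    have i1 := integrableOn_rpow_mul_exp_neg_mul_rpow (p := 1) (s := p) (b := 2 * k + 1) (by linarith) one_pos hk
    have i2 := Real.integral_rpow_mul_exp_neg_mul_Ioi (a := 1 + p) (r := 2 * k + 1) (by linarith) hk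
    rw [one_div, Real.inv_rpow hk.le, ← Real.rpow_neg hk.le] at i2
    rw [mul_comm (Real.Gamma _), ← i2]
    refine setIntegral_mono_on (laplace_term p x hp k).1.norm ?_ measurableSet_Ioi ?_
    · refine i1.congr_fun (fun t _ => ?_) measurableSet_Ioi
      simp only [Real.rpow_one, neg_mul, add_sub_cancel_left]
    · intro t ht
      have ht' : (0:ℝ) < t := ht
      rw [norm_mul, norm_mul, Real.norm_of_nonneg (by positivity), Real.norm_of_nonneg (by positivity),
        ← Real.exp_nat_mul, show 1 + p - 1 = p by ring]
      push_cast
      rw [show (2 * (k:ℝ) + 1) * -t = -((2 * k + 1) * t) by ring]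
      gcongr
      exact mul_le_of_le_one_right (by positivity) (by simpa using Real.abs_sin_le_one _)

lemma series_holder (p q : ℝ) (hq0 : 0 < q) (hq1 : q ≤ 1) (hpq : q < p) :
    ∃ K : ℝ, 0 ≤ K ∧ ∀ x y : ℝ,
      |(∑' k : ℕ, (2 * k + 1 : ℝ) ^ (-(1 + p)) * Real.sin ((2 * k + 1 : ℝ) * x)) -
       (∑' k : ℕ, (2 * k + 1 : ℝ) ^ (-(1 + p)) * Real.sin ((2 * k + 1 : ℝ) * y))|
       ≤ K * |Real.sin x - Real.sin y| ^ q := by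
  have hp : 0 < p := hq0.trans hpq
  have hG : 0 < Real.Gamma (1 + p) := Real.Gamma_pos_of_pos (by linarith)
  set W : ℝ → ℝ := fun t => 2 * ((t ^ (p - q - 1) + 4 * t ^ (p - q) + 4 * t ^ (p - q + 1)) * Real.exp (-q * t)) with hW
  have hWi : IntegrableOn W (Ioi 0) := by
    have h : ∀ s : ℝ, -1 < s → IntegrableOn (fun t : ℝ => t ^ s * Real.exp (-q * t)) (Ioi 0) := by
      intro s hs
      refine (integrableOn_rpow_mul_exp_neg_mul_rpow (p := 1) (s := s) hs one_pos hq0).congr_fun (fun t _ => ?_) measurableSet_Ioi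
      simp only [Real.rpow_one, neg_mul, add_sub_cancel_left]
    have : IntegrableOn _ (Ioi (0:ℝ)) := (((h (p - q - 1) (by linarith)).add ((h (p - q) (by linarith)).const_mul 4)).add ((h (p - q + 1) (by linarith)).const_mul 4)).const_mul 2
    refine this.congr_fun (fun t _ => ?_) measurableSet_Ioi
    simp only [hW, Pi.add_apply]
    ring
  set I := ∫ t in Ioi (0:ℝ), W t with hI
  have hI0 : 0 ≤ I := setIntegral_nonneg measurableSet_Ioi (fun t ht => by
    have : (0:ℝ) < t := ht
    simp only [hW]; positivity)
  refine ⟨I / Real.Gamma (1 + p), by positivity, fun x y => ?_⟩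
  set Q : ℝ → ℝ → ℝ := fun x t => t ^ p * (Real.exp (-t) * (1 + Real.exp (-t) ^ 2) * Real.sin x /
      ((1 - Real.exp (-t) ^ 2) ^ 2 + 4 * Real.exp (-t) ^ 2 * Real.sin x ^ 2)) with hQ
  have hmeas : ∀ x, AEStronglyMeasurable (Q x) (volume.restrict (Ioi 0)) := by
    intro x
    apply Measurable.aestronglyMeasurable
    simp only [hQ]
    fun_prop
  have hdiff : ∀ x y t : ℝ, 0 < t → |Q x t - Q y t| ≤ W t * |Real.sin x - Real.sin y| ^ q := by
    intro x y t ht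
    simp only [hQ]
    rw [← mul_sub, abs_mul, abs_of_nonneg (by positivity : (0:ℝ) ≤ t ^ p)]
    have h1 := kernel_diff (Real.exp (-t)) (Real.sin x) (Real.sin y) q (Real.exp_pos _) (by simpa using ht) hq0 hq1
    have hd : t / (1 + 2 * t) ≤ 1 - Real.exp (-t) ^ 2 := by
      have : Real.exp (-t) ^ 2 = (Real.exp (2 * t))⁻¹ := by
        rw [← Real.exp_neg, ← Real.exp_nat_mul]; congr 1; push_cast; ring
      have h3 : (Real.exp (2 * t))⁻¹ ≤ (2 * t + 1)⁻¹ := by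
        gcongr
        exact Real.add_one_le_exp _
      rw [this]
      have : t / (1 + 2 * t) ≤ 1 - (2 * t + 1)⁻¹ := by
        rw [← sub_nonneg]
        have : 1 - (2 * t + 1)⁻¹ - t / (1 + 2 * t) = t / (1 + 2 * t) := by field_simp; ring
        rw [this]; positivity
      linarith
    have hd2 : (1 - Real.exp (-t) ^ 2) ^ (-(1 + q)) ≤ (1 + 2 * t) ^ 2 * t ^ (-(1 + q)) := by
      calc (1 - Real.exp (-t) ^ 2) ^ (-(1 + q)) ≤ (t / (1 + 2 * t)) ^ (-(1 + q)) :=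
            Real.rpow_le_rpow_of_nonpos (by positivity) hd (by linarith)
        _ = (1 + 2 * t) ^ (1 + q) * t ^ (-(1 + q)) := by
            rw [Real.div_rpow ht.le (by positivity), Real.rpow_neg (by positivity : 0 ≤ 1 + 2 * t)]
            field_simp
        _ ≤ _ := by
            gcongr
            rw [← Real.rpow_natCast]
            exact Real.rpow_le_rpow_of_exponent_le (by linarith) (by push_cast; linarith)
    have e1 : Real.exp (-t) ^ q = Real.exp (-q * t) := by
      rw [← Real.exp_mul]; congr 1; ring
    rw [e1] at h1
    calc _ ≤ t ^ p * (2 * |Real.sin x - Real.sin y| ^ q * Real.exp (-q * t) * ((1 + 2 * t) ^ 2 * t ^ (-(1 + q)))) := by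
          gcongr
          exact h1.trans (by gcongr)
      _ = _ := by
          have e2 : t ^ (p - q - 1) = t ^ p * t ^ (-(1 + q)) := by
            rw [← Real.rpow_add ht]; congr 1; ring
          have e3 : t ^ (p - q) = t ^ (p - q - 1) * t := by
            rw [← Real.rpow_add_one ht.ne']; congr 1; ring
          have e4 : t ^ (p - q + 1) = t ^ (p - q - 1) * t * t := by
            rw [← Real.rpow_add_one ht.ne', ← Real.rpow_add_one ht.ne']; congr 1; ring
          simp only [hW]
          rw [e4, e3, e2]; ring
  have hQi : ∀ x, IntegrableOn (Q x) (Ioi 0) := by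
    intro x
    refine Integrable.mono' (hWi.mul_const (|Real.sin x - Real.sin 0| ^ q)) (hmeas x) ?_
    refine (ae_restrict_iff' measurableSet_Ioi).2 (Eventually.of_forall fun t ht => ?_)
    have := hdiff x 0 t ht
    have h0 : Q 0 t = 0 := by simp [hQ]
    rw [h0, sub_zero] at this
    exact this
  have h1 := laplace_series p x hp
  have h2 := laplace_series p y hp
  rw [div_mul_eq_mul_div, le_div_iff₀ hG, ← abs_of_pos hG, ← abs_mul, sub_mul, mul_comm _ (Real.Gamma _), h1,
    mul_comm _ (Real.Gamma _), h2, ← integral_sub (hQi x) (hQi y), hI, ← integral_mul_const]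
  refine (abs_integral_le_integral_abs).trans ?_
  refine setIntegral_mono_on ((hQi x).sub (hQi y)).abs (hWi.mul_const _) measurableSet_Ioi ?_
  intro t ht
  exact hdiff x y t ht

lemma kernel_tail (s ε : ℝ) (hs : 0 < s) (hε : 0 < ε) :
    IntegrableOn (fun t : ℝ => (|t| ^ (1 + 2 * s))⁻¹) {t : ℝ | ε < |t|} := by
  have hm : MeasurableSet {t : ℝ | ε < |t|} := measurableSet_lt measurable_const (by fun_prop)
  have h1 : Integrable (fun t : ℝ => (1 + ‖t‖) ^ (-(1 + 2 * s))) :=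
    integrable_one_add_norm (by simp; linarith)
  have h2 := (h1.const_mul (((1 + ε) / ε) ^ (1 + 2 * s))).integrableOn (s := {t : ℝ | ε < |t|})
  refine Integrable.mono' h2 (Measurable.aestronglyMeasurable (by fun_prop)) ?_
  refine (ae_restrict_iff' hm).2 (Eventually.of_forall fun t ht => ?_)
  have ht' : ε < |t| := ht
  have ht0 : 0 < |t| := hε.trans ht'
  rw [Real.norm_of_nonneg (by positivity), Real.rpow_neg (by positivity), Real.norm_eq_abs,
    ← Real.inv_rpow ht0.le, ← Real.inv_rpow (by positivity), ← Real.mul_rpow (by positivity) (by positivity)]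
  apply Real.rpow_le_rpow (by positivity) _ (by linarith)
  rw [inv_le_iff_one_le_mul₀ ht0]
  have e : (1 + ε) / ε * (1 + |t|)⁻¹ * |t| = ((1 + ε) * |t|) / (ε * (1 + |t|)) := by
    field_simp
  rw [e, one_le_div (by positivity)]
  nlinarith

lemma kernel_cos (s ω : ℝ) (hs0 : 0 < s) (hs1 : s < 1) :
    Integrable (fun t : ℝ => (1 - Real.cos (ω * t)) / |t| ^ (1 + 2 * s)) := by
  have hm : MeasurableSet {t : ℝ | 1 < |t|} := measurableSet_lt measurable_const (by fun_prop)
  have hmeas : Measurable (fun t : ℝ => (1 - Real.cos (ω * t)) / |t| ^ (1 + 2 * s)) := by fun_prop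
  rw [← integrableOn_univ, ← union_compl_self {t : ℝ | 1 < |t|}, integrableOn_union]
  constructor
  · refine Integrable.mono' ((kernel_tail s 1 hs0 one_pos).const_mul 2) hmeas.aestronglyMeasurable ?_
    refine Eventually.of_forall fun t => ?_
    have h1 := Real.cos_le_one (ω * t)
    have h2 := Real.neg_one_le_cos (ω * t)
    rw [div_eq_mul_inv, Real.norm_of_nonneg (mul_nonneg (by linarith) (by positivity))]
    gcongr
    linarith
  · have hset : {t : ℝ | 1 < |t|}ᶜ = Icc (-1) 1 := by
      ext t; simp [abs_le]
    rw [hset]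
    have hi : IntervalIntegrable (fun t : ℝ => |t| ^ (1 - 2 * s)) volume (-1) 1 := by
      apply intervalIntegrable_of_even (by simp)
      intro x hx
      refine (intervalIntegral.intervalIntegrable_rpow' (r := 1 - 2 * s) (a := 0) (b := x) (by linarith)).congr ?_
      intro t ht
      rw [uIoc_of_le hx.le] at ht
      simp only [abs_of_pos ht.1]
    rw [intervalIntegrable_iff_integrableOn_Icc_of_le (by norm_num)] at hi
    refine Integrable.mono' (hi.const_mul (ω ^ 2 / 2)) hmeas.aestronglyMeasurable ?_
    refine Eventually.of_forall fun t => ?_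
    have h1 := Real.cos_le_one (ω * t)
    have h2 := Real.one_sub_sq_div_two_le_cos (x := ω * t)
    rw [Real.norm_of_nonneg (div_nonneg (by linarith) (by positivity))]
    by_cases ht : t = 0
    · subst ht; simp; positivity
    have ht0 : 0 < |t| := abs_pos.2 ht
    rw [div_le_iff₀ (by positivity), mul_assoc, ← Real.rpow_add ht0, show 1 - 2 * s + (1 + 2 * s) = (2:ℕ) by push_cast; ring,
      Real.rpow_natCast, sq_abs]
    linarith

lemma kernel_cos_scale (s ω : ℝ) (hω : 0 < ω) :
    ∫ t : ℝ, (1 - Real.cos (ω * t)) / |t| ^ (1 + 2 * s) =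
      ω ^ (2 * s) * ∫ t : ℝ, (1 - Real.cos t) / |t| ^ (1 + 2 * s) := by
  have h := Measure.integral_comp_mul_left (fun t : ℝ => (1 - Real.cos t) / |t| ^ (1 + 2 * s)) ω
  have e : (fun t : ℝ => (1 - Real.cos (ω * t)) / |t| ^ (1 + 2 * s)) =
      fun t => ω ^ (1 + 2 * s) * ((1 - Real.cos (ω * t)) / |ω * t| ^ (1 + 2 * s)) := by
    funext t
    rw [abs_mul, abs_of_pos hω, Real.mul_rpow hω.le (abs_nonneg _)]
    have : ω ^ (1 + 2 * s) ≠ 0 := by positivity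
    rw [mul_div_assoc', mul_div_mul_left _ _ this]
  rw [e, integral_const_mul, h, smul_eq_mul, ← mul_assoc, abs_of_pos (by positivity), Real.rpow_add hω, Real.rpow_one]
  field_simp

lemma term_integral (s ω x ε : ℝ) (hs0 : 0 < s) (hs1 : s < 1) (hε : 0 < ε) :
    ∫ t in {t : ℝ | ε < |t|}, (Real.sin (ω * x) - Real.sin (ω * (x + t))) / |t| ^ (1 + 2 * s) =
      Real.sin (ω * x) * ∫ t in {t : ℝ | ε < |t|}, (1 - Real.cos (ω * t)) / |t| ^ (1 + 2 * s) := by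
  have hm : MeasurableSet {t : ℝ | ε < |t|} := measurableSet_lt measurable_const (by fun_prop)
  have hodd : ∫ t in {t : ℝ | ε < |t|}, Real.sin (ω * t) / |t| ^ (1 + 2 * s) = 0 := by
    rw [← integral_indicator hm]
    have h1 := integral_neg_eq_self (indicator {t : ℝ | ε < |t|} (fun t => Real.sin (ω * t) / |t| ^ (1 + 2 * s))) volume
    have h2 : ∀ t, indicator {t : ℝ | ε < |t|} (fun t => Real.sin (ω * t) / |t| ^ (1 + 2 * s)) (-t) =
       - indicator {t : ℝ | ε < |t|} (fun t => Real.sin (ω * t) / |t| ^ (1 + 2 * s)) t := by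
      intro t
      by_cases h : ε < |t|
      · rw [indicator_of_mem (by simpa using h), indicator_of_mem (by simpa using h)]
        simp [neg_div]
      · rw [indicator_of_notMem (by simpa using h), indicator_of_notMem (by simpa using h)]
        simp
    simp only [h2] at h1
    rw [integral_neg] at h1
    linarith
  have hsi : IntegrableOn (fun t => Real.sin (ω * t) / |t| ^ (1 + 2 * s)) {t : ℝ | ε < |t|} := by
    refine Integrable.mono' (kernel_tail s ε hs0 hε) (Measurable.aestronglyMeasurable (by fun_prop)) ?_
    refine Eventually.of_forall fun t => ?_
    rw [div_eq_mul_inv, norm_mul, Real.norm_of_nonneg (by positivity : 0 ≤ (|t| ^ (1 + 2 * s))⁻¹)]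
    exact mul_le_of_le_one_left (by positivity) (by simpa using Real.abs_sin_le_one _)
  have hci := (kernel_cos s ω hs0 hs1).integrableOn (s := {t : ℝ | ε < |t|})
  have e : (fun t : ℝ => (Real.sin (ω * x) - Real.sin (ω * (x + t))) / |t| ^ (1 + 2 * s)) =
    fun t => Real.sin (ω * x) * ((1 - Real.cos (ω * t)) / |t| ^ (1 + 2 * s)) - Real.cos (ω * x) * (Real.sin (ω * t) / |t| ^ (1 + 2 * s)) := by
    funext t
    rw [mul_add, Real.sin_add]; ring
  rw [e, integral_sub (hci.const_mul _) (hsi.const_mul _), integral_const_mul, integral_const_mul, hodd]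
  ring

lemma fracLap_series (s : ℝ) (hs0 : 0 < s) (hs1 : s < 1) (A ω : ℕ → ℝ) (hA : ∀ k, 0 ≤ A k) (hω : ∀ k, 0 < ω k)
    (hS : Summable A) (hS2 : Summable (fun k => A k * ω k ^ (2 * s))) (x : ℝ) :
    HasFracLapAt s (fun x => ∑' k, A k * Real.sin (ω k * x)) x
      (fracLapCoef s * ∑' k, A k * Real.sin (ω k * x) * (ω k ^ (2 * s) * ∫ t : ℝ, (1 - Real.cos t) / |t| ^ (1 + 2 * s))) := by
  set u : ℝ → ℝ := fun x => ∑' k, A k * Real.sin (ω k * x) with hu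
  have hb : ∀ k x, ‖A k * Real.sin (ω k * x)‖ ≤ A k := by
    intro k x
    rw [norm_mul, Real.norm_of_nonneg (hA k)]
    exact mul_le_of_le_one_right (hA k) (by simpa using Real.abs_sin_le_one _)
  have hsu : ∀ x, Summable (fun k => A k * Real.sin (ω k * x)) := fun x =>
    Summable.of_norm_bounded hS (fun k => hb k x)
  have hcont : Continuous u := continuous_tsum (fun k => by fun_prop) hS hb
  set T := ∑' k, A k with hT
  have hub : ∀ y, |u y| ≤ T := fun y => tsum_of_norm_bounded hS.hasSum (fun k => hb k y)
  have hT0 : 0 ≤ T := (abs_nonneg _).trans (hub 0)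
  set G : ℝ → ℝ := fun t => (u x - u (x + t)) / |t| ^ (1 + 2 * s) with hG
  have hm : ∀ ε, MeasurableSet {t : ℝ | ε < |t|} := fun ε => measurableSet_lt measurable_const (by fun_prop)
  have hGm : Measurable G := by
    have := hcont.measurable
    simp only [hG]; fun_prop
  have hGi : ∀ ε, 0 < ε → IntegrableOn G {t : ℝ | ε < |t|} := by
    intro ε hε
    refine Integrable.mono' ((kernel_tail s ε hs0 hε).const_mul (2 * T)) hGm.aestronglyMeasurable ?_
    refine Eventually.of_forall fun t => ?_
    simp only [hG]
    rw [div_eq_mul_inv, norm_mul, Real.norm_of_nonneg (by positivity : 0 ≤ (|t| ^ (1 + 2 * s))⁻¹)]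
    gcongr
    rw [Real.norm_eq_abs]
    have := abs_sub (u x) (u (x + t))
    have := hub x
    have := hub (x + t)
    linarith
  have hF : (fun y : ℝ => (u x - u y) / |x - y| ^ (1 + 2 * s)) = G ∘ (fun y => y - x) := by
    funext y
    simp [hG, abs_sub_comm]
  have hset : ∀ ε, {y : ℝ | ε < |y - x|} = (fun y => y - x) ⁻¹' {t : ℝ | ε < |t|} := fun ε => rfl
  have hmp := measurePreserving_sub_right (volume : Measure ℝ) x
  have hemb : MeasurableEmbedding (fun y : ℝ => y - x) := measurableEmbedding_subRight x
  constructor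
  · intro ε hε
    rw [hF, hset, hmp.integrableOn_comp_preimage hemb]
    exact hGi ε hε
  · rw [hF]
    have hIntEq : ∀ ε, 0 < ε → ∫ y in {y : ℝ | ε < |y - x|}, (G ∘ (fun y => y - x)) y =
        ∑' k, A k * Real.sin (ω k * x) * ∫ t in {t : ℝ | ε < |t|}, (1 - Real.cos (ω k * t)) / |t| ^ (1 + 2 * s) := by
      intro ε hε
      rw [hset]
      simp only [Function.comp_apply]
      rw [hmp.setIntegral_preimage_emb hemb]
      have hterm : ∀ k t, ‖A k * ((Real.sin (ω k * x) - Real.sin (ω k * (x + t))) / |t| ^ (1 + 2 * s))‖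
          ≤ A k * (2 * (|t| ^ (1 + 2 * s))⁻¹) := by
        intro k t
        rw [norm_mul, Real.norm_of_nonneg (hA k), div_eq_mul_inv, norm_mul, Real.norm_of_nonneg (by positivity : 0 ≤ (|t| ^ (1 + 2 * s))⁻¹)]
        have := hA k
        gcongr
        rw [Real.norm_eq_abs]
        have := abs_sub (Real.sin (ω k * x)) (Real.sin (ω k * (x + t)))
        have := Real.abs_sin_le_one (ω k * x)
        have := Real.abs_sin_le_one (ω k * (x + t))
        linarith
      have hti : ∀ k, IntegrableOn (fun t => A k * ((Real.sin (ω k * x) - Real.sin (ω k * (x + t))) / |t| ^ (1 + 2 * s))) {t : ℝ | ε < |t|} := by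
        intro k
        refine Integrable.mono' (((kernel_tail s ε hs0 hε).const_mul 2).const_mul (A k)) (Measurable.aestronglyMeasurable (by fun_prop)) ?_
        exact Eventually.of_forall fun t => hterm k t
      have hsum := hasSum_integral_of_summable_integral_norm (μ := volume.restrict {t : ℝ | ε < |t|})
        (F := fun (k : ℕ) (t : ℝ) => A k * ((Real.sin (ω k * x) - Real.sin (ω k * (x + t))) / |t| ^ (1 + 2 * s)))
        hti ?_
      · have h2 := hsum.tsum_eq
        refine Eq.trans ?_ (h2.symm.trans ?_)
        rotate_left
        · congr 1
          funext k
          rw [integral_const_mul, term_integral s (ω k) x ε hs0 hs1 hε]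
          ring
        · congr 1
          funext t
          simp only [hG, hu]
          rw [← (hsu x).tsum_sub (hsu (x + t)), ← tsum_div_const]
          congr 1
          funext k
          ring
      · refine Summable.of_nonneg_of_le (fun k => integral_nonneg (fun t => norm_nonneg _)) (fun k => ?_)
          (hS.mul_right (∫ t in {t : ℝ | ε < |t|}, 2 * (|t| ^ (1 + 2 * s))⁻¹))
        rw [← integral_const_mul]
        exact integral_mono (hti k).norm (((kernel_tail s ε hs0 hε).const_mul 2).const_mul (A k)) (hterm k)
    refine Tendsto.const_mul _ ?_
    set J := ∫ t : ℝ, (1 - Real.cos t) / |t| ^ (1 + 2 * s) with hJ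
    have hpos : ∀ k t, 0 ≤ (1 - Real.cos (ω k * t)) / |t| ^ (1 + 2 * s) := fun k t =>
      div_nonneg (by linarith [Real.cos_le_one (ω k * t)]) (by positivity)
    have hlim : Tendsto (fun ε : ℝ => ∑' k, A k * Real.sin (ω k * x) * ∫ t in {t : ℝ | ε < |t|}, (1 - Real.cos (ω k * t)) / |t| ^ (1 + 2 * s))
        (nhdsWithin 0 (Ioi 0)) (nhds (∑' k, A k * Real.sin (ω k * x) * (ω k ^ (2 * s) * J))) := by
      refine tendsto_tsum_of_dominated_convergence (bound := fun k => A k * ω k ^ (2 * s) * J) (hS2.mul_right J) ?_ ?_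
      · intro k
        refine Tendsto.const_mul _ ?_
        rw [hJ, ← kernel_cos_scale s (ω k) (hω k)]
        simp only [fun ε => (integral_indicator (μ := volume) (f := fun t : ℝ => (1 - Real.cos (ω k * t)) / |t| ^ (1 + 2 * s)) (hm ε)).symm]
        refine tendsto_integral_filter_of_dominated_convergence
          (fun t => (1 - Real.cos (ω k * t)) / |t| ^ (1 + 2 * s)) ?_ ?_ (kernel_cos s (ω k) hs0 hs1) ?_
        · exact Eventually.of_forall fun ε => ((kernel_cos s (ω k) hs0 hs1).indicator (hm ε)).aestronglyMeasurable
        · refine Eventually.of_forall fun ε => Eventually.of_forall fun t => ?_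
          refine (norm_indicator_le_norm_self _ _).trans ?_
          rw [Real.norm_of_nonneg (hpos k t)]
        · refine Eventually.of_forall fun t => ?_
          refine tendsto_nhds_of_eventually_eq ?_
          by_cases ht : t = 0
          · subst ht
            refine Eventually.of_forall fun ε => ?_
            simp [indicator]
          · have : ∀ᶠ ε in nhdsWithin (0:ℝ) (Ioi 0), ε < |t| :=
              nhdsWithin_le_nhds (eventually_lt_nhds (abs_pos.2 ht))
            filter_upwards [this] with ε hε
            rw [indicator_of_mem]
            exact hε
      · refine Eventually.of_forall fun ε k => ?_
        rw [norm_mul]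
        have hJk : ‖∫ t in {t : ℝ | ε < |t|}, (1 - Real.cos (ω k * t)) / |t| ^ (1 + 2 * s)‖ ≤ ω k ^ (2 * s) * J := by
          rw [Real.norm_of_nonneg (integral_nonneg (hpos k)), hJ, ← kernel_cos_scale s (ω k) (hω k)]
          exact setIntegral_le_integral (kernel_cos s (ω k) hs0 hs1) (Eventually.of_forall (hpos k))
        rw [mul_assoc]
        exact mul_le_mul (hb k x) hJk (norm_nonneg _) (hA k)
    refine hlim.congr' ?_
    filter_upwards [self_mem_nhdsWithin] with ε hε
    exact (hIntEq ε hε).symm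

/-- The formally `j` times differentiated sine series. -/
noncomputable def sineSer (A ω : ℕ → ℝ) (j : ℕ) (x : ℝ) : ℝ :=
  ∑' k, A k * ω k ^ j * Real.sin (ω k * x + j * (Real.pi / 2))

lemma sineSer_term_bound (A ω : ℕ → ℝ) (hA : ∀ k, 0 ≤ A k) (hω : ∀ k, 0 < ω k) (j k : ℕ) (y : ℝ) :
    ‖A k * ω k ^ j * Real.sin y‖ ≤ A k * ω k ^ j := by
  have h0 : 0 ≤ A k * ω k ^ j := mul_nonneg (hA k) (pow_nonneg (hω k).le _)
  rw [norm_mul, Real.norm_of_nonneg h0]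
  exact mul_le_of_le_one_right h0 (by simpa using Real.abs_sin_le_one _)

lemma sineSer_hasDerivAt (A ω : ℕ → ℝ) (hA : ∀ k, 0 ≤ A k) (hω : ∀ k, 0 < ω k) (j : ℕ)
    (h0 : Summable (fun k => A k * ω k ^ j)) (h1 : Summable (fun k => A k * ω k ^ (j + 1))) (x : ℝ) :
    HasDerivAt (sineSer A ω j) (sineSer A ω (j + 1) x) x := by
  unfold sineSer
  refine hasDerivAt_tsum (g' := fun k y => A k * ω k ^ (j + 1) * Real.sin (ω k * y + ((j + 1 : ℕ) : ℝ) * (Real.pi / 2))) h1 (fun k y => ?_) (fun k y => sineSer_term_bound A ω hA hω (j + 1) k _)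
    (y₀ := 0) (Summable.of_norm_bounded h0 (fun k => sineSer_term_bound A ω hA hω j k _)) x
  have h2 : HasDerivAt (fun y => ω k * y + j * (Real.pi / 2)) (ω k) y := by
    simpa using ((hasDerivAt_id y).const_mul (ω k)).add_const (j * (Real.pi / 2))
  refine ((h2.sin).const_mul (A k * ω k ^ j)).congr_deriv ?_
  rw [show ω k * y + ((j + 1 : ℕ) : ℝ) * (Real.pi / 2) = (ω k * y + j * (Real.pi / 2)) + Real.pi / 2 by push_cast; ring,
    Real.sin_add_pi_div_two]
  ring

lemma sineSer_continuous (A ω : ℕ → ℝ) (hA : ∀ k, 0 ≤ A k) (hω : ∀ k, 0 < ω k) (j : ℕ)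
    (h0 : Summable (fun k => A k * ω k ^ j)) : Continuous (sineSer A ω j) :=
  continuous_tsum (fun k => by fun_prop) h0 (fun k x => sineSer_term_bound A ω hA hω j k _)

lemma sineSer_iteratedDeriv (A ω : ℕ → ℝ) (hA : ∀ k, 0 ≤ A k) (hω : ∀ k, 0 < ω k) (N : ℕ)
    (hS : ∀ j ≤ N, Summable (fun k => A k * ω k ^ j)) (j : ℕ) (hj : j ≤ N) :
    iteratedDeriv j (sineSer A ω 0) = sineSer A ω j := by
  induction j with
  | zero => simp
  | succ j ih =>
    rw [iteratedDeriv_succ, ih (by omega)]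
    funext x
    exact (sineSer_hasDerivAt A ω hA hω j (hS j (by omega)) (hS (j + 1) hj) x).deriv

lemma sineSer_contDiff (A ω : ℕ → ℝ) (hA : ∀ k, 0 ≤ A k) (hω : ∀ k, 0 < ω k) (N : ℕ)
    (hS : ∀ j ≤ N, Summable (fun k => A k * ω k ^ j)) : ContDiff ℝ (N : ℕ) (sineSer A ω 0) := by
  have := (contDiff_iff_iteratedDeriv (𝕜 := ℝ) (f := sineSer A ω 0) (n := (N : ℕ∞))).2 ?_
  · exact_mod_cast this
  constructor
  · intro m hm
    have hm' : m ≤ N := by exact_mod_cast hm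
    rw [sineSer_iteratedDeriv A ω hA hω N hS m hm']
    exact sineSer_continuous A ω hA hω m (hS m hm')
  · intro m hm x
    have hm' : m < N := by exact_mod_cast hm
    rw [sineSer_iteratedDeriv A ω hA hω N hS m hm'.le]
    exact (sineSer_hasDerivAt A ω hA hω m (hS m hm'.le) (hS (m + 1) hm') x).differentiableAt

lemma sin_holder (θ a b : ℝ) (h0 : 0 ≤ θ) (h1 : θ ≤ 1) : |Real.sin a - Real.sin b| ≤ 2 * |a - b| ^ θ := by
  have hl : |Real.sin a - Real.sin b| ≤ |a - b| := by
    have := Real.abs_sin_sub_sin_le a b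
    exact this
  by_cases h : |a - b| ≤ 1
  · rcases (abs_nonneg (a - b)).eq_or_lt with h2 | h2
    · rw [← h2] at hl ⊢
      exact hl.trans (by positivity)
    · have : |a - b| ≤ |a - b| ^ θ := by
        conv_lhs => rw [← Real.rpow_one |a - b|]
        exact Real.rpow_le_rpow_of_exponent_ge h2 h h1
      nlinarith
  · have := Real.one_le_rpow (le_of_not_ge h) h0
    have := abs_sub (Real.sin a) (Real.sin b)
    have := Real.abs_sin_le_one a
    have := Real.abs_sin_le_one b
    linarith

lemma holderOnWith_of_real (f : ℝ → ℝ) (Ω : Set ℝ) (C θ : ℝ) (hC : 0 ≤ C) (hθ : 0 ≤ θ)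
    (h : ∀ x ∈ Ω, ∀ y ∈ Ω, |f x - f y| ≤ C * |x - y| ^ θ) :
    HolderOnWith C.toNNReal θ.toNNReal f Ω := by
  intro x hx y hy
  rw [edist_dist, edist_dist, Real.dist_eq, Real.dist_eq, Real.coe_toNNReal _ hθ,
    ENNReal.ofReal_rpow_of_nonneg (abs_nonneg _) hθ]
  change _ ≤ ENNReal.ofReal C * _
  rw [← ENNReal.ofReal_mul hC]
  exact ENNReal.ofReal_le_ofReal (h x hx y hy)

lemma sineSer_memCalpha (A ω : ℕ → ℝ) (hA : ∀ k, 0 ≤ A k) (hω : ∀ k, 0 < ω k) (γ : ℝ) (hγ : 0 ≤ γ)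
    (hS : ∀ p, 0 ≤ p → p ≤ γ → Summable (fun k => A k * ω k ^ p)) : MemCalpha γ univ (sineSer A ω 0) := by
  have hfl : (⌊γ⌋₊ : ℝ) ≤ γ := Nat.floor_le hγ
  have hS' : ∀ j ≤ ⌊γ⌋₊, Summable (fun k => A k * ω k ^ j) := by
    intro j hj
    have hj' : (j : ℝ) ≤ ⌊γ⌋₊ := by exact_mod_cast hj
    simpa using hS j (by positivity) (by linarith)
  refine ⟨(sineSer_contDiff A ω hA hω _ hS').contDiffOn, ?_, ?_⟩
  · intro j hj
    refine ⟨∑' k, A k * ω k ^ j, fun x _ => ?_⟩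
    rw [iteratedDerivWithin_univ, sineSer_iteratedDeriv A ω hA hω _ hS' j hj]
    exact tsum_of_norm_bounded (hS' j hj).hasSum (fun k => sineSer_term_bound A ω hA hω j k _)
  · rw [iteratedDerivWithin_univ, sineSer_iteratedDeriv A ω hA hω _ hS' _ le_rfl]
    set j := ⌊γ⌋₊ with hj
    have hlt : γ < j + 1 := Nat.lt_floor_add_one γ
    refine ⟨_, holderOnWith_of_real _ _ (2 * ∑' k, A k * ω k ^ γ) (γ - j)
      (mul_nonneg zero_le_two (tsum_nonneg fun k => mul_nonneg (hA k) (Real.rpow_nonneg (hω k).le _))) (by linarith) ?_⟩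
    intro x _ y _
    have hs : ∀ x, Summable (fun k => A k * ω k ^ j * Real.sin (ω k * x + j * (Real.pi / 2))) := fun x =>
      Summable.of_norm_bounded (hS' j le_rfl) (fun k => sineSer_term_bound A ω hA hω j k _)
    unfold sineSer
    rw [← (hs x).tsum_sub (hs y)]
    have hsum := (((hS γ hγ le_rfl).hasSum).mul_left 2).mul_right (|x - y| ^ (γ - j))
    rw [← Real.norm_eq_abs]
    refine tsum_of_norm_bounded hsum (fun k => ?_)
    rw [← mul_sub, norm_mul, Real.norm_of_nonneg (mul_nonneg (hA k) (pow_nonneg (hω k).le _)), Real.norm_eq_abs]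
    have h1 := sin_holder (γ - j) (ω k * x + j * (Real.pi / 2)) (ω k * y + j * (Real.pi / 2)) (by linarith) (by linarith)
    rw [show ω k * x + j * (Real.pi / 2) - (ω k * y + j * (Real.pi / 2)) = ω k * (x - y) by ring, abs_mul, abs_of_pos (hω k),
      Real.mul_rpow (hω k).le (abs_nonneg _)] at h1
    have e : ω k ^ γ = ω k ^ j * ω k ^ (γ - j) := by
      rw [← Real.rpow_natCast, ← Real.rpow_add (hω k)]; congr 1; ring
    rw [e]
    calc _ ≤ A k * ω k ^ j * (2 * (ω k ^ (γ - j) * |x - y| ^ (γ - j))) :=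
          mul_le_mul_of_nonneg_left h1 (mul_nonneg (hA k) (pow_nonneg (hω k).le _))
      _ = _ := by ring

lemma memCalpha_pointwise (u : ℝ → ℝ) (N : ℕ) (hu : ContDiff ℝ (N : ℕ) u) (α ρ : ℝ) (hα : 0 ≤ α) (hρ : 0 < ρ) (j : ℕ)
    (hjN : j ≤ N) (hj : j ≤ ⌊α⌋₊) (hmem : MemCalpha α (Icc (-ρ) ρ) u) :
    ∃ C : ℝ, 0 ≤ C ∧ ∀ x ∈ Icc (-ρ) ρ, |iteratedDeriv j u x - iteratedDeriv j u 0| ≤ C * |x| ^ (min 1 (α - j)) := by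
  obtain ⟨h1, h2, K, h3⟩ := hmem
  have hUD : UniqueDiffOn ℝ (Icc (-ρ) ρ) := uniqueDiffOn_Icc (by linarith)
  have h0 : (0:ℝ) ∈ Icc (-ρ) ρ := ⟨by linarith, hρ.le⟩
  have heq : ∀ x ∈ Icc (-ρ) ρ, iteratedDerivWithin j u (Icc (-ρ) ρ) x = iteratedDeriv j u x := fun x hx =>
    iteratedDerivWithin_eq_iteratedDeriv hUD ((hu.of_le (by exact_mod_cast hjN)).contDiffAt) hx
  have hfl : (⌊α⌋₊ : ℝ) ≤ α := Nat.floor_le hα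
  have hlt : α < ⌊α⌋₊ + 1 := Nat.lt_floor_add_one α
  rcases hj.eq_or_lt with hje | hjl
  · refine ⟨K, K.2, fun x hx => ?_⟩
    rw [← hje] at h3 hfl hlt
    have := h3.dist_le hx h0
    rw [Real.dist_eq, Real.dist_eq, heq x hx, heq 0 h0, sub_zero, Real.coe_toNNReal _ (by linarith)] at this
    rwa [min_eq_right (by linarith)]
  · obtain ⟨C, hC⟩ := h2 (j + 1) hjl
    refine ⟨C, (abs_nonneg _).trans (hC 0 h0), fun x hx => ?_⟩
    have hjl' : (j : ℝ) + 1 ≤ ⌊α⌋₊ := by exact_mod_cast hjl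
    rw [min_eq_left (by linarith), Real.rpow_one]
    have hd : DifferentiableOn ℝ (iteratedDerivWithin j u (Icc (-ρ) ρ)) (Icc (-ρ) ρ) :=
      h1.differentiableOn_iteratedDerivWithin (by exact_mod_cast hjl) hUD
    have := Convex.norm_image_sub_le_of_norm_derivWithin_le hd (C := C) ?_ (convex_Icc _ _) h0 hx
    · rw [heq x hx, heq 0 h0, sub_zero] at this
      exact this
    · intro y hy
      have := hC y hy
      rwa [iteratedDerivWithin_succ] at this

lemma sineSer_D_le (A ω : ℕ → ℝ) (hA : ∀ k, 0 ≤ A k) (hω : ∀ k, 0 < ω k) (γ : ℝ) (hγ1 : 1 < γ) (hγ3 : γ < 3)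
    (hS : ∀ p, 0 ≤ p → p ≤ γ → Summable (fun k => A k * ω k ^ p)) (ε ρ : ℝ) (hε : 0 < ε) (hρ : 0 < ρ)
    (hmem : MemCalpha (γ + ε) (Icc (-ρ) ρ) (sineSer A ω 0)) :
    ∃ C ε' : ℝ, 0 < ε' ∧ 0 ≤ C ∧ ∀ x : ℝ, 0 < x → x ≤ ρ →
      sineSer A ω 1 0 - sineSer A ω 1 x ≤ C * x ^ (γ - 1 + ε') := by
  have hfl : (⌊γ⌋₊ : ℝ) ≤ γ := Nat.floor_le (by linarith)
  have hlt : γ < ⌊γ⌋₊ + 1 := Nat.lt_floor_add_one γ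
  have hS' : ∀ j ≤ ⌊γ⌋₊, Summable (fun k => A k * ω k ^ j) := by
    intro j hj
    have hj' : (j : ℝ) ≤ ⌊γ⌋₊ := by exact_mod_cast hj
    simpa using hS j (by positivity) (by linarith)
  obtain ⟨C, hC0, hC⟩ := memCalpha_pointwise (sineSer A ω 0) ⌊γ⌋₊ (sineSer_contDiff A ω hA hω _ hS') (γ + ε) ρ
    (by linarith) hρ ⌊γ⌋₊ le_rfl (Nat.floor_mono (by linarith)) hmem
  rw [sineSer_iteratedDeriv A ω hA hω _ hS' _ le_rfl] at hC
  have h12 : ⌊γ⌋₊ = 1 ∨ ⌊γ⌋₊ = 2 := by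
    have a : 1 ≤ ⌊γ⌋₊ := Nat.le_floor (by exact_mod_cast hγ1.le)
    have b : ⌊γ⌋₊ < 3 := (Nat.floor_lt (by linarith)).2 (by exact_mod_cast hγ3)
    omega
  rcases h12 with h | h
  · rw [h] at hC hlt
    push_cast at hC hlt
    refine ⟨C, min (2 - γ) ε, lt_min (by linarith) hε, hC0, fun x hx hxρ => ?_⟩
    have := hC x ⟨by linarith, hxρ⟩
    rw [abs_of_pos hx, abs_sub_comm] at this
    have e : min 1 (γ + ε - 1) = γ - 1 + min (2 - γ) ε := by
      rw [← min_add_add_left]; congr 1 <;> ring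
    rw [e] at this
    exact (le_abs_self _).trans this
  · rw [h] at hC hlt hS'
    push_cast at hC hlt
    refine ⟨C, min (3 - γ) ε, lt_min (by linarith) hε, hC0, fun x hx hxρ => ?_⟩
    have e : min 1 (γ + ε - 2) = γ - 2 + min (3 - γ) ε := by
      rw [← min_add_add_left]; congr 1 <;> ring
    have hge : 2 ≤ γ := by rw [h] at hfl; exact_mod_cast hfl
    have hpos : 0 < min (3 - γ) ε := lt_min (by linarith) hε
    have z : sineSer A ω 2 0 = 0 := by
      simp [sineSer, mul_div_cancel₀]
    rw [e, z] at hC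
    have := Convex.norm_image_sub_le_of_norm_deriv_le (𝕜 := ℝ) (f := sineSer A ω 1) (s := Icc 0 x) (x := 0) (y := x)
      (C := C * x ^ (γ - 2 + min (3 - γ) ε))
      (fun y _ => (sineSer_hasDerivAt A ω hA hω 1 (hS' 1 (by norm_num)) (hS' 2 le_rfl) y).differentiableAt) ?_
      (convex_Icc _ _) ⟨le_rfl, hx.le⟩ ⟨hx.le, le_rfl⟩
    · rw [sub_zero, Real.norm_eq_abs, Real.norm_eq_abs, abs_of_pos hx, abs_sub_comm, mul_assoc, ← Real.rpow_add_one hx.ne'] at this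
      rw [show γ - 1 + min (3 - γ) ε = γ - 2 + min (3 - γ) ε + 1 by ring]
      exact (le_abs_self _).trans this
    · intro y hy
      rw [(sineSer_hasDerivAt A ω hA hω 1 (hS' 1 (by norm_num)) (hS' 2 le_rfl) y).deriv, Real.norm_eq_abs]
      have h5 := hC y ⟨by linarith [hy.1], by linarith [hy.2]⟩
      rw [sub_zero] at h5
      refine h5.trans ?_
      rw [abs_of_nonneg hy.1]
      gcongr
      · exact hy.1
      · exact hy.2

lemma sineSer_not_mem (A ω : ℕ → ℝ) (κ : ℝ) (hκ : 0 < κ) (hA : ∀ k, 0 ≤ A k) (hω : ∀ k, ω k = κ * (2 * k + 1))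
    (γ : ℝ) (hγ1 : 1 < γ) (hγ3 : γ < 3)
    (hS : ∀ p, 0 ≤ p → p ≤ γ → Summable (fun k => A k * ω k ^ p))
    (hlow : ∀ δ : ℝ, 0 < δ → ∃ c : ℝ, 0 < c ∧ ∀ k : ℕ, c * (2 * k + 1 : ℝ) ^ (-(1 + γ + δ)) ≤ A k)
    (ε ρ : ℝ) (hε : 0 < ε) (hρ : 0 < ρ) :
    ¬ MemCalpha (γ + ε) (Icc (-ρ) ρ) (sineSer A ω 0) := by
  intro hmem
  have hω0 : ∀ k, 0 < ω k := fun k => by rw [hω]; positivity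
  obtain ⟨C, e, he, hC0, hD⟩ := sineSer_D_le A ω hA hω0 γ hγ1 hγ3 hS ε ρ hε hρ hmem
  obtain ⟨c, hc, hlow⟩ := hlow (e / 2) (by linarith)
  have hs1 : Summable (fun k => A k * ω k ^ 1) := by simpa using hS 1 (by norm_num) hγ1.le
  have hsx : ∀ x, Summable (fun k => A k * ω k ^ 1 * Real.sin (ω k * x + (1:ℕ) * (Real.pi / 2))) := fun x =>
      Summable.of_norm_bounded hs1 (fun k => sineSer_term_bound A ω hA hω0 1 k _)
  have key : ∀ N : ℕ, 1 ≤ N → 1 / (κ * N) ≤ ρ →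
      (N : ℝ) ^ (e / 2) ≤ C * κ ^ (-(γ - 1 + e)) / (c * κ * 4 ^ (-(γ + e / 2))) := by
    intro N hN hNρ
    have hN0 : (0:ℝ) < N := by exact_mod_cast hN
    have hup := hD (1 / (κ * N)) (by positivity) hNρ
    have hDeq : sineSer A ω 1 0 - sineSer A ω 1 (1 / (κ * N)) = ∑' k, A k * ω k * (1 - Real.cos (ω k * (1 / (κ * N)))) := by
      unfold sineSer
      rw [← (hsx 0).tsum_sub (hsx _)]
      congr 1
      funext k
      simp only [Nat.cast_one, one_mul, pow_one, Real.sin_add_pi_div_two, mul_zero, Real.cos_zero]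
      ring
    have hnn : ∀ k, 0 ≤ A k * ω k * (1 - Real.cos (ω k * (1 / (κ * N)))) := fun k =>
      mul_nonneg (mul_nonneg (hA k) (hω0 k).le) (by linarith [Real.cos_le_one (ω k * (1 / (κ * N)))])
    have hsD : Summable (fun k => A k * ω k * (1 - Real.cos (ω k * (1 / (κ * N))))) := by
      refine ((hsx 0).sub (hsx (1 / (κ * N)))).congr (fun k => ?_)
      simp only [Nat.cast_one, one_mul, pow_one, Real.sin_add_pi_div_two, mul_zero, Real.cos_zero]
      ring
    have hlo := hsD.sum_le_tsum (Finset.Ico N (2 * N)) (fun k _ => hnn k)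
    have hblock : (N : ℝ) * (c * κ * (4 * N : ℝ) ^ (-(γ + e / 2))) ≤
        ∑ k ∈ Finset.Ico N (2 * N), A k * ω k * (1 - Real.cos (ω k * (1 / (κ * N)))) := by
      have : ∀ k ∈ Finset.Ico N (2 * N), c * κ * (4 * N : ℝ) ^ (-(γ + e / 2)) ≤ A k * ω k * (1 - Real.cos (ω k * (1 / (κ * N)))) := by
        intro k hk
        rw [Finset.mem_Ico] at hk
        have k1 : (N : ℝ) ≤ k := by exact_mod_cast hk.1
        have k2 : (k : ℝ) + 1 ≤ 2 * N := by exact_mod_cast hk.2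
        have hk0 : (0:ℝ) < 2 * k + 1 := by positivity
        have harg : ω k * (1 / (κ * N)) = (2 * k + 1) / N := by
          rw [hω]; field_simp
        have hcos : Real.cos (ω k * (1 / (κ * N))) ≤ 0 := by
          rw [harg]
          apply Real.cos_nonpos_of_pi_div_two_le_of_le
          · rw [le_div_iff₀ hN0]
            nlinarith [Real.pi_le_four]
          · rw [div_le_iff₀ hN0]
            nlinarith [Real.pi_gt_three]
        have h1 : c * κ * (4 * N : ℝ) ^ (-(γ + e / 2)) ≤ A k * ω k := by
          calc c * κ * (4 * N : ℝ) ^ (-(γ + e / 2)) ≤ c * κ * (2 * k + 1 : ℝ) ^ (-(γ + e / 2)) := by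
                apply mul_le_mul_of_nonneg_left _ (by positivity)
                exact Real.rpow_le_rpow_of_nonpos hk0 (by linarith) (by linarith)
            _ = (c * (2 * k + 1 : ℝ) ^ (-(1 + γ + e / 2))) * (κ * (2 * k + 1)) := by
                rw [show -(γ + e / 2) = -(1 + γ + e / 2) + 1 by ring, Real.rpow_add_one hk0.ne']
                ring
            _ ≤ A k * ω k := by
                rw [hω]
                exact mul_le_mul_of_nonneg_right (hlow k) (by positivity)
        have h2 : 0 ≤ A k * ω k := mul_nonneg (hA k) (hω0 k).le
        nlinarith
      have h3 := Finset.card_nsmul_le_sum _ _ _ this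
      rw [Nat.card_Ico, show 2 * N - N = N by omega, nsmul_eq_mul] at h3
      exact h3
    have hfin := hblock.trans (hlo.trans (hDeq ▸ hup))
    rw [le_div_iff₀ (by positivity)]
    rw [one_div, Real.inv_rpow (by positivity), ← Real.rpow_neg (by positivity), Real.mul_rpow hκ.le hN0.le,
      Real.mul_rpow (by norm_num) hN0.le] at hfin
    have e1 : (N:ℝ) ^ (e / 2) = N * (N:ℝ) ^ (-(γ + e / 2)) * (N:ℝ) ^ (γ - 1 + e) := by
      rw [mul_comm (N:ℝ), ← Real.rpow_add_one hN0.ne', ← Real.rpow_add hN0]; congr 1; ring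
    have e2 : (N:ℝ) ^ (-(γ - 1 + e)) * (N:ℝ) ^ (γ - 1 + e) = 1 := by
      rw [← Real.rpow_add hN0, neg_add_cancel, Real.rpow_zero]
    have e3 : (0:ℝ) ≤ (N:ℝ) ^ (γ - 1 + e) := by positivity
    have := mul_le_mul_of_nonneg_right hfin e3
    rw [e1]
    calc _ = N * (c * κ * (4 ^ (-(γ + e / 2)) * (N:ℝ) ^ (-(γ + e / 2)))) * (N:ℝ) ^ (γ - 1 + e) := by ring
      _ ≤ _ := this
      _ = C * κ ^ (-(γ - 1 + e)) * ((N:ℝ) ^ (-(γ - 1 + e)) * (N:ℝ) ^ (γ - 1 + e)) := by ring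
      _ = _ := by rw [e2, mul_one]
  have ht : Tendsto (fun N : ℕ => (N:ℝ) ^ (e / 2)) atTop atTop :=
    (tendsto_rpow_atTop (by linarith)).comp tendsto_natCast_atTop_atTop
  have ev1 := ht.eventually_gt_atTop (C * κ ^ (-(γ - 1 + e)) / (c * κ * 4 ^ (-(γ + e / 2))))
  have ev2 := (tendsto_natCast_atTop_atTop (R := ℝ)).eventually_ge_atTop (1 / (κ * ρ))
  obtain ⟨N, h1, h2, h3⟩ := (ev1.and (ev2.and (eventually_ge_atTop 1))).exists
  have hN0 : (0:ℝ) < N := by exact_mod_cast h3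
  refine absurd (key N h3 ?_) (not_le.2 h1)
  rw [div_le_iff₀ (by positivity)] at h2 ⊢
  linarith

lemma exists_f (β K c : ℝ) (hβ0 : 0 < β) (hβ1 : β < 1) (hK : 0 ≤ K) (hc : c ≠ 0) (u g : ℝ → ℝ) (hu : Continuous u)
    (hper : Function.Periodic u c) (hug : ∀ x y, |g x - g y| ≤ K * |u x - u y| ^ β) :
    ∃ f : ℝ → ℝ, MemCalpha β univ f ∧ ∀ x, f (u x) = g x := by
  have hcomp := hper.compact_of_continuous hc hu
  have hconn : IsConnected (range u) := isConnected_range hu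
  have hR := eq_Icc_of_connected_compact hconn hcomp
  set a := sInf (range u)
  set b := sSup (range u)
  have hin : ∀ x, u x ∈ Icc a b := fun x => hR ▸ mem_range_self x
  have hab : a ≤ b := (hin 0).1.trans (hin 0).2
  have hex : ∀ t : Icc a b, ∃ x, u x = t := fun t => by
    have : (t : ℝ) ∈ range u := by rw [hR]; exact t.2
    exact this
  choose φ hφ using hex
  have hfl : ⌊β⌋₊ = 0 := Nat.floor_eq_zero.2 hβ1
  set f : ℝ → ℝ := fun t => g (φ (projIcc a b hab t)) with hf
  have hH : ∀ x y, |f x - f y| ≤ K * |x - y| ^ β := by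
    intro x y
    refine (hug _ _).trans ?_
    rw [hφ, hφ]
    have h5 : |((projIcc a b hab x : Icc a b) : ℝ) - (projIcc a b hab y : Icc a b)| ≤ |x - y| := by
      have := (LipschitzWith.projIcc hab).dist_le_mul x y
      simpa [Real.dist_eq, Subtype.dist_eq] using this
    exact mul_le_mul_of_nonneg_left (Real.rpow_le_rpow (abs_nonneg _) h5 hβ0.le) hK
  have hHold := holderOnWith_of_real f univ K β hK hβ0.le (fun x _ y _ => hH x y)
  refine ⟨f, ⟨?_, ?_, ?_⟩, ?_⟩
  · rw [hfl]
    have hc : ContinuousOn f univ := hHold.continuousOn (by simpa using hβ0)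
    simpa using (contDiffOn_zero (𝕜 := ℝ)).2 hc
  · intro k hk
    rw [hfl] at hk
    obtain rfl : k = 0 := by omega
    refine ⟨|g 0| + K * (b - a) ^ β, fun x _ => ?_⟩
    simp only [iteratedDerivWithin_zero]
    have h1 := hug (φ (projIcc a b hab x)) 0
    have h2 : |u (φ (projIcc a b hab x)) - u 0| ^ β ≤ (b - a) ^ β := by
      gcongr
      rw [abs_le]
      have := hin 0
      have := hin (φ (projIcc a b hab x))
      constructor <;> linarith [this.1, this.2, (hin 0).1, (hin 0).2]
    have h3 : |g (φ (projIcc a b hab x))| ≤ |g 0| + |g (φ (projIcc a b hab x)) - g 0| := by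
      have := abs_add_le (g 0) (g (φ (projIcc a b hab x)) - g 0)
      simpa using this
    have h4 := mul_le_mul_of_nonneg_left h2 hK
    simp only [hf]
    linarith
  · rw [hfl]
    refine ⟨K.toNNReal, ?_⟩
    simpa using hHold
  · intro x
    simp only [hf]
    have h1 := hug (φ (projIcc a b hab (u x))) x
    rw [hφ, projIcc_of_mem hab (hin x)] at h1
    simp only [sub_self, abs_zero, Real.zero_rpow hβ0.ne', mul_zero] at h1
    have := abs_nonpos_iff.1 h1
    rw [projIcc_of_mem hab (hin x)]
    linarith

/-- Weighted odd sine series. -/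
noncomputable def oddSer (B : ℕ → ℝ) (p X : ℝ) : ℝ :=
  ∑' k : ℕ, (2 * k + 1 : ℝ) ^ (-p) * B k * Real.sin ((2 * k + 1 : ℝ) * X)

lemma oddSer_mix (c δ : ℕ → ℝ) (hc : ∀ n, 0 ≤ c n) (p q : ℝ) (K : ℕ → ℝ) (hp : 0 ≤ p)
    (hsum : Summable (Function.uncurry (fun n k : ℕ => c n * (2 * k + 1 : ℝ) ^ (-(1 + δ n)))))
    (hK : ∀ n, c n * K n ≤ (1 / 2) ^ n)
    (hH : ∀ n, ∀ x y : ℝ,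
      |(∑' k : ℕ, (2 * k + 1 : ℝ) ^ (-(1 + (p + δ n))) * Real.sin ((2 * k + 1 : ℝ) * x)) -
       (∑' k : ℕ, (2 * k + 1 : ℝ) ^ (-(1 + (p + δ n))) * Real.sin ((2 * k + 1 : ℝ) * y))|
       ≤ K n * |Real.sin x - Real.sin y| ^ q) (X Y : ℝ) :
    |oddSer (fun k => ∑' n, c n * (2 * k + 1 : ℝ) ^ (-(1 + δ n))) p X -
      oddSer (fun k => ∑' n, c n * (2 * k + 1 : ℝ) ^ (-(1 + δ n))) p Y| ≤ 2 * |Real.sin X - Real.sin Y| ^ q := by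
  have hu : ∀ X, Summable (Function.uncurry (fun n k : ℕ => c n * ((2 * k + 1 : ℝ) ^ (-(1 + (p + δ n))) * Real.sin ((2 * k + 1 : ℝ) * X)))) := by
    intro X
    refine Summable.of_norm_bounded hsum ?_
    rintro ⟨n, k⟩
    simp only [Function.uncurry_apply_pair]
    have hk : (1:ℝ) ≤ 2 * k + 1 := by
      have : (0:ℝ) ≤ k := by positivity
      linarith
    rw [norm_mul, Real.norm_of_nonneg (hc n), norm_mul, Real.norm_of_nonneg (by positivity)]
    apply mul_le_mul_of_nonneg_left _ (hc n)
    refine (mul_le_of_le_one_right (by positivity) (by simpa using Real.abs_sin_le_one _)).trans ?_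
    exact Real.rpow_le_rpow_of_exponent_le hk (by linarith)
  have heq : ∀ X, oddSer (fun k => ∑' n, c n * (2 * k + 1 : ℝ) ^ (-(1 + δ n))) p X =
      ∑' n, c n * ∑' k : ℕ, (2 * k + 1 : ℝ) ^ (-(1 + (p + δ n))) * Real.sin ((2 * k + 1 : ℝ) * X) := by
    intro X
    simp only [← tsum_mul_left]
    rw [← (hu X).tsum_comm]
    unfold oddSer
    congr 1
    funext k
    rw [mul_right_comm, ← tsum_mul_left]
    congr 1
    funext n
    have hk : (0:ℝ) < 2 * k + 1 := by positivity
    rw [show -(1 + (p + δ n)) = -p + -(1 + δ n) by ring, Real.rpow_add hk]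
    ring
  have hs : ∀ X, Summable (fun n => c n * ∑' k : ℕ, (2 * k + 1 : ℝ) ^ (-(1 + (p + δ n))) * Real.sin ((2 * k + 1 : ℝ) * X)) := by
    intro X
    refine (hu X).prod.congr (fun n => ?_)
    simp only [Function.uncurry_apply_pair, tsum_mul_left]
  rw [heq, heq, ← (hs X).tsum_sub (hs Y), ← Real.norm_eq_abs]
  have hg := (hasSum_geometric_two).mul_right (|Real.sin X - Real.sin Y| ^ q)
  refine tsum_of_norm_bounded hg (fun n => ?_)
  rw [← mul_sub, norm_mul, Real.norm_of_nonneg (hc n), Real.norm_eq_abs]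
  calc _ ≤ c n * (K n * |Real.sin X - Real.sin Y| ^ q) := mul_le_mul_of_nonneg_left (hH n X Y) (hc n)
    _ = (c n * K n) * |Real.sin X - Real.sin Y| ^ q := by ring
    _ ≤ _ := mul_le_mul_of_nonneg_right (hK n) (by positivity)

lemma exists_coeff (β γ : ℝ) (hβ0 : 0 < β) (hβ1 : β < 1) (hγ : 1 < γ) :
    ∃ B : ℕ → ℝ, (∀ k, 0 ≤ B k) ∧ Summable B ∧
      (∀ δ : ℝ, 0 < δ → ∃ c : ℝ, 0 < c ∧ ∀ k : ℕ, c * (2 * k + 1 : ℝ) ^ (-(1 + δ)) ≤ B k) ∧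
      (∀ X Y, |oddSer B γ X - oddSer B γ Y| ≤ 2 * |Real.sin X - Real.sin Y| ^ (1:ℝ)) ∧
      (∀ X Y, |oddSer B β X - oddSer B β Y| ≤ 2 * |Real.sin X - Real.sin Y| ^ β) := by
  set δ : ℕ → ℝ := fun n => 1 / ((n:ℝ) + 1) with hδ
  have hδ0 : ∀ n, 0 < δ n := fun n => by simp only [hδ]; positivity
  choose K1 hK1 hH1 using fun n => series_holder (γ + δ n) 1 one_pos le_rfl (by linarith [hδ0 n])
  choose K2 hK2 hH2 using fun n => series_holder (β + δ n) β hβ0 hβ1.le (by linarith [hδ0 n])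
  set Z : ℕ → ℝ := fun n => ∑' k : ℕ, (2 * k + 1 : ℝ) ^ (-(1 + δ n)) with hZ
  have hZ0 : ∀ n, 0 ≤ Z n := fun n => tsum_nonneg (fun k => by positivity)
  have hden : ∀ n, 0 < 1 + K1 n + K2 n + Z n := fun n => by linarith [hK1 n, hK2 n, hZ0 n]
  set c : ℕ → ℝ := fun n => (1 / 2) ^ n / (1 + K1 n + K2 n + Z n) with hc
  have hc0 : ∀ n, 0 < c n := fun n => by
    have := hden n
    simp only [hc]; positivity
  have hcK : ∀ n r, r ≤ 1 + K1 n + K2 n + Z n → c n * r ≤ (1 / 2) ^ n := by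
    intro n r hr
    have h1 := mul_le_mul_of_nonneg_left hr (hc0 n).le
    have h2 : c n * (1 + K1 n + K2 n + Z n) = (1 / 2) ^ n := by
      simp only [hc]; exact div_mul_cancel₀ _ (hden n).ne'
    linarith
  have hsum : Summable (Function.uncurry (fun n k : ℕ => c n * (2 * k + 1 : ℝ) ^ (-(1 + δ n)))) := by
    rw [summable_prod_of_nonneg]
    · refine ⟨fun n => (odd_summable (δ n) (hδ0 n)).mul_left (c n), ?_⟩
      refine Summable.of_nonneg_of_le (fun n => ?_) (fun n => ?_) summable_geometric_two
      · exact tsum_nonneg (fun k => mul_nonneg (hc0 n).le (by positivity))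
      · simp only [Function.uncurry_apply_pair, tsum_mul_left]
        exact hcK n (Z n) (by linarith [hK1 n, hK2 n])
    · rintro ⟨n, k⟩
      exact mul_nonneg (hc0 n).le (by positivity)
  refine ⟨fun k => ∑' n, c n * (2 * k + 1 : ℝ) ^ (-(1 + δ n)), ?_, ?_, ?_, ?_, ?_⟩
  · exact fun k => tsum_nonneg (fun n => mul_nonneg (hc0 n).le (by positivity))
  · exact hsum.prod_symm.prod
  · intro d hd
    obtain ⟨n, hn⟩ := exists_nat_one_div_lt hd
    refine ⟨c n, hc0 n, fun k => ?_⟩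
    have hk : (1:ℝ) ≤ 2 * k + 1 := by
      have : (0:ℝ) ≤ k := by positivity
      linarith
    have h1 : Summable (fun n => c n * (2 * k + 1 : ℝ) ^ (-(1 + δ n))) := hsum.prod_symm.prod_factor k
    refine le_trans ?_ (h1.le_tsum n (fun m _ => mul_nonneg (hc0 m).le (by positivity)))
    apply mul_le_mul_of_nonneg_left _ (hc0 n).le
    exact Real.rpow_le_rpow_of_exponent_le hk (by simp only [hδ]; linarith)
  · exact oddSer_mix c δ (fun n => (hc0 n).le) γ 1 K1 (by linarith) hsum
      (fun n => hcK n _ (by linarith [hK2 n, hZ0 n])) hH1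
  · exact oddSer_mix c δ (fun n => (hc0 n).le) β β K2 (by linarith) hsum
      (fun n => hcK n _ (by linarith [hK1 n, hZ0 n])) hH2

lemma tsum_add_ite (f : ℕ → ℝ) (c : ℝ) (hf : Summable f) :
    Summable (fun k => f k + if k = 0 then c else 0) ∧ ∑' k, (f k + if k = 0 then c else 0) = (∑' k, f k) + c := by
  have h := hf.hasSum.add (hasSum_ite_eq (0:ℕ) c)
  exact ⟨h.summable, h.tsum_eq⟩

theorem stmt1 (s β L : ℝ) (hs0 : 0 < s) (hs1 : s < 1) (hβ0 : 0 < β) (hβ1 : β < 1)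
    (hL : 0 < L) (h : 1 - β < 2 * s) :
    ∃ u f : ℝ → ℝ,
      Function.Periodic u (2 * L) ∧
      MemCalpha (2 * s + β) Set.univ u ∧
      MemCalpha β Set.univ f ∧
      (∀ x : ℝ, HasFracLapAt s u x (f (u x))) ∧
      (∀ ε ρ : ℝ, 0 < ε → 0 < ρ →
        ¬ MemCalpha (2 * s + β + ε) (Set.Icc (-ρ) ρ) u) := by
  set γ := 2 * s + β with hγ
  have hγ1 : 1 < γ := by linarith
  have hγ3 : γ < 3 := by linarith
  obtain ⟨B, hB0, hBs, hBlow, hV1, hV2⟩ := exists_coeff β γ hβ0 hβ1 hγ1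
  set κ := Real.pi / L with hκ
  have hκ0 : 0 < κ := div_pos Real.pi_pos hL
  set ω : ℕ → ℝ := fun k => κ * (2 * k + 1) with hω
  have hω0 : ∀ k, 0 < ω k := fun k => by simp only [hω]; positivity
  set A : ℕ → ℝ := fun k => (2 * k + 1 : ℝ) ^ (-γ) * B k + if k = 0 then 3 else 0 with hA
  have hA0 : ∀ k, 0 ≤ A k := fun k => by
    have := hB0 k
    simp only [hA]
    split_ifs <;> positivity
  have hk1 : ∀ k : ℕ, (1:ℝ) ≤ 2 * k + 1 := fun k => by
    have : (0:ℝ) ≤ k := by positivity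
    linarith
  -- a general rewriting of the weighted terms
  have hAp : ∀ (p : ℝ) (k : ℕ), A k * ω k ^ p = κ ^ p * ((2 * k + 1 : ℝ) ^ (-(γ - p)) * B k + if k = 0 then 3 else 0) := by
    intro p k
    have hk0 : (0:ℝ) < 2 * k + 1 := by positivity
    simp only [hA, hω]
    rw [Real.mul_rpow hκ0.le hk0.le, show -(γ - p) = -γ + p by ring, Real.rpow_add hk0]
    split_ifs with h0
    · subst h0; simp; ring
    · ring
  have hle : ∀ p, p ≤ γ → ∀ k : ℕ, (2 * k + 1 : ℝ) ^ (-(γ - p)) * B k ≤ B k := by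
    intro p hp k
    exact mul_le_of_le_one_left (hB0 k) (Real.rpow_le_one_of_one_le_of_nonpos (hk1 k) (by linarith))
  have hsB : ∀ p, p ≤ γ → Summable (fun k : ℕ => (2 * k + 1 : ℝ) ^ (-(γ - p)) * B k) := fun p hp =>
    Summable.of_nonneg_of_le (fun k => mul_nonneg (by positivity) (hB0 k)) (hle p hp) hBs
  have hS : ∀ p, 0 ≤ p → p ≤ γ → Summable (fun k => A k * ω k ^ p) := by
    intro p _ hp
    refine (((tsum_add_ite _ 3 (hsB p hp)).1).mul_left (κ ^ p)).congr (fun k => ?_)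
    exact (hAp p k).symm
  -- the series with weight `ω ^ p`
  have hser : ∀ p, 0 ≤ p → p ≤ γ → ∀ x, ∑' k, A k * ω k ^ p * Real.sin (ω k * x) =
      κ ^ p * (oddSer B (γ - p) (κ * x) + 3 * Real.sin (κ * x)) := by
    intro p _ hp x
    have hs : Summable (fun k : ℕ => (2 * k + 1 : ℝ) ^ (-(γ - p)) * B k * Real.sin ((2 * k + 1 : ℝ) * (κ * x))) := by
      refine Summable.of_norm_bounded (hsB p hp) (fun k => ?_)
      have h0 : 0 ≤ (2 * k + 1 : ℝ) ^ (-(γ - p)) * B k := mul_nonneg (by positivity) (hB0 k)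
      rw [norm_mul, Real.norm_of_nonneg h0]
      exact mul_le_of_le_one_right h0 (by simpa using Real.abs_sin_le_one _)
    unfold oddSer
    rw [← (tsum_add_ite _ (3 * Real.sin (κ * x)) hs).2, ← tsum_mul_left]
    congr 1
    funext k
    rw [hAp]
    simp only [hω]
    rw [show κ * (2 * (k:ℝ) + 1) * x = (2 * k + 1) * (κ * x) by ring]
    split_ifs with h0
    · subst h0; simp; ring
    · ring
  set u := sineSer A ω 0 with hu
  have hu1 : u = fun x => ∑' k, A k * Real.sin (ω k * x) := by
    funext x; simp [hu, sineSer]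
  have hu2 : ∀ x, u x = oddSer B γ (κ * x) + 3 * Real.sin (κ * x) := by
    intro x
    have := hser 0 le_rfl (by linarith) x
    simpa [hu1] using this
  have hucont : Continuous u := sineSer_continuous A ω hA0 hω0 0 (by simpa using hS 0 le_rfl (by linarith))
  have hper : Function.Periodic u (2 * L) := by
    intro x
    rw [hu1]
    simp only
    congr 1
    funext k
    have : ω k * (x + 2 * L) = ω k * x + ((2 * k + 1 : ℕ) : ℝ) * (2 * Real.pi) := by
      simp only [hω, hκ]; push_cast; field_simp
    rw [this, Real.sin_add_nat_mul_two_pi]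
  set g : ℝ → ℝ := fun x => fracLapCoef s * ∑' k, A k * Real.sin (ω k * x) *
    (ω k ^ (2 * s) * ∫ t : ℝ, (1 - Real.cos t) / |t| ^ (1 + 2 * s)) with hg
  set J := ∫ t : ℝ, (1 - Real.cos t) / |t| ^ (1 + 2 * s) with hJ
  have hg2 : ∀ x, g x = fracLapCoef s * J * κ ^ (2 * s) * (oddSer B β (κ * x) + 3 * Real.sin (κ * x)) := by
    intro x
    have h1 := hser (2 * s) (by linarith) (by linarith) x
    rw [show γ - 2 * s = β by rw [hγ]; ring] at h1
    simp only [hg]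
    rw [mul_assoc _ (κ ^ (2 * s)), ← h1, mul_assoc]
    congr 1
    rw [← tsum_mul_left]
    congr 1
    funext k
    ring
  have hug : ∀ x y, |g x - g y| ≤ (|fracLapCoef s * J * κ ^ (2 * s)| * 8) * |u x - u y| ^ β := by
    intro x y
    set D := |Real.sin (κ * x) - Real.sin (κ * y)| with hD
    have hD0 : 0 ≤ D := abs_nonneg _
    have h1 : D ≤ |u x - u y| := by
      have a1 := hV1 (κ * x) (κ * y)
      rw [Real.rpow_one] at a1
      rw [hu2, hu2]
      have a2 : |3 * (Real.sin (κ * x) - Real.sin (κ * y))| = 3 * D := by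
        rw [abs_mul]; norm_num [hD]
      have a3 := abs_sub_abs_le_abs_sub (3 * (Real.sin (κ * x) - Real.sin (κ * y))) (-(oddSer B γ (κ * x) - oddSer B γ (κ * y)))
      rw [abs_neg] at a3
      rw [show oddSer B γ (κ * x) + 3 * Real.sin (κ * x) - (oddSer B γ (κ * y) + 3 * Real.sin (κ * y)) =
        3 * (Real.sin (κ * x) - Real.sin (κ * y)) - -(oddSer B γ (κ * x) - oddSer B γ (κ * y)) by ring]
      linarith
    have h2 : D ≤ 2 * D ^ β := by
      have hD2 : D ≤ 2 := by
        have := abs_sub (Real.sin (κ * x)) (Real.sin (κ * y))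
        have := Real.abs_sin_le_one (κ * x)
        have := Real.abs_sin_le_one (κ * y)
        linarith
      by_cases h : D ≤ 1
      · rcases hD0.eq_or_lt with h0 | h0
        · rw [← h0]; positivity
        · have : D ≤ D ^ β := by
            conv_lhs => rw [← Real.rpow_one D]
            exact Real.rpow_le_rpow_of_exponent_ge h0 h hβ1.le
          linarith
      · have := Real.one_le_rpow (le_of_not_ge h) hβ0.le
        linarith
    have h3 := hV2 (κ * x) (κ * y)
    have h4 : |oddSer B β (κ * x) + 3 * Real.sin (κ * x) - (oddSer B β (κ * y) + 3 * Real.sin (κ * y))| ≤ 8 * D ^ β := by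
      rw [show oddSer B β (κ * x) + 3 * Real.sin (κ * x) - (oddSer B β (κ * y) + 3 * Real.sin (κ * y)) =
        (oddSer B β (κ * x) - oddSer B β (κ * y)) + 3 * (Real.sin (κ * x) - Real.sin (κ * y)) by ring]
      refine (abs_add_le _ _).trans ?_
      have a2 : |3 * (Real.sin (κ * x) - Real.sin (κ * y))| = 3 * D := by
        rw [abs_mul]; norm_num [hD]
      linarith
    rw [hg2, hg2, ← mul_sub, abs_mul, mul_assoc |fracLapCoef s * J * κ ^ (2 * s)|]
    apply mul_le_mul_of_nonneg_left _ (abs_nonneg _)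
    refine h4.trans ?_
    gcongr
  obtain ⟨f, hf1, hf2⟩ := exists_f β _ (2 * L) hβ0 hβ1 (by positivity) (by positivity) u g hucont hper hug
  refine ⟨u, f, hper, sineSer_memCalpha A ω hA0 hω0 γ (by linarith) hS, hf1, ?_, ?_⟩
  · intro x
    rw [hf2, hu1]
    exact fracLap_series s hs0 hs1 A ω hA0 hω0 (by simpa using hS 0 le_rfl (by linarith)) (hS (2 * s) (by linarith) (by linarith)) x
  · intro ε ρ hε hρ
    refine sineSer_not_mem A ω κ hκ0 hA0 (fun k => rfl) γ hγ1 hγ3 hS ?_ ε ρ hε hρ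
    intro δ hδ
    obtain ⟨c, hc, hcl⟩ := hBlow δ hδ
    refine ⟨c, hc, fun k => ?_⟩
    have hk0 : (0:ℝ) < 2 * k + 1 := by positivity
    have h1 := mul_le_mul_of_nonneg_left (hcl k) (by positivity : 0 ≤ (2 * k + 1 : ℝ) ^ (-γ))
    have h2 : c * (2 * k + 1 : ℝ) ^ (-(1 + γ + δ)) = (2 * k + 1 : ℝ) ^ (-γ) * (c * (2 * k + 1 : ℝ) ^ (-(1 + δ))) := by
      rw [show -(1 + γ + δ) = -γ + -(1 + δ) by ring, Real.rpow_add hk0]; ring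
    rw [h2]
    refine h1.trans ?_
    simp only [hA]
    split_ifs <;> linarith
end

section
/- Let 0<s<1 and 0<β<1 with 2s < 1-β, set r := 2s/(1-β), and define u:ℝ→ℝ by u(x) = -1 for x<-1, u(x) = -|x|^r for -1≤x<0, u(x) = x^r for 0≤x≤1, and u(x) = 1 for x>1. Then there exists f ∈ C^β(ℝ) such that (-Δ)^s u(x) = f(u(x)) for all x ∈ [-1/2, 1/2]. Moreover, u ∈ C^{2s/(1-β)}(ℝ), and for every ε>0, ρ>0, u does not belong to C^{2s/(1-β)+ε}([-ρ,ρ]). -/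
open MeasureTheory Filter Set

/-- The odd power `sgn(x) |x|^a`. -/
noncomputable def oddPow (a x : ℝ) : ℝ := if 0 ≤ x then x ^ a else -((-x) ^ a)

lemma oddPow_neg (a : ℝ) (ha : 0 < a) (x : ℝ) : oddPow a (-x) = - oddPow a x := by
  unfold oddPow
  rcases lt_trichotomy x 0 with h | h | h
  · rw [if_pos (by linarith), if_neg (by linarith)]; ring
  · subst h; simp [Real.zero_rpow ha.ne']
  · rw [if_neg (by linarith), if_pos h.le]; simp

lemma rpow_sub_le (a : ℝ) (ha : 0 < a) (ha1 : a ≤ 1) {x y : ℝ} (hy : 0 ≤ y) (hxy : y ≤ x) :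
    x ^ a - y ^ a ≤ (x - y) ^ a := by
  have := Real.rpow_add_le_add_rpow (p := a) (a := x - y) (b := y) (by linarith) hy ha.le ha1
  rw [sub_add_cancel] at this
  linarith

lemma oddPow_holder_aux (a : ℝ) (ha : 0 < a) (ha1 : a ≤ 1) {x y : ℝ} (hxy : y ≤ x) :
    |oddPow a x - oddPow a y| ≤ 2 * (x - y) ^ a := by
  have h0 : 0 ≤ (x - y) ^ a := Real.rpow_nonneg (by linarith) _
  unfold oddPow
  by_cases hy : 0 ≤ y
  · rw [if_pos (by linarith), if_pos hy]
    have := rpow_sub_le a ha ha1 hy hxy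
    have := Real.rpow_le_rpow hy hxy ha.le
    rw [abs_of_nonneg (by linarith)]; linarith
  · push Not at hy
    by_cases hx : 0 ≤ x
    · rw [if_pos hx, if_neg (by linarith)]
      have h1 := Real.rpow_le_rpow hx (by linarith : x ≤ x - y) ha.le
      have h2 := Real.rpow_le_rpow (by linarith : 0 ≤ -y) (by linarith : -y ≤ x - y) ha.le
      have h3 := Real.rpow_nonneg hx a
      have h4 := Real.rpow_nonneg (by linarith : 0 ≤ -y) a
      rw [abs_of_nonneg (by linarith)]; linarith
    · rw [if_neg hx, if_neg (by linarith)]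
      push Not at hx
      have h5 := Real.rpow_le_rpow (by linarith : 0 ≤ -x) (by linarith : -x ≤ -y) ha.le
      have := rpow_sub_le a ha ha1 (by linarith : 0 ≤ -x) (by linarith : -x ≤ -y)
      have e : -y - -x = x - y := by ring
      rw [e] at this
      rw [abs_of_nonneg (by linarith)]; linarith

lemma oddPow_holder (a : ℝ) (ha : 0 < a) (ha1 : a ≤ 1) (x y : ℝ) :
    |oddPow a x - oddPow a y| ≤ 2 * |x - y| ^ a := by
  rcases le_total y x with h | h
  · rw [abs_of_nonneg (by linarith : 0 ≤ x - y)]; exact oddPow_holder_aux a ha ha1 h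
  · rw [abs_sub_comm, abs_sub_comm x y, abs_of_nonneg (by linarith : 0 ≤ y - x)]
    exact oddPow_holder_aux a ha ha1 h

lemma rpow_lip (a : ℝ) (ha : 1 ≤ a) {x y : ℝ} (hx : x ∈ Icc (0:ℝ) 1) (hy : y ∈ Icc (0:ℝ) 1) :
    |x ^ a - y ^ a| ≤ a * |x - y| := by
  have := Convex.norm_image_sub_le_of_norm_hasDerivWithin_le (f := fun z : ℝ => z ^ a)
    (f' := fun z => a * z ^ (a - 1)) (s := Icc (0:ℝ) 1) (C := a)
    (fun z _ => (Real.hasDerivAt_rpow_const (Or.inr ha)).hasDerivWithinAt)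
    (fun z hz => by
      have h1 := Real.rpow_le_one hz.1 hz.2 (by linarith : 0 ≤ a - 1)
      have h2 := Real.rpow_nonneg hz.1 (a - 1)
      rw [Real.norm_eq_abs, abs_of_nonneg (by positivity)]
      nlinarith) (convex_Icc _ _) hy hx
  simpa [Real.norm_eq_abs] using this

lemma oddPow_lip (a : ℝ) (ha : 1 ≤ a) {x y : ℝ} (hx : x ∈ Icc (-1:ℝ) 1) (hy : y ∈ Icc (-1:ℝ) 1) :
    |oddPow a x - oddPow a y| ≤ a * |x - y| := by
  have key : ∀ z : ℝ, 0 ≤ z → z ≤ 1 → 0 ≤ z ^ a ∧ z ^ a ≤ z := fun z h0 h1 =>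
    ⟨Real.rpow_nonneg h0 _, by
      simpa using Real.rpow_le_rpow_of_exponent_ge' h0 h1 zero_le_one ha⟩
  obtain ⟨hx1, hx2⟩ := hx
  obtain ⟨hy1, hy2⟩ := hy
  unfold oddPow
  by_cases h1 : 0 ≤ x <;> by_cases h2 : 0 ≤ y
  · rw [if_pos h1, if_pos h2]; exact rpow_lip a ha ⟨h1, hx2⟩ ⟨h2, hy2⟩
  · rw [if_pos h1, if_neg h2]
    push Not at h2
    have := key x h1 hx2
    have := key (-y) (by linarith) (by linarith)
    rw [abs_of_nonneg (by linarith), abs_of_nonneg (by linarith)]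
    nlinarith
  · rw [if_neg h1, if_pos h2]
    push Not at h1
    have := key y h2 hy2
    have := key (-x) (by linarith) (by linarith)
    rw [abs_of_nonpos (by linarith), abs_of_nonpos (by linarith)]
    nlinarith
  · rw [if_neg h1, if_neg h2]
    push Not at h1 h2
    have := rpow_lip a ha (x := -y) (y := -x) ⟨by linarith, by linarith⟩ ⟨by linarith, by linarith⟩
    convert this using 2
    · ring
    · ring_nf

/-- Criterion for membership in `C^a(ℝ)`, `0 < a < 1`. -/
lemma memCalpha_of_bound (a : ℝ) (ha : 0 < a) (ha1 : a < 1) (f : ℝ → ℝ) (B C : ℝ) (hC : 0 ≤ C)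
    (hB : ∀ x, |f x| ≤ B) (hf : ∀ x y, |f x - f y| ≤ C * |x - y| ^ a) :
    MemCalpha a Set.univ f := by
  have hfl : ⌊a⌋₊ = 0 := Nat.floor_eq_zero.2 ha1
  have hH : HolderOnWith ⟨C, hC⟩ a.toNNReal f univ := by
    intro x _ y _
    rw [edist_dist, edist_dist, Real.dist_eq, Real.dist_eq, Real.coe_toNNReal _ ha.le,
      ENNReal.ofReal_rpow_of_nonneg (abs_nonneg _) ha.le]
    change _ ≤ ((NNReal.mk C hC : NNReal) : ENNReal) * _
    rw [← ENNReal.ofReal_eq_coe_nnreal hC, ← ENNReal.ofReal_mul hC]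
    exact ENNReal.ofReal_le_ofReal (hf x y)
  unfold MemCalpha
  rw [hfl]
  refine ⟨?_, ?_, ⟨C, hC⟩, ?_⟩
  · rw [Nat.cast_zero, contDiffOn_zero]
    exact hH.continuousOn (by simpa using ha)
  · intro k hk
    obtain rfl : k = 0 := by omega
    exact ⟨B, fun x _ => by simpa using hB x⟩
  · rw [iteratedDerivWithin_zero]; simpa using hH

/-- Clamping to `[-T,T]`. -/
noncomputable def clampR (T x : ℝ) : ℝ := max (-T) (min T x)

lemma clampR_mem {T : ℝ} (hT : 0 ≤ T) (x : ℝ) : clampR T x ∈ Icc (-T) T :=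
  ⟨le_max_left _ _, max_le (by linarith) (min_le_left _ _)⟩

lemma clampR_eq {T x : ℝ} (h : x ∈ Icc (-T) T) : clampR T x = x := by
  unfold clampR; rw [min_eq_right h.2, max_eq_right h.1]

lemma clampR_lip (T x y : ℝ) : |clampR T x - clampR T y| ≤ |x - y| := by
  unfold clampR
  refine (abs_max_sub_max_le_max _ _ _ _).trans ?_
  rw [sub_self, abs_zero]
  refine max_le (abs_nonneg _) ((abs_min_sub_min_le_max _ _ _ _).trans ?_)
  rw [sub_self, abs_zero]
  exact max_le (abs_nonneg _) le_rfl

lemma clampR_holder {T b : ℝ} (hT : 0 ≤ T) (hT1 : T ≤ 1) (hb : 0 < b) (hb1 : b ≤ 1) (x y : ℝ) :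
    |clampR T x - clampR T y| ≤ 2 * |x - y| ^ b := by
  have h0 := abs_nonneg (x - y)
  by_cases h : |x - y| ≤ 1
  · have := Real.rpow_le_rpow_of_exponent_ge' h0 h hb.le hb1
    rw [Real.rpow_one] at this
    have := clampR_lip T x y
    linarith
  · push Not at h
    have := Real.one_le_rpow h.le hb.le
    have h1 := clampR_mem hT x
    have h2 := clampR_mem hT y
    have : |clampR T x - clampR T y| ≤ 2 := by
      rw [abs_le]; constructor <;> linarith [h1.1, h1.2, h2.1, h2.2]
    linarith

lemma fracLap_of_integrable (s : ℝ) (u : ℝ → ℝ) (x : ℝ)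
    (h : Integrable (fun y : ℝ => (u x - u y) / |x - y| ^ (1 + 2 * s))) :
    HasFracLapAt s u x (fracLapCoef s * ∫ y, (u x - u y) / |x - y| ^ (1 + 2 * s)) := by
  refine ⟨fun ε _ => h.integrableOn, ?_⟩
  refine Tendsto.const_mul _ ?_
  refine AECover.integral_tendsto_of_countably_generated ⟨?_, ?_⟩ h
  · have : ∀ᵐ y : ℝ, y ≠ x := by simp [ae_iff]
    filter_upwards [this] with y hy
    have : 0 < |y - x| := abs_pos.2 (sub_ne_zero.2 hy)
    exact nhdsWithin_le_nhds (Iio_mem_nhds this)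
  · intro ε
    exact measurableSet_lt measurable_const (by fun_prop)

/-- Dominating function. -/
noncomputable def domF (r p t : ℝ) : ℝ := if t ≤ 1 then t ^ (r - p) else t ^ (-p)

lemma integrable_domF (r p : ℝ) (h1 : -1 < r - p) (h2 : 1 < p) :
    Integrable (fun t : ℝ => domF r p |t|) := by
  have hA : IntegrableOn (fun t : ℝ => domF r p |t|) (Ioi 0) := by
    rw [← Ioc_union_Ioi_eq_Ioi (zero_le_one' ℝ)]
    refine IntegrableOn.union ?_ ?_
    · have := (intervalIntegrable_iff_integrableOn_Ioc_of_le (zero_le_one' ℝ)).1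
        (intervalIntegral.intervalIntegrable_rpow' (a := 0) (b := 1) h1)
      refine this.congr_fun ?_ measurableSet_Ioc
      intro t ht
      simp only [domF]
      rw [abs_of_pos ht.1, if_pos ht.2]
    · have := integrableOn_Ioi_rpow_of_lt (by linarith : -p < -1) one_pos
      refine this.congr_fun ?_ measurableSet_Ioi
      intro t ht
      have ht : 1 < t := ht
      simp only [domF]
      rw [abs_of_pos (by linarith), if_neg (by linarith)]
  have hB : IntegrableOn (fun t : ℝ => domF r p |t|) (Iio 0) := by
    have := hA.comp_neg
    simpa using this
  rw [← integrableOn_univ, ← Iio_union_Ici (a := (0:ℝ)), integrableOn_union]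
  exact ⟨hB, by rwa [integrableOn_Ici_iff_integrableOn_Ioi]⟩

lemma integrable_kernel (r p : ℝ) (h1 : -1 < r - p) (h2 : 1 < p) (u : ℝ → ℝ)
    (hc : Continuous u)
    (hb : ∀ x, |u x| ≤ 1) (hH : ∀ x y, |u x - u y| ≤ 2 * |x - y| ^ r) (x : ℝ) :
    Integrable (fun y : ℝ => (u x - u y) / |x - y| ^ p) := by
  have hd := ((integrable_domF r p h1 h2).comp_sub_left x).const_mul 2
  have hm : AEStronglyMeasurable (fun y : ℝ => (u x - u y) / |x - y| ^ p) volume := by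
    have := hc.measurable
    apply Measurable.aestronglyMeasurable
    fun_prop
  refine hd.mono' hm ?_
  have : ∀ᵐ y : ℝ, y ≠ x := by simp [ae_iff]
  filter_upwards [this] with y hy
  have hpos : 0 < |x - y| := abs_pos.2 (sub_ne_zero.2 hy.symm)
  have hp : 0 < |x - y| ^ p := Real.rpow_pos_of_pos hpos _
  rw [norm_div, Real.norm_eq_abs, Real.norm_eq_abs, abs_of_pos hp, div_le_iff₀ hp]
  unfold domF
  split_ifs with h
  · rw [mul_assoc, ← Real.rpow_add hpos, sub_add_cancel]
    exact hH x y
  · rw [mul_assoc, ← Real.rpow_add hpos]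
    simp only [neg_add_cancel, Real.rpow_zero]
    have := abs_sub (u x) (u y)
    linarith [hb x, hb y]

/-- Kernel of the smooth remainder. -/
noncomputable def kerK (r p x y : ℝ) : ℝ := (y ^ r - 1) * ((y - x) ^ (-p) - (y + x) ^ (-p))

/-- The smooth remainder. -/
noncomputable def remK (r p x : ℝ) : ℝ := ∫ y in Ioi (1:ℝ), kerK r p x y

lemma negpow_lip (p : ℝ) (hp : 0 < p) {m a b : ℝ} (hm : 0 < m) (ha : m ≤ a) (hb : m ≤ b) :
    |a ^ (-p) - b ^ (-p)| ≤ p * m ^ (-p - 1) * |a - b| := by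
  have := Convex.norm_image_sub_le_of_norm_hasDerivWithin_le (f := fun z : ℝ => z ^ (-p))
    (f' := fun z => -p * z ^ (-p - 1)) (s := Ici m) (C := p * m ^ (-p - 1))
    (fun z hz => (Real.hasDerivAt_rpow_const
      (Or.inl (lt_of_lt_of_le hm hz).ne')).hasDerivWithinAt)
    (fun z hz => by
      have hz : m ≤ z := hz
      have h1 := Real.rpow_le_rpow_of_nonpos hm hz (by linarith : -p - 1 ≤ 0)
      have h2 := Real.rpow_nonneg (by linarith : 0 ≤ z) (-p - 1)
      rw [Real.norm_eq_abs, abs_mul, abs_neg, abs_of_pos hp, abs_of_nonneg h2]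
      gcongr) (convex_Ici _) hb ha
  simpa [Real.norm_eq_abs] using this

lemma kerK_lip (r p : ℝ) (hr : 0 < r) (hp : 0 < p) {x x' y : ℝ} (hx : |x| ≤ 1 / 2)
    (hx' : |x'| ≤ 1 / 2) (hy : 1 < y) :
    |kerK r p x y - kerK r p x' y| ≤ (2 * p * 2 ^ (p + 1)) * y ^ (r - p - 1) * |x - x'| := by
  rw [abs_le] at hx hx'
  have h1 := negpow_lip p hp (m := y / 2) (a := y - x) (b := y - x') (by linarith)
    (by linarith) (by linarith)
  have h2 := negpow_lip p hp (m := y / 2) (a := y + x) (b := y + x') (by linarith)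
    (by linarith) (by linarith)
  have e1 : |y - x - (y - x')| = |x - x'| := by rw [abs_sub_comm x x']; ring_nf
  have e2 : |y + x - (y + x')| = |x - x'| := by ring_nf
  rw [e1] at h1
  rw [e2] at h2
  have hy1 : 1 ≤ y ^ r := Real.one_le_rpow hy.le hr.le
  have e3 : kerK r p x y - kerK r p x' y = (y ^ r - 1) *
      (((y - x) ^ (-p) - (y - x') ^ (-p)) - ((y + x) ^ (-p) - (y + x') ^ (-p))) := by
    unfold kerK; ring
  have h3 := abs_sub ((y - x) ^ (-p) - (y - x') ^ (-p)) ((y + x) ^ (-p) - (y + x') ^ (-p))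
  have e4 : (y / 2) ^ (-p - 1) = y ^ (-p - 1) * 2 ^ (p + 1) := by
    rw [Real.div_rpow (by linarith) (by norm_num), div_eq_mul_inv, ← Real.rpow_neg (by norm_num)]
    congr 2; ring
  have e5 : y ^ (r - p - 1) = y ^ r * y ^ (-p - 1) := by
    rw [← Real.rpow_add (by linarith)]; congr 1; ring
  rw [e3, abs_mul, abs_of_nonneg (by linarith : 0 ≤ y ^ r - 1), e5]
  rw [e4] at h1 h2
  calc _ ≤ y ^ r * (p * (y ^ (-p - 1) * 2 ^ (p + 1)) * |x - x'| +
        p * (y ^ (-p - 1) * 2 ^ (p + 1)) * |x - x'|) := by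
        apply mul_le_mul (by linarith) (by linarith) (abs_nonneg _) (by linarith)
    _ = _ := by ring

lemma kerK_zero (r p y : ℝ) : kerK r p 0 y = 0 := by simp [kerK]

lemma kerK_neg (r p x y : ℝ) : kerK r p (-x) y = - kerK r p x y := by
  unfold kerK
  rw [sub_neg_eq_add, ← sub_eq_add_neg]; ring

lemma remK_neg (r p x : ℝ) : remK r p (-x) = - remK r p x := by
  unfold remK
  simp_rw [kerK_neg]
  exact integral_neg _

lemma kerK_integrable (r p : ℝ) (hr : 0 < r) (hp : 0 < p) (hrp : r < p) {x : ℝ}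
    (hx : |x| ≤ 1 / 2) : IntegrableOn (kerK r p x) (Ioi 1) := by
  have h := ((integrableOn_Ioi_rpow_of_lt (by linarith : r - p - 1 < -1) one_pos).const_mul
    (2 * p * 2 ^ (p + 1))).mul_const |x|
  refine Integrable.mono' h ?_ ?_
  · apply Measurable.aestronglyMeasurable
    unfold kerK
    fun_prop
  · filter_upwards [ae_restrict_mem measurableSet_Ioi] with y hy
    have := kerK_lip r p hr hp hx (x' := 0) (by norm_num) hy
    rw [kerK_zero, sub_zero, sub_zero] at this
    exact this

lemma remK_lip (r p : ℝ) (hr : 0 < r) (hp : 0 < p) (hrp : r < p) :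
    ∃ C : ℝ, 0 ≤ C ∧ ∀ x x' : ℝ, |x| ≤ 1 / 2 → |x'| ≤ 1 / 2 →
      |remK r p x - remK r p x'| ≤ C * |x - x'| := by
  refine ⟨∫ y in Ioi (1:ℝ), (2 * p * 2 ^ (p + 1)) * y ^ (r - p - 1), ?_, ?_⟩
  · refine setIntegral_nonneg measurableSet_Ioi fun y hy => ?_
    have hy : 1 < y := hy
    have := Real.rpow_nonneg (by linarith : 0 ≤ y) (r - p - 1)
    positivity
  · intro x x' hx hx'
    unfold remK
    rw [← integral_sub (kerK_integrable r p hr hp hrp hx) (kerK_integrable r p hr hp hrp hx'),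
      ← integral_mul_const]
    have h := ((integrableOn_Ioi_rpow_of_lt (by linarith : r - p - 1 < -1) one_pos).const_mul
      (2 * p * 2 ^ (p + 1))).mul_const |x - x'|
    rw [← Real.norm_eq_abs]
    refine norm_integral_le_of_norm_le h ?_
    filter_upwards [ae_restrict_mem measurableSet_Ioi] with y hy
    exact kerK_lip r p hr hp hx hx' hy

noncomputable def profH (r p t : ℝ) : ℝ :=
  (1 - t ^ r) / |1 - t| ^ p + (1 + t ^ r) / (1 + t) ^ p

lemma clampR_neg (y : ℝ) : clampR 1 (-y) = - clampR 1 y := by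
  unfold clampR
  rcases le_total y 1 with h1 | h1 <;> rcases le_total (-1) y with h2 | h2 <;> grind

lemma u_odd (r : ℝ) (hr : 0 < r) (u : ℝ → ℝ) (hu : ∀ x, u x = oddPow r (clampR 1 x)) (y : ℝ) :
    u (-y) = - u y := by
  rw [hu, hu, ← oddPow_neg r hr, clampR_neg]

lemma integral_kernel_pos (r p : ℝ) (hr : 0 < r) (hp : 0 < p) (hrp : r < p) (u : ℝ → ℝ)
    (hu : ∀ x, u x = oddPow r (clampR 1 x)) {x : ℝ} (hx0 : 0 < x) (hx1 : x ≤ 1 / 2)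
    (hi : Integrable (fun y : ℝ => (u x - u y) / |x - y| ^ p)) :
    ∫ y, (u x - u y) / |x - y| ^ p = (∫ t in Ioi (0:ℝ), profH r p t) * x ^ (r + 1 - p)
      + remK r p x := by
  have huodd := u_odd r hr u hu
  have hulow : ∀ y, 0 < y → y ≤ 1 → u y = y ^ r := by
    intro y h0 h1
    rw [hu, clampR_eq ⟨by linarith, h1⟩, oddPow, if_pos h0.le]
  have huhigh : ∀ y, 1 < y → u y = 1 := by
    intro y h1
    rw [hu]
    unfold clampR oddPow
    rw [min_eq_left h1.le, max_eq_right (by norm_num), if_pos zero_le_one, Real.one_rpow]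
  set F : ℝ → ℝ := fun y => (u x - u y) / |x - y| ^ p with hF
  have hKi : IntegrableOn ((Ioi (1:ℝ)).indicator (kerK r p x)) (Ioi 0) := by
    apply Integrable.integrableOn
    rw [integrable_indicator_iff measurableSet_Ioi]
    exact kerK_integrable r p hr hp hrp (by rw [abs_le]; constructor <;> linarith)
  have hsum : IntegrableOn (fun y => F y + F (-y)) (Ioi 0) :=
    (hi.add hi.comp_neg).integrableOn
  have e1 : ∫ y, F y = ∫ y in Ioi (0:ℝ), (F y + F (-y)) := by
    rw [integral_add hi.integrableOn hi.comp_neg.integrableOn, integral_comp_neg_Ioi, neg_zero,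
      add_comm, intervalIntegral.integral_Iic_add_Ioi hi.integrableOn hi.integrableOn]
  have e2 : ∫ y in Ioi (0:ℝ), (F y + F (-y)) = (∫ y in Ioi (0:ℝ),
      (F y + F (-y) - (Ioi (1:ℝ)).indicator (kerK r p x) y)) + remK r p x := by
    rw [integral_sub hsum hKi, setIntegral_indicator measurableSet_Ioi,
      Ioi_inter_Ioi, remK]
    simp
  have e3 : ∫ y in Ioi (0:ℝ), (F y + F (-y) - (Ioi (1:ℝ)).indicator (kerK r p x) y)
      = ∫ y in Ioi (0:ℝ), x ^ (r - p) * profH r p (x⁻¹ * y) := by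
    refine setIntegral_congr_fun measurableSet_Ioi fun y hy => ?_
    have hy : 0 < y := hy
    have hH : x ^ (r - p) * profH r p (x⁻¹ * y)
        = (x ^ r - y ^ r) / |x - y| ^ p + (x ^ r + y ^ r) / (x + y) ^ p := by
      have hxp := Real.rpow_pos_of_pos hx0 p
      have hxr := Real.rpow_pos_of_pos hx0 r
      have a1 : |1 - x⁻¹ * y| ^ p = |x - y| ^ p / x ^ p := by
        rw [← Real.div_rpow (abs_nonneg _) hx0.le]
        congr 1
        rw [← abs_of_pos hx0, ← abs_div, abs_of_pos hx0]
        congr 1; field_simp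
      have a2 : (1 + x⁻¹ * y) ^ p = (x + y) ^ p / x ^ p := by
        rw [← Real.div_rpow (by linarith) hx0.le]
        congr 1
        field_simp
      have a3 : (x⁻¹ * y) ^ r = y ^ r / x ^ r := by
        rw [← Real.div_rpow hy.le hx0.le]
        congr 1
        field_simp
      unfold profH
      rw [a1, a2, a3, Real.rpow_sub hx0, div_div_eq_mul_div, div_div_eq_mul_div, mul_add]
      congr 1
      · rw [← mul_div_assoc]; congr 1; field_simp
      · rw [← mul_div_assoc]; congr 1; field_simp
    rw [hH]
    simp only [hF, huodd, sub_neg_eq_add]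
    rw [hulow x hx0 (by linarith), abs_of_pos (by linarith : 0 < x + y)]
    by_cases h : y ≤ 1
    · rw [indicator_of_notMem (by simpa using h), hulow y hy h]; ring
    · push Not at h
      rw [indicator_of_mem (by simpa using h), huhigh y h, kerK, abs_of_neg (by linarith),
        Real.rpow_neg (by linarith), Real.rpow_neg (by linarith)]
      rw [neg_sub, add_comm y x]
      ring
  rw [e1, e2, e3, integral_const_mul, integral_comp_mul_left_Ioi _ _ (inv_pos.2 hx0), mul_zero,
    inv_inv, smul_eq_mul, ← mul_assoc]
  have : r + 1 - p = (r - p) + 1 := by ring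
  rw [this, Real.rpow_add hx0, Real.rpow_one]
  ring

lemma integral_kernel_odd (p : ℝ) (u : ℝ → ℝ) (huodd : ∀ y, u (-y) = - u y) (x : ℝ) :
    ∫ y, (u (-x) - u y) / |(-x) - y| ^ p = - ∫ y, (u x - u y) / |x - y| ^ p := by
  rw [← integral_neg_eq_self, ← integral_neg]
  congr 1
  funext y
  rw [huodd, huodd, sub_neg_eq_add, sub_neg_eq_add, ← abs_neg (-x + y)]
  rw [neg_add, neg_neg, ← sub_eq_add_neg]
  ring

lemma oddPow_abs_le (a : ℝ) (ha : 0 < a) {x T : ℝ} (hx : |x| ≤ T) : |oddPow a x| ≤ T ^ a := by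
  have h : |oddPow a x| = |x| ^ a := by
    unfold oddPow
    split_ifs with h
    · rw [abs_of_nonneg (Real.rpow_nonneg h _), abs_of_nonneg h]
    · push Not at h
      rw [abs_neg, abs_of_nonneg (Real.rpow_nonneg (by linarith) _), abs_of_neg h]
  rw [h]
  exact Real.rpow_le_rpow (abs_nonneg _) hx ha.le

lemma oddPow_inv (r : ℝ) (hr : 0 < r) (x : ℝ) : oddPow (1 / r) (oddPow r x) = x := by
  have key : ∀ z : ℝ, 0 ≤ z → oddPow (1 / r) (oddPow r z) = z := by
    intro z hz
    rw [oddPow, oddPow, if_pos hz, if_pos (Real.rpow_nonneg hz _), ← Real.rpow_mul hz,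
      mul_one_div_cancel hr.ne', Real.rpow_one]
  rcases le_total 0 x with h | h
  · exact key x h
  · have := key (-x) (by linarith)
    rw [oddPow_neg r hr, oddPow_neg _ (by positivity)] at this
    linarith

lemma not_pow_le (r a C : ℝ) (h : r < a) :
    ¬ ∀ᶠ x in nhdsWithin (0:ℝ) (Ioi 0), x ^ r ≤ C * x ^ a := by
  intro H
  have h1 : Tendsto (fun x : ℝ => C * x ^ (a - r)) (nhdsWithin (0:ℝ) (Ioi 0)) (nhds 0) := by
    have := (Real.continuousAt_rpow_const 0 (a - r) (Or.inr (by linarith))).tendsto.const_mul C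
    rw [Real.zero_rpow (by linarith), mul_zero] at this
    exact this.mono_left nhdsWithin_le_nhds
  have h2 := h1.eventually (gt_mem_nhds one_pos)
  obtain ⟨x, hx1, hx2, hx3⟩ := (H.and (h2.and self_mem_nhdsWithin)).exists
  have hx : 0 < x := hx3
  have e : x ^ a = x ^ (a - r) * x ^ r := by rw [← Real.rpow_add hx]; congr 1; ring
  have := Real.rpow_pos_of_pos hx r
  rw [e] at hx1
  nlinarith

theorem stmt2 (s β r : ℝ) (hs0 : 0 < s) (hs1 : s < 1) (hβ0 : 0 < β) (hβ1 : β < 1)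
    (h2s : 2 * s < 1 - β) (hr : r = 2 * s / (1 - β))
    (u : ℝ → ℝ)
    (hu1 : ∀ x : ℝ, x < -1 → u x = -1)
    (hu2 : ∀ x : ℝ, -1 ≤ x → x < 0 → u x = -(|x| ^ r))
    (hu3 : ∀ x : ℝ, 0 ≤ x → x ≤ 1 → u x = x ^ r)
    (hu4 : ∀ x : ℝ, 1 < x → u x = 1) :
    (∃ f : ℝ → ℝ, MemCalpha β Set.univ f ∧
      ∀ x ∈ Set.Icc (-(1 / 2) : ℝ) (1 / 2), HasFracLapAt s u x (f (u x))) ∧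
    MemCalpha (2 * s / (1 - β)) Set.univ u ∧
    (∀ ε ρ : ℝ, 0 < ε → 0 < ρ →
      ¬ MemCalpha (2 * s / (1 - β) + ε) (Set.Icc (-ρ) ρ) u) := by
  have h1β : 0 < 1 - β := by linarith
  have hr0 : 0 < r := by rw [hr]; positivity
  have hr1 : r < 1 := by rw [hr, div_lt_one h1β]; exact h2s
  have hrs : r * (1 - β) = 2 * s := by rw [hr]; field_simp
  have hrb : 0 < r * β := by positivity
  have hu : ∀ x, u x = oddPow r (clampR 1 x) := by
    intro x
    unfold clampR
    rcases lt_or_ge x (-1) with h | h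
    · rw [hu1 x h, min_eq_right (by linarith), max_eq_left h.le, oddPow_neg r hr0, oddPow,
        if_pos zero_le_one, Real.one_rpow]
    · rcases le_or_gt x 1 with h' | h'
      · rw [min_eq_right h', max_eq_right h, oddPow]
        split_ifs with h0
        · exact hu3 x h0 h'
        · push Not at h0
          rw [hu2 x h h0, abs_of_neg h0]
      · rw [hu4 x h', min_eq_left h'.le, max_eq_right (by norm_num), oddPow, if_pos zero_le_one,
          Real.one_rpow]
  have huodd := u_odd r hr0 u hu
  have hu0 : u 0 = 0 := by rw [hu3 0 le_rfl zero_le_one, Real.zero_rpow hr0.ne']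
  have huH : ∀ x y, |u x - u y| ≤ 2 * |x - y| ^ r := by
    intro x y
    rw [hu, hu]
    refine (oddPow_holder r hr0 hr1.le _ _).trans ?_
    have := Real.rpow_le_rpow (abs_nonneg _) (clampR_lip 1 x y) hr0.le
    linarith
  have hub : ∀ x, |u x| ≤ 1 := by
    intro x
    rw [hu]
    have h := clampR_mem zero_le_one x
    exact oddPow_abs_le r hr0 (abs_le.2 h) |>.trans (by simp)
  have hmem : MemCalpha r Set.univ u := memCalpha_of_bound r hr0 hr1 u 1 2 (by norm_num) hub huH
  rw [← hr]
  refine ⟨?_, hmem, ?_⟩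
  · have hc : Continuous u := by
      have h := hmem.1
      exact (contDiffOn_univ.1 h).continuous
    have hi := integrable_kernel r (1 + 2 * s) (by nlinarith) (by linarith) u hc hub huH
    obtain ⟨C, hC0, hC⟩ := remK_lip r (1 + 2 * s) hr0 (by linarith) (by linarith)
    set A := ∫ t in Ioi (0:ℝ), profH r (1 + 2 * s) t with hA
    have hK0 : remK r (1 + 2 * s) 0 = 0 := by
      have := remK_neg r (1 + 2 * s) 0
      rw [neg_zero] at this; linarith
    have hpos : ∀ x, 0 < x → x ≤ 1 / 2 → ∫ y, (u x - u y) / |x - y| ^ (1 + 2 * s)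
        = A * oddPow β (u x) + remK r (1 + 2 * s) x := by
      intro x h0 h1
      rw [integral_kernel_pos r (1 + 2 * s) hr0 (by linarith) (by linarith) u hu h0 h1 (hi x),
        hu3 x h0.le (by linarith), oddPow, if_pos (Real.rpow_nonneg h0.le _),
        ← Real.rpow_mul h0.le]
      have : r + 1 - (1 + 2 * s) = r * β := by linarith
      rw [this]
    have hall : ∀ x, |x| ≤ 1 / 2 → ∫ y, (u x - u y) / |x - y| ^ (1 + 2 * s)
        = A * oddPow β (u x) + remK r (1 + 2 * s) x := by
      intro x hx
      rw [abs_le] at hx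
      rcases lt_trichotomy x 0 with h | h | h
      · obtain ⟨z, rfl⟩ : ∃ z, x = -z := ⟨-x, by ring⟩
        rw [integral_kernel_odd _ u huodd, hpos z (by linarith) (by linarith), huodd,
          oddPow_neg β hβ0, remK_neg]
        ring
      · subst h
        have := integral_kernel_odd (1 + 2 * s) u huodd 0
        rw [neg_zero, hu0] at this
        rw [hK0, hu0, oddPow, if_pos le_rfl, Real.zero_rpow hβ0.ne']
        linarith
      · exact hpos x h hx.2
    set T : ℝ := (1 / 2 : ℝ) ^ r with hT
    have hT0 : 0 ≤ T := Real.rpow_nonneg (by norm_num) _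
    have hT1 : T ≤ 1 := Real.rpow_le_one (by norm_num) (by norm_num) hr0.le
    have hTr : T ^ (1 / r) = 1 / 2 := by
      rw [hT, ← Real.rpow_mul (by norm_num), mul_one_div_cancel hr0.ne', Real.rpow_one]
    have hri : 1 ≤ 1 / r := by rw [le_div_iff₀ hr0]; linarith
    have hW : ∀ t, |oddPow (1 / r) (clampR T t)| ≤ 1 / 2 := by
      intro t
      have := oddPow_abs_le (1 / r) (by positivity) (abs_le.2 (clampR_mem hT0 t))
      rwa [hTr] at this
    refine ⟨fun t => fracLapCoef s * (A * oddPow β (clampR T t)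
      + remK r (1 + 2 * s) (oddPow (1 / r) (clampR T t))), ?_, ?_⟩
    · refine memCalpha_of_bound β hβ0 hβ1 _ (|fracLapCoef s| * (|A| * 1 + C * (1 / 2)))
        (|fracLapCoef s| * (|A| * 2 + C * (1 / r * 2))) (by positivity) ?_ ?_
      · intro t
        rw [abs_mul]
        gcongr
        refine (abs_add_le _ _).trans ?_
        rw [abs_mul]
        gcongr
        · refine (oddPow_abs_le β hβ0 (abs_le.2 (clampR_mem hT0 t))).trans ?_
          exact Real.rpow_le_one hT0 hT1 hβ0.le
        · have := hC _ 0 (hW t) (by norm_num)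
          rw [hK0, sub_zero, sub_zero] at this
          refine this.trans ?_
          gcongr
          exact hW t
      · intro x y
        rw [← mul_sub, abs_mul, mul_assoc]
        gcongr
        have e : A * oddPow β (clampR T x) + remK r (1 + 2 * s) (oddPow (1 / r) (clampR T x))
          - (A * oddPow β (clampR T y) + remK r (1 + 2 * s) (oddPow (1 / r) (clampR T y)))
          = A * (oddPow β (clampR T x) - oddPow β (clampR T y))
            + (remK r (1 + 2 * s) (oddPow (1 / r) (clampR T x))
              - remK r (1 + 2 * s) (oddPow (1 / r) (clampR T y))) := by ring
        rw [e, add_mul]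
        refine (abs_add_le _ _).trans ?_
        rw [abs_mul, mul_assoc, mul_assoc, mul_assoc]
        have hsub : ∀ t, clampR T t ∈ Icc (-1:ℝ) 1 := fun t =>
          ⟨by linarith [(clampR_mem hT0 t).1], by linarith [(clampR_mem hT0 t).2]⟩
        refine add_le_add ?_ ?_
        · gcongr
          refine (oddPow_holder β hβ0 hβ1.le _ _).trans ?_
          have := Real.rpow_le_rpow (abs_nonneg _) (clampR_lip T x y) hβ0.le
          linarith
        · refine (hC _ _ (hW x) (hW y)).trans ?_
          gcongr
          refine (oddPow_lip (1 / r) hri (hsub x) (hsub y)).trans ?_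
          gcongr
          exact clampR_holder hT0 hT1 hβ0 hβ1.le x y
    · intro x hx
      have hx' : |x| ≤ 1 / 2 := abs_le.2 hx
      have h := fracLap_of_integrable s u x (hi x)
      rw [hall x hx'] at h
      have hux : u x = oddPow r x := by
        rw [hu, clampR_eq ⟨by linarith [hx.1], by linarith [hx.2]⟩]
      have huT : |u x| ≤ T := by rw [hux]; exact oddPow_abs_le r hr0 hx'
      have hinv : oddPow (1 / r) (u x) = x := by rw [hux]; exact oddPow_inv r hr0 x
      simp only
      rw [clampR_eq (abs_le.1 huT), hinv]
      exact h
  · intro ε ρ hε hρ hM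
    obtain ⟨hM1, -, C, hM3⟩ := hM
    have hsmall : ∀ᶠ x in nhdsWithin (0:ℝ) (Ioi 0), 0 < x ∧ x ≤ 1 ∧ x ≤ ρ := by
      filter_upwards [self_mem_nhdsWithin, nhdsWithin_le_nhds (Iio_mem_nhds one_pos),
        nhdsWithin_le_nhds (Iio_mem_nhds hρ)] with x h1 h2 h3
      exact ⟨h1, le_of_lt h2, le_of_lt h3⟩
    by_cases hfl : ⌊r + ε⌋₊ = 0
    · rw [hfl, iteratedDerivWithin_zero, Nat.cast_zero, sub_zero] at hM3
      refine not_pow_le r (r + ε) C (by linarith) ?_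
      filter_upwards [hsmall] with x hx
      have h := hM3 x ⟨by linarith, hx.2.2⟩ 0 ⟨by linarith, hρ.le⟩
      rw [edist_dist, edist_dist, Real.dist_eq, Real.dist_eq, Real.coe_toNNReal _ (by linarith),
        ENNReal.ofReal_rpow_of_nonneg (abs_nonneg _) (by linarith), hu0, sub_zero, sub_zero,
        hu3 x hx.1.le hx.2.1, abs_of_pos hx.1, abs_of_pos (Real.rpow_pos_of_pos hx.1 _),
        ← ENNReal.ofReal_coe_nnreal, ← ENNReal.ofReal_mul (by positivity)] at h
      have hnn : 0 ≤ (C : ℝ) * x ^ (r + ε) :=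
        mul_nonneg C.2 (Real.rpow_nonneg hx.1.le _)
      exact (ENNReal.ofReal_le_ofReal_iff hnn).1 h
    · have hd : DifferentiableWithinAt ℝ u (Icc (-ρ) ρ) 0 :=
        hM1.differentiableOn (by exact_mod_cast hfl) 0 ⟨by linarith, hρ.le⟩
      obtain ⟨c, hc⟩ := hd.isBigO_sub.bound
      refine not_pow_le r 1 c hr1 ?_
      rw [nhdsWithin_eq_nhds.2 (Icc_mem_nhds (by linarith) hρ)] at hc
      filter_upwards [hsmall, nhdsWithin_le_nhds hc] with x hx h
      rw [hu0, sub_zero, sub_zero, Real.norm_eq_abs, Real.norm_eq_abs, hu3 x hx.1.le hx.2.1,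
        abs_of_pos hx.1, abs_of_pos (Real.rpow_pos_of_pos hx.1 _)] at h
      rwa [Real.rpow_one]
end
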